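/- arXiv:math/0010276 — 5 statements merged into one kernel-verified Lean document; each statement's English description precedes it below -/
import Mathlib

section
/- Let E be a vector bundle on P^n (n ≥ 2) all of whose intermediate cohomology modules H^i_*(P^n, E) vanish for 1 ≤ i ≤ n−1. Then E is a direct sum of line bundles (Horrocks' theorem). -/
section LocalHorrocks

open Polynomial

variable {A : Type*} [CommRing A] {r : ℕ}

/-- Vectors of polynomials whose `i`-th entry has degree less than `d i`. -/
noncomputable def degreeBox (A : Type*) [CommRing A] {r : ℕ} (d : Fin r → ℕ) :
    Submodule A (Fin r → A[X]) :=
  Submodule.pi Set.univ fun i => degreeLT A (d i)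

lemma mem_degreeBox {d : Fin r → ℕ} {v : Fin r → A[X]} :
    v ∈ degreeBox A d ↔ ∀ i j, d i ≤ j → (v i).coeff j = 0 := by
  simp [degreeBox, Submodule.mem_pi, mem_degreeLT, degree_lt_iff_coeff_zero]

lemma fg_degreeBox (d : Fin r → ℕ) : (degreeBox A d).FG := by
  have h : degreeBox A d =
      ⨆ i, (degreeLT A (d i)).map (LinearMap.single A (fun _ : Fin r => A[X]) i) := by
    apply le_antisymm
    · intro v hv
      have : v = ∑ i, LinearMap.single A (fun _ : Fin r => A[X]) i (v i) := by
        simp [Finset.univ_sum_single]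
      rw [this]
      exact Submodule.sum_mem _ fun i _ => Submodule.mem_iSup_of_mem i
        (Submodule.mem_map_of_mem (hv i trivial))
    · refine iSup_le fun i => ?_
      rintro _ ⟨p, hp, rfl⟩ l -
      by_cases h : l = i
      · subst h; simpa using hp
      · simp [h]
  rw [h]
  refine Submodule.fg_iSup _ fun i => Submodule.FG.map _ ?_
  classical exact ⟨_, (degreeLT_eq_span_X_pow (R := A) (n := d i)).symm⟩

lemma mem_ideal_smul_top_pi_iff {ι : Type*} [Finite ι] {I : Ideal A} {v : ι → A[X]} :
    v ∈ (I • ⊤ : Submodule A (ι → A[X])) ↔ ∀ i j, (v i).coeff j ∈ I := by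
  classical
  have := Fintype.ofFinite ι
  constructor
  · intro h
    induction h using Submodule.smul_induction_on' with
    | smul a ha w _ => intro i j; simpa using I.mul_mem_right _ ha
    | add x _ y _ hx hy => intro i j; simpa using I.add_mem (hx i j) (hy i j)
  · intro h
    have : v = ∑ i, ∑ j ∈ (v i).support,
        (v i).coeff j • (Pi.single i (X ^ j) : ι → A[X]) := by
      conv_lhs => rw [← Finset.univ_sum_single v]
      refine Finset.sum_congr rfl fun i _ => ?_
      conv_lhs => rw [(v i).as_sum_support]
      rw [← LinearMap.single_apply (R := A), map_sum]
      refine Finset.sum_congr rfl fun j _ => ?_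
      rw [LinearMap.single_apply, ← C_mul_X_pow_eq_monomial, ← Pi.single_smul, smul_eq_C_mul]
    rw [this]
    exact Submodule.sum_mem _ fun i _ => Submodule.sum_mem _ fun j _ =>
      Submodule.smul_mem_smul (h i j) trivial

lemma sum_smul_apply_of_monicForm {d : Fin r → ℕ} {W : Fin r → Fin r → A[X]} {c : Fin r → A[X]}
    (i : Fin r) :
    (∑ l, c l • W l) i = X ^ d i * c i -
      ∑ l, c l * ((Pi.single l (X ^ d l) : Fin r → A[X]) - W l) i := by
  simp [mul_sub, Finset.sum_sub_distrib, Pi.single_apply, mul_comm]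

lemma exists_sub_mem_degreeBox {d : Fin r → ℕ} {W : Fin r → Fin r → A[X]}
    (hW : ∀ i, Pi.single i (X ^ d i) - W i ∈ degreeBox A d) (v : Fin r → A[X]) :
    ∃ c : Fin r → A[X], v - ∑ i, c i • W i ∈ degreeBox A d := by
  obtain ⟨N, hN⟩ : ∃ N, ∀ i j, d i + N ≤ j → (v i).coeff j = 0 := by
    refine ⟨Finset.univ.sup (fun i => (v i).natDegree + 1), fun i j hj => ?_⟩
    have : (v i).natDegree + 1 ≤ _ :=
      Finset.le_sup (f := fun i => (v i).natDegree + 1) (Finset.mem_univ i)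
    exact coeff_eq_zero_of_natDegree_lt (by omega)
  induction N generalizing v with
  | zero => exact ⟨0, by simpa [mem_degreeBox] using hN⟩
  | succ N ih =>
    let c : Fin r → A[X] := fun i => C ((v i).coeff (d i + N)) * X ^ N
    obtain ⟨c', hc'⟩ := ih (v - ∑ i, c i • W i) fun i j hj => by
      rw [Pi.sub_apply, sum_smul_apply_of_monicForm (d := d), coeff_sub, coeff_sub,
        finsetSum_coeff, Finset.sum_eq_zero, sub_zero]
      · have : X ^ d i * c i = C ((v i).coeff (d i + N)) * X ^ (d i + N) := by
          simp only [c]; ring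
        rw [this, coeff_C_mul, coeff_X_pow]
        rcases hj.eq_or_lt with rfl | h
        · simp
        · rw [if_neg (by omega), mul_zero, sub_zero]
          exact hN i j (by omega)
      · intro l _
        simp only [c]
        rw [mul_assoc, coeff_C_mul, coeff_X_pow_mul', if_pos (by omega),
          mem_degreeBox.1 (hW l) i _ (by omega), mul_zero]
    refine ⟨c + c', ?_⟩
    simpa [add_smul, Finset.sum_add_distrib, sub_sub] using hc'

lemma eq_zero_of_sum_smul_mem_degreeBox {d : Fin r → ℕ} {W : Fin r → Fin r → A[X]}
    (hW : ∀ i, Pi.single i (X ^ d i) - W i ∈ degreeBox A d) {c : Fin r → A[X]}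
    (hc : ∑ i, c i • W i ∈ degreeBox A d) : c = 0 := by
  classical
  by_contra hne
  obtain ⟨i₀, hi₀⟩ : ∃ i, c i ≠ 0 := by
    by_contra! h
    exact hne (funext h)
  obtain ⟨i, hi, hmax⟩ := Finset.exists_max_image (Finset.univ.filter fun l => c l ≠ 0)
    (fun l => (c l).natDegree) ⟨i₀, by simpa using hi₀⟩
  have h := mem_degreeBox.1 hc i (d i + (c i).natDegree) (by omega)
  rw [sum_smul_apply_of_monicForm (d := d), coeff_sub, finsetSum_coeff, Finset.sum_eq_zero,
    sub_zero, add_comm, coeff_X_pow_mul] at h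
  · exact (Finset.mem_filter.1 hi).2 (leadingCoeff_eq_zero.1 h)
  · intro l _
    by_cases hl : c l = 0
    · simp [hl]
    rw [coeff_mul]
    refine Finset.sum_eq_zero fun x hx => ?_
    rw [Finset.HasAntidiagonal.mem_antidiagonal] at hx
    have := hmax l (by simpa using hl)
    by_cases h1 : (c l).natDegree < x.1
    · rw [coeff_eq_zero_of_natDegree_lt h1, zero_mul]
    · rw [mem_degreeBox.1 (hW l) i _ (by omega), mul_zero]

variable [IsLocalRing A]

open IsLocalRing

lemma exists_maximal_degreeBox {P : Submodule A[X] (Fin r → A[X])} {f : A[X]} (hf : f.Monic)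
    (hfP : ∀ v, f • v ∈ P) :
    ∃ d : Fin r → ℕ,
      (∀ l ∈ degreeBox A d, l ∈ P.restrictScalars A ⊔ maximalIdeal A • ⊤ →
        l ∈ maximalIdeal A • (⊤ : Submodule A (Fin r → A[X]))) ∧
      ∀ i, ∃ w ∈ degreeBox A d,
        Pi.single i (X ^ d i) - w ∈ P.restrictScalars A ⊔ maximalIdeal A • ⊤ := by
  classical
  let Good : (Fin r → ℕ) → Prop := fun d => ∀ l ∈ degreeBox A d,
    l ∈ P.restrictScalars A ⊔ maximalIdeal A • ⊤ →
      l ∈ maximalIdeal A • (⊤ : Submodule A (Fin r → A[X]))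
  have hbound : ∀ d, Good d → ∀ i, d i ≤ f.natDegree := by
    intro d hd i
    by_contra! hlt
    have h1 := hd (Pi.single i f) (mem_degreeBox.2 fun l j hj => by
      by_cases h : l = i
      · subst h
        simpa using coeff_eq_zero_of_natDegree_lt (by omega)
      · simp [h]) (Submodule.mem_sup_left (by
        have := hfP (Pi.single i 1)
        rwa [← Pi.single_smul, smul_eq_mul, mul_one] at this))
    have h2 := mem_ideal_smul_top_pi_iff.1 h1 i f.natDegree
    rw [Pi.single_eq_same, hf.coeff_natDegree] at h2
    exact (Ideal.ne_top_iff_one _).1 (maximalIdeal.isMaximal A).ne_top h2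
  have h0 : Good 0 := by
    intro l hl _
    have : l = 0 := by
      ext i j
      simpa using mem_degreeBox.1 hl i j (Nat.zero_le _)
    rw [this]
    exact zero_mem _
  have hfin : {d | Good d}.Finite :=
    (Set.Finite.pi' fun _ => Set.finite_le_nat f.natDegree).subset fun d hd i => hbound d hd i
  obtain ⟨d, hd, hmax⟩ := hfin.exists_maximalFor (fun d => ∑ i, d i) _ ⟨0, h0⟩
  refine ⟨d, hd, fun i => ?_⟩
  have hnot : ¬ Good (d + Pi.single i 1) := by
    intro h
    have := hmax h (by simp [Finset.sum_add_distrib])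
    simp [Finset.sum_add_distrib] at this
  simp only [Good] at hnot
  push Not at hnot
  obtain ⟨v, hv, hvP, hvm⟩ := hnot
  rw [mem_degreeBox] at hv
  have hsub : ∀ a : A, a = (v i).coeff (d i) →
      v - a • (Pi.single i (X ^ d i) : Fin r → A[X]) ∈ degreeBox A d := by
    rintro a rfl
    refine mem_degreeBox.2 fun l j hj => ?_
    by_cases h : l = i
    · subst h
      rcases hj.eq_or_lt with rfl | hlt
      · simp
      · simp [coeff_X_pow, hlt.ne', hv l j (by simp; omega)]
    · simp [h, hv l j (by simpa [h] using hj)]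
  have hunit : IsUnit ((v i).coeff (d i)) := by
    by_contra hu
    have hmem : (v i).coeff (d i) • (Pi.single i (X ^ d i) : Fin r → A[X]) ∈
        maximalIdeal A • (⊤ : Submodule A (Fin r → A[X])) :=
      Submodule.smul_mem_smul ((mem_maximalIdeal _).2 hu) trivial
    refine hvm ?_
    rw [← sub_add_cancel v ((v i).coeff (d i) • Pi.single i (X ^ d i))]
    exact add_mem (hd _ (hsub _ rfl) (sub_mem hvP (Submodule.mem_sup_right hmem))) hmem
  obtain ⟨u, hu⟩ := hunit
  refine ⟨-((↑u⁻¹ : A) • (v - (u : A) • (Pi.single i (X ^ d i) : Fin r → A[X]))),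
    neg_mem (Submodule.smul_mem _ _ (hsub _ hu)), ?_⟩
  rw [smul_sub, smul_smul, Units.inv_mul, one_smul, neg_sub, sub_sub_cancel]
  exact Submodule.smul_mem _ _ hvP

/-- Horrocks' theorem over a local ring, for a submodule of a free module. -/
theorem exists_basis_of_monic_smul_mem [IsNoetherianRing A]
    {P : Submodule A[X] (Fin r → A[X])} {f : A[X]} (hf : f.Monic) (hfP : ∀ v, f • v ∈ P)
    (hP : ∀ p ∈ P, p ∈ maximalIdeal A • (⊤ : Submodule A (Fin r → A[X])) →
      p ∈ maximalIdeal A • P.restrictScalars A) :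
    ∃ W : Fin r → Fin r → A[X], (∀ i, W i ∈ P) ∧ (∀ p ∈ P, ∃ c : Fin r → A[X], ∑ i, c i • W i = p) ∧
      ∀ c : Fin r → A[X], ∑ i, c i • W i = 0 → c = 0 := by
  obtain ⟨d, hd, hw⟩ := exists_maximal_degreeBox hf hfP
  have hjac : maximalIdeal A ≤ (⊥ : Ideal A).jacobson := maximalIdeal_le_jacobson _
  have htop : (⊤ : Submodule A (Fin r → A[X])) ≤ degreeBox A d ⊔ P.restrictScalars A := by
    choose w hwd hwP using hw
    have h1 : (⊤ : Submodule A (Fin r → A[X])) ≤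
        degreeBox A d ⊔ (P.restrictScalars A ⊔ maximalIdeal A • ⊤) := by
      intro v _
      obtain ⟨c, hc⟩ := exists_sub_mem_degreeBox (d := d)
        (W := fun i => Pi.single i (X ^ d i) - w i) (fun i => by simpa using hwd i) v
      rw [← sub_add_cancel v (∑ i, c i • (Pi.single i (X ^ d i) - w i))]
      refine Submodule.add_mem_sup hc (Submodule.sum_mem _ fun i _ => ?_)
      obtain ⟨p, hp, q, hq, hpq⟩ := Submodule.mem_sup.1 (hwP i)
      rw [← hpq, smul_add]
      refine Submodule.add_mem_sup (P.smul_mem _ hp) ?_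
      rw [mem_ideal_smul_top_pi_iff] at hq ⊢
      intro l j
      rw [Pi.smul_apply, smul_eq_mul, coeff_mul]
      exact Ideal.sum_mem _ fun x _ => Ideal.mul_mem_left _ _ (hq l _)
    let D : Fin r → ℕ := fun _ => f.natDegree
    have h2 : (⊤ : Submodule A (Fin r → A[X])) ≤ degreeBox A D ⊔ P.restrictScalars A := by
      intro v _
      obtain ⟨c, hc⟩ := exists_sub_mem_degreeBox (d := D)
        (W := fun i => Pi.single i f) (fun i => mem_degreeBox.2 fun l j hj => by
          by_cases h : l = i
          · subst h
            rcases hj.eq_or_lt with rfl | hlt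
            · simp [D, hf.coeff_natDegree]
            · simp [D, coeff_X_pow, hlt.ne', coeff_eq_zero_of_natDegree_lt hlt]
          · simp [h]) v
      rw [← sub_add_cancel v (∑ i, c i • Pi.single i f)]
      refine Submodule.add_mem_sup hc (Submodule.sum_mem _ fun i _ => ?_)
      have := P.smul_mem (c i) (hfP (Pi.single i 1))
      rwa [← Pi.single_smul, smul_eq_mul, mul_one] at this
    refine h2.trans (sup_le ?_ le_sup_right)
    refine Submodule.le_of_le_smul_of_le_jacobson_bot (fg_degreeBox D) hjac ?_
    refine (le_top.trans h1).trans ?_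
    rw [← sup_assoc]
    refine sup_le le_sup_left ?_
    refine (Submodule.smul_mono le_rfl h2).trans ?_
    rw [Submodule.smul_sup]
    exact sup_le le_sup_right (Submodule.smul_le_right.trans (le_sup_right.trans le_sup_left))
  have hw' : ∀ i, ∃ w ∈ degreeBox A d, Pi.single i (X ^ d i) - w ∈ P := fun i => by
    obtain ⟨w, hw, p, hp, hwp⟩ := Submodule.mem_sup.1
      (htop (Submodule.mem_top (x := Pi.single i (X ^ d i))))
    exact ⟨w, hw, by rw [← hwp, add_sub_cancel_left]; exact hp⟩
  choose w hwd hwP using hw'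
  let W : Fin r → Fin r → A[X] := fun i => Pi.single i (X ^ d i) - w i
  have hW : ∀ i, Pi.single i (X ^ d i) - W i ∈ degreeBox A d := fun i => by simpa [W] using hwd i
  let P' : Submodule A (Fin r → A[X]) :=
    (LinearMap.range (Fintype.linearCombination A[X] W)).restrictScalars A
  have hP'P : P' ≤ P.restrictScalars A := by
    rintro _ ⟨c, rfl⟩
    rw [Fintype.linearCombination_apply]
    exact Submodule.sum_mem _ fun i _ => P.smul_mem _ (hwP i)
  let Q := degreeBox A d ⊓ P.restrictScalars A
  have hPQ : P.restrictScalars A ≤ Q ⊔ P' := by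
    intro p hp
    obtain ⟨c, hc⟩ := exists_sub_mem_degreeBox hW p
    rw [← sub_add_cancel p (∑ i, c i • W i)]
    exact Submodule.add_mem_sup ⟨hc, sub_mem hp (hP'P ⟨c, rfl⟩)⟩ ⟨c, rfl⟩
  have hQ : Q ≤ ⊥ := by
    have hfg : Q.FG := (fg_degreeBox d).of_le inf_le_left
    refine Submodule.le_of_le_smul_of_le_jacobson_bot hfg hjac ?_
    rw [bot_sup_eq]
    intro q hq
    have h1 := hP q hq.2 (hd q hq.1 (Submodule.mem_sup_left hq.2))
    have h2 := Submodule.smul_mono (le_refl (maximalIdeal A)) hPQ h1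
    rw [Submodule.smul_sup] at h2
    obtain ⟨a, ha, b, hb, hab⟩ := Submodule.mem_sup.1 h2
    obtain ⟨c, rfl⟩ := Submodule.smul_le_right hb
    have hc : c = 0 := eq_zero_of_sum_smul_mem_degreeBox hW (by
      have : Fintype.linearCombination A[X] W c = q - a := by rw [← hab]; abel
      have h3 : Fintype.linearCombination A[X] W c ∈ degreeBox A d := by
        rw [this]
        exact sub_mem hq.1 (Submodule.smul_le_right ha : a ∈ Q).1
      exact h3)
    rwa [← hab, hc, map_zero, add_zero]
  refine ⟨W, hwP, fun p hp => ?_, fun c hc => eq_zero_of_sum_smul_mem_degreeBox hW ?_⟩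
  · have := hPQ hp
    rw [le_bot_iff.1 hQ, bot_sup_eq] at this
    exact this
  · rw [hc]
    exact zero_mem _

end LocalHorrocks

section SplitIdempotents

variable {R S : Type*} [CommRing R] [CommRing S] {s : ℕ}

/-- A square matrix `e` factors as `U * V` with `V * U = 1`; such an `e` is an idempotent
whose image is free. -/
def IdempotentSplits (e : Matrix (Fin s) (Fin s) R) : Prop :=
  ∃ (r : ℕ) (U : Matrix (Fin s) (Fin r) R) (V : Matrix (Fin r) (Fin s) R), U * V = e ∧ V * U = 1

/-- Every idempotent matrix over `R` has free image. -/
def AllIdempotentsSplit (R : Type*) [CommRing R] : Prop :=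
  ∀ (s : ℕ) (e : Matrix (Fin s) (Fin s) R), e * e = e → IdempotentSplits e

lemma IdempotentSplits.map {e : Matrix (Fin s) (Fin s) R} (h : IdempotentSplits e) (f : R →+* S) :
    IdempotentSplits (e.map f) := by
  obtain ⟨r, U, V, hUV, hVU⟩ := h
  exact ⟨r, U.map f, V.map f, by rw [← Matrix.map_mul, hUV],
    by rw [← Matrix.map_mul, hVU, Matrix.map_one _ f.map_zero f.map_one]⟩

lemma IdempotentSplits.of_conj {e e' : Matrix (Fin s) (Fin s) R} (h : IdempotentSplits e)
    (g g' : Matrix (Fin s) (Fin s) R) (hg : g' * g = 1) (he : e' = g * e * g') :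
    IdempotentSplits e' := by
  obtain ⟨r, U, V, hUV, hVU⟩ := h
  refine ⟨r, g * U, V * g', by rw [he, ← hUV]; simp only [Matrix.mul_assoc], ?_⟩
  rw [Matrix.mul_assoc, ← Matrix.mul_assoc g', hg, Matrix.one_mul, hVU]

lemma AllIdempotentsSplit.of_ringEquiv (h : AllIdempotentsSplit R) (f : R ≃+* S) :
    AllIdempotentsSplit S := by
  intro s e he
  have := (h s (e.map f.symm) (by
    rw [← RingEquiv.coe_toRingHom, ← Matrix.map_mul, he])).map (f : R →+* S)
  rw [Matrix.map_map] at this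
  convert this
  ext i j
  simp

lemma allIdempotentsSplit_of_field (k : Type*) [Field k] : AllIdempotentsSplit k := by
  intro s e he
  let P := LinearMap.range (Matrix.toLin' e)
  let b := Module.finBasis k P
  let φ : P ≃ₗ[k] (Fin (Module.finrank k P) → k) := b.equivFun
  have hmul : (Matrix.toLin' e) ∘ₗ (Matrix.toLin' e) = Matrix.toLin' e := by
    rw [← Matrix.toLin'_mul, he]
  refine ⟨_, LinearMap.toMatrix' (P.subtype ∘ₗ φ.symm.toLinearMap),
    LinearMap.toMatrix' (φ.toLinearMap ∘ₗ (Matrix.toLin' e).rangeRestrict), ?_, ?_⟩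
  · rw [← LinearMap.toMatrix'_comp]
    apply Matrix.toLin'.injective
    rw [Matrix.toLin'_toMatrix']
    refine LinearMap.ext fun v => ?_
    simp
  · rw [← LinearMap.toMatrix'_comp, ← LinearMap.toMatrix'_id]
    congr 1
    refine LinearMap.ext fun v => ?_
    obtain ⟨⟨_, w, rfl⟩, rfl⟩ := φ.surjective v
    simp only [LinearMap.comp_apply, LinearEquiv.coe_coe, LinearEquiv.symm_apply_apply,
      LinearMap.id_apply, Submodule.subtype_apply]
    congr 1
    ext1
    exact LinearMap.congr_fun hmul w

/-- If all idempotent matrices split then finite projective modules are free. -/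
lemma AllIdempotentsSplit.free (h : AllIdempotentsSplit R) (P : Type*) [AddCommGroup P]
    [Module R P] [Module.Finite R P] [Module.Projective R P] : Module.Free R P := by
  obtain ⟨s, p, hp⟩ := Module.Finite.exists_fin' R P
  obtain ⟨q, hq⟩ := Module.projective_lifting_property p LinearMap.id hp
  have hpq : ∀ x, p (q x) = x := fun x => LinearMap.congr_fun hq x
  obtain ⟨r, U, V, hUV, hVU⟩ := h s (LinearMap.toMatrix' (q ∘ₗ p)) (by
    rw [← LinearMap.toMatrix'_comp]
    congr 1
    refine LinearMap.ext fun v => ?_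
    simp [hpq])
  have h1 : Matrix.toLin' U ∘ₗ Matrix.toLin' V = q ∘ₗ p := by
    rw [← Matrix.toLin'_mul, hUV, Matrix.toLin'_toMatrix']
  have h2 : Matrix.toLin' V ∘ₗ Matrix.toLin' U = LinearMap.id := by
    rw [← Matrix.toLin'_mul, hVU, Matrix.toLin'_one]
  have h1' := fun x => LinearMap.congr_fun h1 x
  have h2' := fun x => LinearMap.congr_fun h2 x
  simp only [LinearMap.comp_apply, LinearMap.id_apply] at h1' h2'
  refine Module.Free.of_equiv (LinearEquiv.ofLinearMap (p ∘ₗ Matrix.toLin' U) (Matrix.toLin' V ∘ₗ q)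
    ?_ ?_)
  · refine LinearMap.ext fun x => ?_
    simp only [LinearMap.comp_apply, LinearMap.id_apply, h1', hpq]
  · refine LinearMap.ext fun x => ?_
    simp only [LinearMap.comp_apply, LinearMap.id_apply]
    rw [← h1', h2', h2']

/-- A splitting up to the scalar `c`. -/
def SplitsUpTo (c : R) (e : Matrix (Fin s) (Fin s) R) : Prop :=
  ∃ (r : ℕ) (U : Matrix (Fin s) (Fin r) R) (V : Matrix (Fin r) (Fin s) R),
    U * V = c • e ∧ V * U = c • 1 ∧ e * U = U ∧ V * e = V

lemma SplitsUpTo.map {c : R} {e : Matrix (Fin s) (Fin s) R} (h : SplitsUpTo c e) (f : R →+* S) :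
    SplitsUpTo (f c) (e.map f) := by
  obtain ⟨r, U, V, h1, h2, h3, h4⟩ := h
  refine ⟨r, U.map f, V.map f, ?_, ?_, ?_, ?_⟩
  · rw [← Matrix.map_mul, h1]; ext; simp
  · rw [← Matrix.map_mul, h2]; ext i j; simp [Matrix.one_apply, apply_ite f]
  · rw [← Matrix.map_mul, h3]
  · rw [← Matrix.map_mul, h4]

lemma SplitsUpTo.smul {c : R} {e : Matrix (Fin s) (Fin s) R} (h : SplitsUpTo c e) (a : R) :
    SplitsUpTo (a * c) e := by
  obtain ⟨r, U, V, h1, h2, h3, h4⟩ := h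
  exact ⟨r, a • U, V, by rw [Matrix.smul_mul, h1, mul_smul], by rw [Matrix.mul_smul, h2, mul_smul],
    by rw [Matrix.mul_smul, h3], h4⟩

lemma exists_matrix_clear_denom (T : Submonoid R) {L : Type*} [CommRing L] [Algebra R L]
    [IsLocalization T L] {m n : Type*} [Finite m] [Finite n] (U : Matrix m n L) :
    ∃ c ∈ T, ∃ U' : Matrix m n R, U'.map (algebraMap R L) = algebraMap R L c • U := by
  obtain ⟨b, hb⟩ := IsLocalization.exist_integer_multiples_of_finite T
    (fun x : m × n => U x.1 x.2)
  choose u hu using hb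
  refine ⟨b, b.2, Matrix.of fun i j => u (i, j), ?_⟩
  ext i j
  rw [Matrix.map_apply, Matrix.of_apply, hu, Algebra.smul_def]
  rfl

lemma exists_splitsUpTo (T : Submonoid R) {L : Type*} [CommRing L] [Algebra R L]
    [IsLocalization T L] (hinj : Function.Injective (algebraMap R L))
    {e : Matrix (Fin s) (Fin s) R} (h : IdempotentSplits (e.map (algebraMap R L))) :
    ∃ c ∈ T, SplitsUpTo c e := by
  obtain ⟨r, U, V, hUV, hVU⟩ := h
  obtain ⟨a, ha, U', hU'⟩ := exists_matrix_clear_denom T U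
  obtain ⟨b, hb, V', hV'⟩ := exists_matrix_clear_denom T V
  refine ⟨a * b, mul_mem ha hb, r, U', V', ?_, ?_, ?_, ?_⟩ <;>
    apply Matrix.map_injective hinj <;> dsimp only
  · rw [Matrix.map_mul, hU', hV', Matrix.smul_mul, Matrix.mul_smul, hUV]
    ext i j
    simp only [Matrix.smul_apply, Matrix.map_apply, smul_eq_mul, map_mul]
    ring
  · rw [Matrix.map_mul, hU', hV', Matrix.smul_mul, Matrix.mul_smul, hVU]
    ext i j
    simp only [Matrix.smul_apply, Matrix.map_apply, smul_eq_mul, map_mul, Matrix.one_apply]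
    split_ifs <;> simp [mul_comm]
  · rw [Matrix.map_mul, hU', Matrix.mul_smul, ← hUV, Matrix.mul_assoc, hVU, Matrix.mul_one]
  · rw [Matrix.map_mul, hV', Matrix.smul_mul, ← hUV, ← Matrix.mul_assoc, hVU, Matrix.one_mul]

open Polynomial IsLocalRing in
/-- Horrocks' theorem over a Noetherian local ring, for idempotent matrices. -/
theorem idempotentSplits_of_monic {A : Type*} [CommRing A] [IsLocalRing A] [IsNoetherianRing A]
    {f : A[X]} (hf : f.Monic) {e : Matrix (Fin s) (Fin s) A[X]} (he : e * e = e)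
    (h : SplitsUpTo f e) : IdempotentSplits e := by
  obtain ⟨r, U, V, hUV, hVU, heU, hVe⟩ := h
  let P : Submodule A[X] (Fin r → A[X]) := LinearMap.range (Matrix.toLin' V)
  obtain ⟨W, hWP, hsp, hli⟩ := exists_basis_of_monic_smul_mem (P := P) hf
    (fun v => ⟨U.mulVec v, by
      rw [Matrix.toLin'_apply, Matrix.mulVec_mulVec, hVU, Matrix.smul_mulVec, Matrix.one_mulVec]⟩)
    (by
      rintro _ ⟨y, rfl⟩ hp
      rw [Matrix.toLin'_apply] at hp ⊢
      rw [mem_ideal_smul_top_pi_iff] at hp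
      have hU : ∀ i j, (f * (e.mulVec y) i).coeff j ∈ maximalIdeal A := by
        have : f • e.mulVec y = U.mulVec (V.mulVec y) := by
          rw [Matrix.mulVec_mulVec, hUV, Matrix.smul_mulVec]
        intro i j
        rw [← smul_eq_mul, ← Pi.smul_apply, this, Matrix.mulVec, dotProduct, finsetSum_coeff]
        refine Ideal.sum_mem _ fun l _ => ?_
        rw [coeff_mul]
        exact Ideal.sum_mem _ fun x _ => Ideal.mul_mem_left _ _ (hp l _)
      have hy : ∀ i j, (e.mulVec y i).coeff j ∈ maximalIdeal A := by
        intro i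
        have h1 : f * e.mulVec y i ∈ (maximalIdeal A).map (C : A →+* A[X]) :=
          Ideal.mem_map_C_iff.2 (hU i)
        refine Ideal.mem_map_C_iff.1 ((Ideal.isPrime_map_C_of_isPrime.mem_or_mem h1).resolve_left
          fun hfm => ?_)
        have h2 := Ideal.mem_map_C_iff.1 hfm f.natDegree
        rw [hf.coeff_natDegree] at h2
        exact (Ideal.ne_top_iff_one _).1 (maximalIdeal.isMaximal A).ne_top h2
      have h3 : V.mulVec y = V.mulVec (e.mulVec y) := by rw [Matrix.mulVec_mulVec, hVe]
      have h4 := mem_ideal_smul_top_pi_iff.2 hy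
      have h5 := Submodule.mem_map_of_mem (f := (Matrix.toLin' V).restrictScalars A) h4
      rw [Submodule.map_smul''] at h5
      rw [h3]
      refine Submodule.smul_mono le_rfl ?_ h5
      rintro _ ⟨z, -, rfl⟩
      exact ⟨z, rfl⟩)
  choose z hz using fun i => LinearMap.mem_range.1 (hWP i)
  choose y hy using fun j : Fin s => hsp (V.col j) ⟨Pi.single j 1, by simp⟩
  let W' : Matrix (Fin r) (Fin r) A[X] := Matrix.of fun i j => W j i
  let Z : Matrix (Fin s) (Fin r) A[X] := Matrix.of fun i j => z j i
  let Y : Matrix (Fin r) (Fin s) A[X] := Matrix.of fun i j => y j i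
  have hVZ : V * Z = W' := by
    refine Matrix.ext fun i j => ?_
    exact congrFun (hz j) i
  have hWY : W' * Y = V := by
    refine Matrix.ext fun i j => ?_
    have := congrFun (hy j) i
    rw [Matrix.col_apply] at this
    rw [← this]
    simp [Matrix.mul_apply, W', Y, mul_comm]
  have hcancel : ∀ (t : ℕ) (B B' : Matrix (Fin r) (Fin t) A[X]), W' * B = W' * B' → B = B' := by
    intro t B B' h
    refine Matrix.ext fun i j => ?_
    have := hli (fun i => B i j - B' i j) (by
      ext l : 1
      have := congrFun (congrFun h l) j
      simp only [Matrix.mul_apply, W', Matrix.of_apply] at this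
      simp only [sub_smul, Finset.sum_sub_distrib, Pi.sub_apply, Finset.sum_apply, Pi.smul_apply,
        smul_eq_mul, Pi.zero_apply, mul_comm _ (W _ _), this, sub_self])
    exact sub_eq_zero.1 (congrFun this i)
  have hYe : Y * e = Y := hcancel _ _ _ (by rw [← Matrix.mul_assoc, hWY, hVe])
  refine ⟨r, e * Z, Y, ?_, ?_⟩
  · have h1 : U * (V * (e * Z * Y)) = U * V := by
      rw [← Matrix.mul_assoc V, ← Matrix.mul_assoc V, hVe, hVZ, hWY]
    rw [← Matrix.mul_assoc, hUV, Matrix.smul_mul, ← Matrix.mul_assoc, ← Matrix.mul_assoc, he] at h1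
    refine Matrix.ext fun i j => ?_
    have := congrFun (congrFun h1 i) j
    exact hf.isRegular.left (by simpa using this)
  · apply hcancel
    rw [← Matrix.mul_assoc, hWY, ← Matrix.mul_assoc, hVe, hVZ, Matrix.mul_one]

end SplitIdempotents

section Patching

open Polynomial

variable {A : Type*} [CommRing A] {s : ℕ}

/-- If an idempotent matrix of polynomials and its complement split, it is conjugate to its
value at `0`. -/
lemma exists_conj_eval_zero {B : Type*} [CommRing B] (ρ : B →+* B)
    {e : Matrix (Fin s) (Fin s) B} (he : e * e = e) (h : IdempotentSplits e)
    (h' : IdempotentSplits (1 - e)) :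
    ∃ g g' : Matrix (Fin s) (Fin s) B, g * g' = 1 ∧ g' * g = 1 ∧ e * g = g * e.map ρ := by
  obtain ⟨r, U, V, hUV, hVU⟩ := h
  obtain ⟨r', U', V', hUV', hVU'⟩ := h'
  have h1 : V * U' = 0 := by
    calc V * U' = (V * U) * V * U' * (V' * U') := by rw [hVU, hVU']; simp
      _ = V * ((U * V) * (U' * V')) * U' := by simp only [Matrix.mul_assoc]
      _ = 0 := by rw [hUV, hUV', mul_sub, he]; simp
  have h2 : V' * U = 0 := by
    calc V' * U = (V' * U') * V' * U * (V * U) := by rw [hVU, hVU']; simp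
      _ = V' * ((U' * V') * (U * V)) * U := by simp only [Matrix.mul_assoc]
      _ = 0 := by rw [hUV, hUV', sub_mul, he]; simp
  have hgh : (U * V.map ρ + U' * V'.map ρ) * (U.map ρ * V + U'.map ρ * V') = 1 := by
    calc _ = U * (V * U).map ρ * V + U * (V * U').map ρ * V' + U' * (V' * U).map ρ * V
          + U' * (V' * U').map ρ * V' := by
            simp only [Matrix.map_mul, Matrix.mul_add, Matrix.add_mul, Matrix.mul_assoc]; abel
      _ = 1 := by
        rw [hVU, hVU', h1, h2]
        simp [Matrix.map_one, Matrix.map_zero, hUV, hUV']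
  refine ⟨U * V.map ρ + U' * V'.map ρ, U.map ρ * V + U'.map ρ * V', hgh,
    mul_eq_one_comm.1 hgh, ?_⟩
  calc e * (U * V.map ρ + U' * V'.map ρ)
      = U * (V * U) * V.map ρ + U * (V * U') * V'.map ρ := by
        simp only [← hUV, Matrix.mul_add, Matrix.mul_assoc]
    _ = U * (V * U).map ρ * V.map ρ + U' * (V' * U).map ρ * V.map ρ := by
        rw [hVU, h1, h2]; simp [Matrix.map_one, Matrix.map_zero]
    _ = _ := by simp only [← hUV, Matrix.map_mul, Matrix.add_mul, Matrix.mul_assoc]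

/-- The matrix of constant terms, as constant polynomials. -/
noncomputable abbrev constTerm (A : Type*) [CommRing A] : A[X] →+* A[X] :=
  (C : A →+* A[X]).comp (evalRingHom 0)

attribute [local instance] Polynomial.algebra in
lemma exists_conj_of_localization [IsDomain A] (m : Ideal A) [m.IsPrime]
    {e : Matrix (Fin s) (Fin s) A[X]} (he : e * e = e)
    (h : IdempotentSplits (e.map (mapRingHom (algebraMap A (Localization.AtPrime m)))))
    (h' : IdempotentSplits ((1 - e).map (mapRingHom (algebraMap A (Localization.AtPrime m))))) :
    ∃ t ∉ m, ∃ G G' : Matrix (Fin s) (Fin s) A[X], G * G' = C t • 1 ∧ G' * G = C t • 1 ∧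
      e * G = G * e.map (constTerm A) ∧ G' * e = e.map (constTerm A) * G' := by
  let L := Localization.AtPrime m
  let φ := mapRingHom (algebraMap A L)
  have hinj : Function.Injective (algebraMap A[X] L[X]) := by
    rw [Polynomial.algebraMap_def]
    exact map_injective _ (IsLocalization.injective _ m.primeCompl_le_nonZeroDivisors)
  have hφ : algebraMap A[X] L[X] = φ := Polynomial.algebraMap_def _ _
  have hφi : Function.Injective φ := hφ ▸ hinj
  have h1e : (1 - e).map φ = 1 - e.map φ := by
    ext i j : 2
    simp [Matrix.one_apply, apply_ite φ]
  obtain ⟨g, g', hgg, hgg', heg⟩ := exists_conj_eval_zero (constTerm L)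
    (e := e.map φ) (by rw [← Matrix.map_mul, he]) h (h1e ▸ h')
  have hconst : (e.map φ).map (constTerm L) = (e.map (constTerm A)).map φ := by
    ext i j : 2
    simp only [Matrix.map_apply, constTerm, RingHom.comp_apply, coe_evalRingHom, φ,
      coe_mapRingHom, map_C, ← coeff_zero_eq_eval_zero, coeff_map]
  have := Polynomial.isLocalization m.primeCompl L
  obtain ⟨_, ⟨a, ha, rfl⟩, G, hG⟩ :=
    exists_matrix_clear_denom (R := A[X]) (L := L[X]) (m.primeCompl.map C) g
  obtain ⟨_, ⟨b, hb, rfl⟩, G', hG'⟩ :=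
    exists_matrix_clear_denom (R := A[X]) (L := L[X]) (m.primeCompl.map C) g'
  rw [hφ] at hG hG'
  have hone : ∀ c : A, (C c • (1 : Matrix (Fin s) (Fin s) A[X])).map φ = φ (C c) • 1 := by
    intro c
    refine Matrix.ext fun i j => ?_
    simp only [Matrix.smul_apply, Matrix.map_apply, smul_eq_mul, map_mul, Matrix.one_apply]
    split_ifs <;> simp
  have heG : e * G = G * e.map (constTerm A) := by
    apply Matrix.map_injective hφi
    dsimp only
    rw [Matrix.map_mul, Matrix.map_mul, hG, Matrix.mul_smul, heg, hconst, Matrix.smul_mul]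
  have hGG : G * G' = C (a * b) • 1 := by
    apply Matrix.map_injective hφi
    dsimp only
    rw [hone, Matrix.map_mul, hG, hG', Matrix.mul_smul, Matrix.smul_mul, hgg, smul_smul,
      C_mul, map_mul, mul_comm]
  have hGG' : G' * G = C (a * b) • 1 := by
    apply Matrix.map_injective hφi
    dsimp only
    rw [hone, Matrix.map_mul, hG, hG', Matrix.mul_smul, Matrix.smul_mul, hgg', smul_smul,
      C_mul, map_mul]
  have hab : a * b ∉ m := m.primeCompl.mul_mem ha hb
  refine ⟨a * b, hab, G, G', hGG, hGG', heG, ?_⟩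
  have h1 : G' * (e * G) * G' = G' * (G * e.map (constTerm A)) * G' := by rw [heG]
  rw [← Matrix.mul_assoc, ← Matrix.mul_assoc G' G, hGG', Matrix.mul_assoc (G' * e), hGG] at h1
  have hne : (C (a * b) : A[X]) ≠ 0 := by
    rw [Ne, C_eq_zero]
    rintro h0
    exact hab (h0 ▸ m.zero_mem)
  refine Matrix.ext fun i j => mul_left_cancel₀ hne ?_
  simpa [Matrix.mul_assoc] using congrFun (congrFun h1 i) j

lemma C_dvd_comp_add_sub_comp (t : A) (x y p : A[X]) :
    C t ∣ p.comp (x + C t * y) - p.comp x := by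
  have := sub_dvd_eval_sub (x + C t * y) x (p.map C)
  rw [eval_map, eval_map] at this
  exact (Dvd.intro _ (by ring : C t * y = x + C t * y - x)).trans this

lemma exists_matrix_smul_eq (t : A) (x y : A[X]) {G G' : Matrix (Fin s) (Fin s) A[X]}
    (h : G * G' = C t • 1) :
    ∃ K : Matrix (Fin s) (Fin s) A[X],
      C t • K = G.map (compRingHom (x + C t * y)) * G'.map (compRingHom x) := by
  choose D hD using fun i j => C_dvd_comp_add_sub_comp t x y (G i j)
  refine ⟨Matrix.of D * G'.map (compRingHom x) + 1, ?_⟩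
  have h1 : G.map (compRingHom (x + C t * y)) = C t • Matrix.of D + G.map (compRingHom x) := by
    refine Matrix.ext fun i j => ?_
    simp [← hD]
  rw [h1, Matrix.add_mul, ← Matrix.map_mul, h, smul_add, Matrix.smul_mul]
  congr 1
  refine Matrix.ext fun i j => ?_
  simp [Matrix.one_apply, apply_ite (fun p : A[X] => p.comp x)]

lemma exists_matrix_smul_eq' (t : A) (x y : A[X]) {G G' : Matrix (Fin s) (Fin s) A[X]}
    (h : G * G' = C t • 1) :
    ∃ K : Matrix (Fin s) (Fin s) A[X],
      C t • K = G.map (compRingHom x) * G'.map (compRingHom (x + C t * y)) := by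
  obtain ⟨K, hK⟩ := exists_matrix_smul_eq t (x + C t * y) (-y) h
  refine ⟨K, ?_⟩
  rwa [add_assoc, ← mul_add, add_neg_cancel, mul_zero, add_zero] at hK

/-- The Quillen ideal of a matrix of polynomials. -/
def quillenIdeal (e : Matrix (Fin s) (Fin s) A[X]) : Ideal A where
  carrier := {a | ∀ x y : A[X], ∃ g g' : Matrix (Fin s) (Fin s) A[X], g * g' = 1 ∧ g' * g = 1 ∧
    e.map (compRingHom (x + C a * y)) * g = g * e.map (compRingHom x)}
  zero_mem' x y := ⟨1, 1, by simp⟩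
  add_mem' := by
    intro a b ha hb x y
    obtain ⟨g, g', h1, h2, h3⟩ := ha x y
    obtain ⟨l, l', h1', h2', h3'⟩ := hb (x + C a * y) y
    refine ⟨l * g, g' * l', ?_, ?_, ?_⟩
    · rw [Matrix.mul_assoc, ← Matrix.mul_assoc g, h1, Matrix.one_mul, h1']
    · rw [Matrix.mul_assoc, ← Matrix.mul_assoc l', h2', Matrix.one_mul, h2]
    · rw [C_add, add_mul, ← add_assoc, ← Matrix.mul_assoc, h3', Matrix.mul_assoc, h3,
        Matrix.mul_assoc]
  smul_mem' := by
    intro c a ha x y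
    simpa [mul_assoc, mul_left_comm] using ha x (C c * y)

/-- Quillen patching for idempotent matrices over a domain. -/
theorem exists_conj_constTerm [IsDomain A] {e : Matrix (Fin s) (Fin s) A[X]} (he : e * e = e)
    (h : ∀ (m : Ideal A) [m.IsMaximal],
      IdempotentSplits (e.map (mapRingHom (algebraMap A (Localization.AtPrime m)))) ∧
      IdempotentSplits ((1 - e).map (mapRingHom (algebraMap A (Localization.AtPrime m))))) :
    ∃ g g' : Matrix (Fin s) (Fin s) A[X], g * g' = 1 ∧ g' * g = 1 ∧
      e * g = g * e.map (constTerm A) := by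
  have htop : quillenIdeal e = ⊤ := by
    by_contra hne
    obtain ⟨m, hm, hle⟩ := Ideal.exists_le_maximal _ hne
    obtain ⟨t, htm, G, G', hGG, hGG', heG, hGe⟩ := exists_conj_of_localization m he (h m).1 (h m).2
    refine htm (hle fun x y => ?_)
    have hne : (C t : A[X]) ≠ 0 := by
      rw [Ne, C_eq_zero]
      rintro rfl
      exact htm m.zero_mem
    have hcancel : ∀ B B' : Matrix (Fin s) (Fin s) A[X], C t • B = C t • B' → B = B' := by
      intro B B' hB
      exact Matrix.ext fun i j => mul_left_cancel₀ hne (by simpa using congrFun (congrFun hB i) j)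
    obtain ⟨K, hK⟩ := exists_matrix_smul_eq t x y hGG
    obtain ⟨K', hK'⟩ := exists_matrix_smul_eq' t x y hGG
    have hone : ∀ p : A[X],
        (C t • (1 : Matrix (Fin s) (Fin s) A[X])).map (compRingHom p) = C t • 1 := by
      intro p
      refine Matrix.ext fun i j => ?_
      simp [Matrix.one_apply, apply_ite (fun q : A[X] => q.comp p)]
    have hc : ∀ p : A[X], (e.map (constTerm A)).map (compRingHom p) = e.map (constTerm A) := by
      intro p
      refine Matrix.ext fun i j => ?_
      simp
    have hKK : K * K' = 1 := by
      apply hcancel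
      apply hcancel
      calc C t • C t • (K * K') = (C t • K) * (C t • K') := by
            rw [Matrix.mul_smul, Matrix.smul_mul]
        _ = G.map (compRingHom (x + C t * y)) * (G' * G).map (compRingHom x) *
            G'.map (compRingHom (x + C t * y)) := by
              rw [hK, hK']; simp only [Matrix.map_mul, Matrix.mul_assoc]
        _ = C t • (G * G').map (compRingHom (x + C t * y)) := by
              rw [hGG', hone, Matrix.map_mul]; simp
        _ = C t • C t • 1 := by rw [hGG, hone]
    refine ⟨K, K', hKK, mul_eq_one_comm.1 hKK, hcancel _ _ ?_⟩
    calc _ = (e * G).map (compRingHom (x + C t * y)) * G'.map (compRingHom x) := by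
            rw [← Matrix.mul_smul, hK, Matrix.map_mul, Matrix.mul_assoc]
      _ = G.map (compRingHom (x + C t * y)) * (e.map (constTerm A) * G').map (compRingHom x) := by
            rw [heG, Matrix.map_mul, Matrix.map_mul, hc, hc, Matrix.mul_assoc]
      _ = _ := by rw [← hGe, Matrix.map_mul, ← Matrix.mul_assoc, ← hK, Matrix.smul_mul]
  have h1 : (1 : A) ∈ quillenIdeal e := htop ▸ trivial
  obtain ⟨g, g', hgg, hgg', hg⟩ := h1 0 X
  refine ⟨g, g', hgg, hgg', ?_⟩
  convert hg using 2
  · refine Matrix.ext fun i j => ?_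
    simp
  · refine Matrix.ext fun i j => ?_
    simp [comp_zero]

end Patching

section QuillenSuslin

open Polynomial

/-- Viewing a polynomial ring in one more variable as a polynomial ring over `k[X]`. -/
noncomputable def polynomialMvPolynomialEquiv (σ k : Type*) [Field k] :
    MvPolynomial σ k[X] ≃+* (MvPolynomial σ k)[X] :=
  ((MvPolynomial.optionEquivRight k σ).symm.trans (MvPolynomial.optionEquivLeft k σ)).toRingEquiv

lemma polynomialMvPolynomialEquiv_C (σ k : Type*) [Field k] (f : k[X]) :
    polynomialMvPolynomialEquiv σ k (MvPolynomial.C f) =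
      f.map (algebraMap k (MvPolynomial σ k)) := by
  have h1 : ∀ a : k, (MvPolynomial.optionEquivRight k σ).symm (MvPolynomial.C (C a)) =
      MvPolynomial.C a := fun a => by
    rw [AlgEquiv.symm_apply_eq, MvPolynomial.optionEquivRight_C]
  have h2 : (MvPolynomial.optionEquivRight k σ).symm (MvPolynomial.C X) =
      MvPolynomial.X none := by
    rw [AlgEquiv.symm_apply_eq, MvPolynomial.optionEquivRight_X_none]
  have : ((polynomialMvPolynomialEquiv σ k :
      MvPolynomial σ k[X] →+* (MvPolynomial σ k)[X]).comp MvPolynomial.C) =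
      mapRingHom (algebraMap k (MvPolynomial σ k)) := by
    refine Polynomial.ringHom_ext (fun a => ?_) ?_
    · change MvPolynomial.optionEquivLeft k σ ((MvPolynomial.optionEquivRight k σ).symm
        (MvPolynomial.C (C a))) = _
      rw [h1, MvPolynomial.optionEquivLeft_C, coe_mapRingHom, map_C]
      rfl
    · change MvPolynomial.optionEquivLeft k σ ((MvPolynomial.optionEquivRight k σ).symm
        (MvPolynomial.C X)) = _
      rw [h2, MvPolynomial.optionEquivLeft_X_none, coe_mapRingHom, map_X]
  exact RingHom.congr_fun this f

attribute [local instance] MvPolynomial.algebraMvPolynomial in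
lemma exists_monic_splitsUpTo {σ k : Type*} [Field k]
    (h : AllIdempotentsSplit (MvPolynomial σ (FractionRing k[X]))) {s : ℕ}
    {e : Matrix (Fin s) (Fin s) (MvPolynomial σ k)[X]} (he : e * e = e) :
    ∃ f : (MvPolynomial σ k)[X], f.Monic ∧ SplitsUpTo f e := by
  let ψ := polynomialMvPolynomialEquiv σ k
  let e' := e.map (ψ.symm : (MvPolynomial σ k)[X] →+* MvPolynomial σ k[X])
  have hinj : Function.Injective (algebraMap (MvPolynomial σ k[X])
      (MvPolynomial σ (FractionRing k[X]))) :=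
    MvPolynomial.map_injective _ (IsFractionRing.injective _ _)
  obtain ⟨_, ⟨f, hf, rfl⟩, hs⟩ := exists_splitsUpTo
    ((nonZeroDivisors k[X]).map (MvPolynomial.C (σ := σ))) hinj (e := e') (h s _ (by
      rw [← Matrix.map_mul, ← Matrix.map_mul, he]))
  have hf0 : f ≠ 0 := nonZeroDivisors.ne_zero hf
  have h1 := (hs.smul (MvPolynomial.C (C f.leadingCoeff⁻¹))).map
    (ψ : MvPolynomial σ k[X] →+* (MvPolynomial σ k)[X])
  have h2 : e'.map (ψ : MvPolynomial σ k[X] →+* (MvPolynomial σ k)[X]) = e := by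
    refine Matrix.ext fun i j => ?_
    simp [e']
  rw [h2] at h1
  refine ⟨_, ?_, h1⟩
  have h3 : (ψ : MvPolynomial σ k[X] →+* (MvPolynomial σ k)[X])
      (MvPolynomial.C (C f.leadingCoeff⁻¹) * MvPolynomial.C f) =
      (C f.leadingCoeff⁻¹ * f).map (algebraMap k (MvPolynomial σ k)) := by
    rw [← map_mul, ← polynomialMvPolynomialEquiv_C]
    rfl
  change Polynomial.Monic ((ψ : MvPolynomial σ k[X] →+* (MvPolynomial σ k)[X])
      (MvPolynomial.C (C f.leadingCoeff⁻¹) * MvPolynomial.C f))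
  rw [h3, mul_comm]
  exact (monic_mul_leadingCoeff_inv hf0).map _

/-- The Quillen–Suslin theorem, for idempotent matrices. -/
theorem allIdempotentsSplit_mvPolynomial (σ : Type*) [Finite σ] (k : Type*) [Field k] :
    AllIdempotentsSplit (MvPolynomial σ k) := by
  revert k
  induction σ using Finite.induction_empty_option with
  | of_equiv φ ih =>
    exact fun k _ => (ih k).of_ringEquiv (MvPolynomial.renameEquiv k φ).toRingEquiv
  | h_empty =>
    exact fun k _ => (allIdempotentsSplit_of_field k).of_ringEquiv
      (MvPolynomial.isEmptyRingEquiv k PEmpty).symm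
  | @h_option σ _ ih =>
    intro k _
    refine AllIdempotentsSplit.of_ringEquiv (R := (MvPolynomial σ k)[X]) ?_
      (MvPolynomial.optionEquivLeft k σ).symm.toRingEquiv
    intro s e he
    have he' : (1 - e) * (1 - e) = 1 - e := by
      rw [mul_sub, mul_one, sub_mul, one_mul, he, sub_self, sub_zero]
    obtain ⟨f, hf, hfe⟩ := exists_monic_splitsUpTo (ih (FractionRing k[X])) he
    obtain ⟨f', hf', hfe'⟩ := exists_monic_splitsUpTo (ih (FractionRing k[X])) he'
    obtain ⟨g, g', hgg, hgg', hg⟩ := exists_conj_constTerm he fun m hm => by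
      have := hm.isPrime
      have : IsNoetherianRing (Localization.AtPrime m) :=
        IsLocalization.isNoetherianRing m.primeCompl _ inferInstance
      exact ⟨idempotentSplits_of_monic (hf.map _) (by rw [← Matrix.map_mul, he]) (hfe.map _),
        idempotentSplits_of_monic (hf'.map _) (by rw [← Matrix.map_mul, he']) (hfe'.map _)⟩
    have h0 : IdempotentSplits (e.map (evalRingHom (0 : MvPolynomial σ k))) :=
      ih k s _ (by rw [← Matrix.map_mul, he])
    refine (h0.map C).of_conj g g' hgg' ?_
    rw [Matrix.map_map]
    calc e = e * (g * g') := by rw [hgg, mul_one]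
      _ = _ := by rw [← Matrix.mul_assoc, hg]; rfl

end QuillenSuslin

section

open CategoryTheory Limits

universe v u v' u'

/-- A cocycle with values in an injective object that vanishes on homology is a coboundary. -/
theorem HomologicalComplex.exists_d_comp_eq_of_homologyι_comp_descOpcycles_eq_zero
    {D : Type u'} [Category.{v'} D] [Abelian D] {ι : Type*} {c : ComplexShape ι}
    (K : HomologicalComplex D c) {i j l : ι} (hj : c.prev i = j) (hl : c.next i = l)
    {A : D} [Injective A] (a : K.X i ⟶ A) (ha : K.d j i ≫ a = 0)
    (h : K.homologyι i ≫ K.descOpcycles a j hj ha = 0) :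
    ∃ g : K.X l ⟶ A, K.d i l ≫ g = a := by
  have hS : (ShortComplex.mk (K.homologyι i) (K.fromOpcycles i l)
      (K.homologyι_comp_fromOpcycles i l)).Exact :=
    ShortComplex.exact_of_f_is_kernel _ (K.homologyIsKernel i l hl)
  refine ⟨hS.descToInjective _ h, ?_⟩
  have := hS.comp_descToInjective _ h
  dsimp at this
  rw [← K.p_fromOpcycles i l, Category.assoc, this, K.p_descOpcycles]

namespace CategoryTheory.ProjectiveResolution

variable {C : Type u} [Category.{v} C] [Abelian C] [HasProjectiveResolutions C]
  {D : Type u'} [Category.{v'} D] [Abelian D] (F : C ⥤ D) [F.Additive]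

/-- The morphism out of a left derived functor induced by a cocycle on a projective resolution. -/
noncomputable def leftDerivedDesc {X : C} (Q : ProjectiveResolution X) (n : ℕ) {A : D}
    (a : F.obj (Q.complex.X n) ⟶ A) (ha : F.map (Q.complex.d (n + 1) n) ≫ a = 0) :
    (F.leftDerived n).obj X ⟶ A :=
  (Q.isoLeftDerivedObj F n).hom ≫
    ((F.mapHomologicalComplex _).obj Q.complex).homologyι n ≫
      ((F.mapHomologicalComplex _).obj Q.complex).descOpcycles a (n + 1) (by simp) ha

theorem leftDerived_map_comp_leftDerivedDesc {X Y : C} {f : X ⟶ Y} {P : ProjectiveResolution X}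
    {Q : ProjectiveResolution Y} (φ : Hom P Q f) (n : ℕ) {A : D}
    (a : F.obj (Q.complex.X n) ⟶ A) (ha : F.map (Q.complex.d (n + 1) n) ≫ a = 0) :
    (F.leftDerived n).map f ≫ Q.leftDerivedDesc F n a ha =
      P.leftDerivedDesc F n (F.map (φ.hom.f n) ≫ a) (by
        rw [← F.map_comp_assoc, ← φ.hom.comm, F.map_comp_assoc, ha, comp_zero]) := by
  have h := isoLeftDerivedObj_hom_naturality f P Q φ.hom
    (φ.hom_f_zero_comp_π_f_zero.trans (by simp)) F n
  dsimp [leftDerivedDesc]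
  rw [reassoc_of% h]
  congr 1
  refine (HomologicalComplex.homologyι_naturality_assoc _ _ _).trans ?_
  congr 1
  rw [← cancel_epi (HomologicalComplex.pOpcycles _ _), HomologicalComplex.p_opcyclesMap_assoc]
  exact (congrArg (_ ≫ ·) (HomologicalComplex.p_descOpcycles ..)).trans
    (HomologicalComplex.p_descOpcycles ..).symm

theorem exists_d_comp_eq_of_leftDerivedDesc_eq_zero {X : C} (Q : ProjectiveResolution X) (n : ℕ)
    {A : D} [Injective A] (a : F.obj (Q.complex.X n) ⟶ A)
    (ha : F.map (Q.complex.d (n + 1) n) ≫ a = 0) (h : Q.leftDerivedDesc F n a ha = 0) :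
    ∃ g : F.obj (Q.complex.X (n - 1)) ⟶ A, F.map (Q.complex.d n (n - 1)) ≫ g = a := by
  refine HomologicalComplex.exists_d_comp_eq_of_homologyι_comp_descOpcycles_eq_zero
    ((F.mapHomologicalComplex _).obj Q.complex) (j := n + 1) (l := n - 1) (by simp) ?_ a ha
    ((cancel_epi (Q.isoLeftDerivedObj F n).hom).1 (h.trans comp_zero.symm))
  cases n <;> simp

end CategoryTheory.ProjectiveResolution

end

section

open CategoryTheory Limits Opposite

universe u

namespace CategoryTheory.ProjectiveResolution

variable {R : Type u} [CommRing R]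

/-- The morphism to the opposite of `R` classifying an element of `Hom(X, N)`. -/
noncomputable def homElement {X N : ModuleCat.{u} R} (a : X ⟶ N) :
    ((linearYoneda R (ModuleCat.{u} R)).obj N).rightOp.obj X ⟶ op (ModuleCat.of R R) :=
  (ModuleCat.ofHom (LinearMap.toSpanSingleton R (X ⟶ N) a)).op

theorem map_comp_homElement {X Y N : ModuleCat.{u} R} (f : X ⟶ Y) (a : Y ⟶ N) :
    ((linearYoneda R (ModuleCat.{u} R)).obj N).rightOp.map f ≫ homElement a =
      homElement (f ≫ a) := by
  apply Quiver.Hom.unop_inj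
  ext
  change f ≫ ((1 : R) • a) = (1 : R) • (f ≫ a)
  simp

theorem homElement_eq_zero {X N : ModuleCat.{u} R} : homElement (0 : X ⟶ N) = 0 := by
  apply Quiver.Hom.unop_inj
  ext
  exact one_smul R (0 : X ⟶ N)

theorem homElement_factor {X Y N : ModuleCat.{u} R} (f : X ⟶ Y) (a : X ⟶ N)
    (g : ((linearYoneda R (ModuleCat.{u} R)).obj N).rightOp.obj Y ⟶ op (ModuleCat.of R R))
    (h : ((linearYoneda R (ModuleCat.{u} R)).obj N).rightOp.map f ≫ g = homElement a) :
    ∃ b : Y ⟶ N, f ≫ b = a :=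
  ⟨g.unop.hom (1 : R), by
    have h1 : f ≫ g.unop.hom (1 : R) = (1 : R) • a := congr(($h).unop.hom (1 : R))
    rwa [one_smul] at h1⟩

/-- The class in (derived functor) `Ext` of a cocycle on a projective resolution. -/
noncomputable def derivedExtClass {X N : ModuleCat.{u} R} (Q : ProjectiveResolution X) {n : ℕ}
    (a : Q.complex.X n ⟶ N) (ha : Q.complex.d (n + 1) n ≫ a = 0) :
    ((Ext R (ModuleCat.{u} R) n).obj (op X)).obj N :=
  (Q.leftDerivedDesc ((linearYoneda R (ModuleCat.{u} R)).obj N).rightOp n (homElement a) (by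
    rw [map_comp_homElement, ha, homElement_eq_zero])).unop.hom (1 : R)

theorem map_derivedExtClass {X Y N : ModuleCat.{u} R} {f : X ⟶ Y} {P : ProjectiveResolution X}
    {Q : ProjectiveResolution Y} (φ : Hom P Q f) {n : ℕ}
    (a : Q.complex.X n ⟶ N) (ha : Q.complex.d (n + 1) n ≫ a = 0) :
    (((Ext R (ModuleCat.{u} R) n).map f.op).app N).hom (Q.derivedExtClass a ha) =
      P.derivedExtClass (φ.hom.f n ≫ a) (by
        rw [← Category.assoc, ← φ.hom.comm, Category.assoc, ha, comp_zero]) := by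
  have := leftDerived_map_comp_leftDerivedDesc
    ((linearYoneda R (ModuleCat.{u} R)).obj N).rightOp φ n (homElement a) (by
      rw [map_comp_homElement, ha, homElement_eq_zero])
  simp only [map_comp_homElement] at this
  exact congr(($this).unop.hom (1 : R))

theorem extMk_eq_zero_of_derivedExtClass_eq_zero {X N : ModuleCat.{u} R}
    (Q : ProjectiveResolution X) {n : ℕ} (a : Q.complex.X n ⟶ N)
    (ha : Q.complex.d (n + 1) n ≫ a = 0) (h : Q.derivedExtClass a ha = 0) :
    Q.extMk a (n + 1) rfl ha = 0 := by
  have : Projective (ModuleCat.of R R) := inferInstance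
  obtain ⟨g, hg⟩ := Q.exists_d_comp_eq_of_leftDerivedDesc_eq_zero
    ((linearYoneda R (ModuleCat.{u} R)).obj N).rightOp n (homElement a) (by
      rw [map_comp_homElement, ha, homElement_eq_zero]) (by
    apply Quiver.Hom.unop_inj
    ext
    exact h)
  obtain ⟨b, hb⟩ := homElement_factor _ _ _ hg
  cases n with
  | zero =>
    obtain rfl : a = 0 := by rw [← hb]; simp
    exact extMk_zero _ _ _
  | succ p => exact (Q.extMk_eq_zero_iff a _ rfl ha p rfl).2 ⟨b, hb⟩

theorem nonempty_hom {X Y : ModuleCat.{u} R} (f : X ⟶ Y) (P : ProjectiveResolution X)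
    (Q : ProjectiveResolution Y) : Nonempty (Hom P Q f) :=
  ⟨⟨lift f P Q, (lift_commutes_zero f P Q).trans (by simp)⟩⟩

end CategoryTheory.ProjectiveResolution

/-- The quotient `R ⧸ I ^ t` as an object of the category of modules. -/
abbrev Ideal.quotPow {R : Type u} [CommRing R] (I : Ideal R) (t : ℕ) : ModuleCat.{u} R :=
  ModuleCat.of R (R ⧸ I ^ t)

/-- The projection `R ⧸ I ^ t' ⟶ R ⧸ I ^ t` for `t ≤ t'`. -/
abbrev Ideal.quotPowMap {R : Type u} [CommRing R] (I : Ideal R) {t t' : ℕ} (h : t ≤ t') :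
    I.quotPow t' ⟶ I.quotPow t :=
  ModuleCat.ofHom (Submodule.mapQ _ _ LinearMap.id (Ideal.pow_le_pow_right h))

/-- Every class in `Extⁱ(R ⧸ I ^ t, N)` is killed by restriction to some `R ⧸ I ^ t'`. -/
def Ideal.ExtIndZero {R : Type u} [CommRing R] (I : Ideal R) (i : ℕ) (N : ModuleCat.{u} R) :
    Prop :=
  ∀ (t : ℕ) (α : Abelian.Ext (I.quotPow t) N i), ∃ (t' : ℕ) (h : t ≤ t'),
    (Abelian.Ext.mk₀ (I.quotPowMap h)).comp α (zero_add i) = 0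

theorem Ideal.ExtIndZero.of_isZero_localCohomology {R : Type} [CommRing R] {I : Ideal R} {i : ℕ}
    {N : ModuleCat.{0} R} (h : IsZero ((localCohomology I i).obj N)) : I.ExtIndZero i N := by
  intro t α
  obtain ⟨a, ha, rfl⟩ :=
    (projectiveResolution (I.quotPow t)).extMk_surjective α (i + 1) rfl
  let G := localCohomology.diagram (localCohomology.idealPowersDiagram I) i
  have hc : IsColimit (((evaluation _ _).obj N).mapCocone (colimit.cocone G)) :=
    isColimitOfPreserves _ (colimit.isColimit G)
  let e : ((Ext R (ModuleCat.{0} R) i).obj (op (I.quotPow t))).obj N :=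
    (projectiveResolution (I.quotPow t)).derivedExtClass a ha
  have : Subsingleton ((localCohomology I i).obj N) := ModuleCat.subsingleton_of_isZero h
  obtain ⟨k, f, g, hfg⟩ := Concrete.isColimit_exists_of_rep_eq
    (G ⋙ (evaluation _ _).obj N) hc (i := op (op t)) (j := op (op t)) e 0
    (Subsingleton.elim (α := (localCohomology I i).obj N) _ _)
  have ht : t ≤ k.unop.unop := f.unop.unop.down.down
  refine ⟨k.unop.unop, ht, ?_⟩
  obtain ⟨φ⟩ := ProjectiveResolution.nonempty_hom (I.quotPowMap ht)
    (projectiveResolution (I.quotPow _)) (projectiveResolution (I.quotPow t))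
  rw [ProjectiveResolution.mk₀_comp_extMk _ _ _ _ φ]
  apply ProjectiveResolution.extMk_eq_zero_of_derivedExtClass_eq_zero
  rw [← ProjectiveResolution.map_derivedExtClass φ a ha]
  exact hfg.trans (map_zero (ModuleCat.Hom.hom ((G ⋙ (evaluation _ _).obj N).map g)))

end

section

open CategoryTheory

universe u

variable {R : Type u} [CommRing R] {I : Ideal R}

theorem Ideal.ExtIndZero.of_shortExact {S : ShortComplex (ModuleCat.{u} R)} (hS : S.ShortExact)
    {i : ℕ} (h₁ : I.ExtIndZero (i + 1) S.X₁) (h₂ : I.ExtIndZero i S.X₂) :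
    I.ExtIndZero i S.X₃ := by
  intro t α
  obtain ⟨t₁, ht₁, h⟩ := h₁ t (α.comp hS.extClass rfl)
  rw [← Abelian.Ext.comp_assoc _ _ _ (zero_add i) rfl (zero_add (i + 1))] at h
  obtain ⟨β, hβ⟩ := Abelian.Ext.covariant_sequence_exact₃ _ hS _ rfl h
  obtain ⟨t₂, ht₂, h'⟩ := h₂ t₁ β
  refine ⟨t₂, ht₁.trans ht₂, ?_⟩
  have hcomp : I.quotPowMap (ht₁.trans ht₂) = I.quotPowMap ht₂ ≫ I.quotPowMap ht₁ := by
    ext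
    rfl
  rw [hcomp, ← Abelian.Ext.mk₀_comp_mk₀_assoc, ← hβ,
    ← Abelian.Ext.comp_assoc _ _ _ (zero_add i) (add_zero i) (by lia), h',
    Abelian.Ext.zero_comp]

theorem Ideal.ExtIndZero.of_exact {N₁ N₂ N₃ : Type u} [AddCommGroup N₁] [AddCommGroup N₂]
    [AddCommGroup N₃] [Module R N₁] [Module R N₂] [Module R N₃] {f : N₁ →ₗ[R] N₂}
    {g : N₂ →ₗ[R] N₃} (hf : Function.Injective f) (hfg : Function.Exact f g)
    (hg : Function.Surjective g) {i : ℕ} (h₁ : I.ExtIndZero (i + 1) (ModuleCat.of R N₁))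
    (h₂ : I.ExtIndZero i (ModuleCat.of R N₂)) : I.ExtIndZero i (ModuleCat.of R N₃) := by
  have hS : (ShortComplex.mk (ModuleCat.ofHom f) (ModuleCat.ofHom g) (by
      ext x; exact hfg.apply_apply_eq_zero x)).ShortExact :=
    { exact := (ShortComplex.ShortExact.moduleCat_exact_iff_function_exact _).2 hfg
      mono_f := (ModuleCat.mono_iff_injective _).2 hf
      epi_g := (ModuleCat.epi_iff_surjective _).2 hg }
  exact .of_shortExact hS h₁ h₂

theorem Ideal.ExtIndZero.of_linearEquiv {N₁ N₂ : Type u} [AddCommGroup N₁] [AddCommGroup N₂]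
    [Module R N₁] [Module R N₂] {i : ℕ} (h : I.ExtIndZero i (ModuleCat.of R N₁))
    (e : N₁ ≃ₗ[R] N₂) : I.ExtIndZero i (ModuleCat.of R N₂) := by
  intro t α
  obtain ⟨t', ht, h'⟩ := h t (α.comp (Abelian.Ext.mk₀ e.toModuleIso.inv) (add_zero i))
  refine ⟨t', ht, ?_⟩
  rw [← Abelian.Ext.comp_mk₀_id α, ← e.toModuleIso.inv_hom_id, ← Abelian.Ext.mk₀_comp_mk₀,
    ← Abelian.Ext.comp_assoc_of_second_deg_zero,
    ← Abelian.Ext.comp_assoc_of_third_deg_zero, h', Abelian.Ext.zero_comp]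

/-- If all degree zero classes die, there is no torsion with respect to powers of `I`. -/
theorem Ideal.ExtIndZero.eq_zero_of_pow_smul {N : Type u} [AddCommGroup N] [Module R N]
    (h : I.ExtIndZero 0 (ModuleCat.of R N)) {s : ℕ} {u : N} (hu : ∀ c ∈ I ^ s, c • u = 0) :
    u = 0 := by
  let f : (R ⧸ I ^ s) →ₗ[R] N := Submodule.liftQ _ (LinearMap.toSpanSingleton R N u) hu
  obtain ⟨t, ht, h0⟩ := h s (Abelian.Ext.mk₀ (ModuleCat.ofHom f))
  rw [Abelian.Ext.mk₀_comp_mk₀, Abelian.Ext.mk₀_eq_zero_iff] at h0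
  have h1 : (1 : R) • u = 0 := congr(($h0).hom (Submodule.Quotient.mk (1 : R)))
  rwa [one_smul] at h1

end

section

open TensorProduct

variable (R M : Type*) [CommRing R] [AddCommGroup M] [Module R M]

/-- The ideal of scalars `c` such that multiplication by `c` on `M` factors through a finite free
module. -/
noncomputable def Module.freeFactorIdeal : Ideal R :=
  (LinearMap.range (dualTensorHom R M M)).comap (LinearMap.toSpanSingleton R (Module.End R M) 1)

variable {R M}

theorem Module.mem_freeFactorIdeal {c : R} :
    c ∈ Module.freeFactorIdeal R M ↔
      c • (1 : Module.End R M) ∈ LinearMap.range (dualTensorHom R M M) :=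
  Iff.rfl

theorem Module.mem_freeFactorIdeal_of_comp {F : Type*} [AddCommGroup F] [Module R F]
    [Module.Free R F] [Module.Finite R F] {c : R} (a : M →ₗ[R] F) (b : F →ₗ[R] M)
    (h : ∀ v, b (a v) = c • v) : c ∈ Module.freeFactorIdeal R M := by
  let e := Module.Free.chooseBasis R F
  refine Module.mem_freeFactorIdeal.2 ⟨∑ i, (e.coord i ∘ₗ a) ⊗ₜ b (e i), ?_⟩
  refine LinearMap.ext fun v => ?_
  simp only [map_sum, LinearMap.sum_apply, dualTensorHom_apply, LinearMap.comp_apply,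
    Module.Basis.coord_apply]
  simp only [← map_smul, ← map_sum, e.sum_repr]
  exact h v

theorem Module.projective_of_freeFactorIdeal_eq_top (h : Module.freeFactorIdeal R M = ⊤) :
    Module.Projective R M := by
  have := (Ideal.eq_top_iff_one _).1 h
  rw [Module.mem_freeFactorIdeal, one_smul] at this
  exact .of_one_mem_range_dualTensorHom this

theorem Module.smul_mem_of_mem_freeFactorIdeal {c : R} (hc : c ∈ Module.freeFactorIdeal R M)
    {J : Ideal R} {x : R} (hx : ∀ r, x * r ∈ J → r ∈ J) {v : M}
    (hv : x • v ∈ J • (⊤ : Submodule R M)) : c • v ∈ J • (⊤ : Submodule R M) := by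
  obtain ⟨T, hT⟩ := Module.mem_freeFactorIdeal.1 hc
  have : c • v = dualTensorHom R M M T v := by rw [hT]; rfl
  rw [this]
  clear this hT
  induction T with
  | zero => simp
  | add S T hS hT => simpa using add_mem hS hT
  | tmul f m =>
    rw [dualTensorHom_apply]
    refine Submodule.smul_mem_smul (hx _ ?_) trivial
    rw [← smul_eq_mul, ← map_smul]
    have h1 := Submodule.mem_map_of_mem (f := f) hv
    rw [Submodule.map_smul''] at h1
    exact (Submodule.smul_mono le_rfl le_top).trans (Ideal.mul_top J).le h1

/-- Where a finitely presented module is locally free of finite rank, some scalar outside the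
prime factors through a finite free module. -/
theorem Module.exists_mem_freeFactorIdeal_of_free_localized [Module.FinitePresentation R M]
    (S : Submonoid R) [Module.Free (Localization S) (LocalizedModule S M)] :
    ∃ c ∈ S, c ∈ Module.freeFactorIdeal R M := by
  classical
  have : Module.Finite (Localization S) (LocalizedModule S M) :=
    Module.Finite.of_isLocalizedModule S (LocalizedModule.mkLinearMap S M)
  let ι := Module.Free.ChooseBasisIndex (Localization S) (LocalizedModule S M)
  let e := (Module.Free.chooseBasis (Localization S)
    (LocalizedModule S M)).equivFun.restrictScalars R
  let m := LocalizedModule.mkLinearMap S M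
  let j : (ι → R) →ₗ[R] (ι → Localization S) :=
    LinearMap.pi fun i => Algebra.linearMap R (Localization S) ∘ₗ LinearMap.proj i
  have hj : IsLocalizedModule S j := inferInstance
  obtain ⟨a, s, ha⟩ := Module.FinitePresentation.exists_lift_of_isLocalizedModule S j
    (e.toLinearMap ∘ₗ m)
  obtain ⟨b, s', hb⟩ := Module.FinitePresentation.exists_lift_of_isLocalizedModule S m
    (e.symm.toLinearMap ∘ₗ j)
  have h : m ∘ₗ (b ∘ₗ a) = m ∘ₗ ((s' * s) • LinearMap.id) := by
    ext v
    have h1 : j (a v) = s • e (m v) := congr($ha v)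
    have h2 : m (b (a v)) = s' • e.symm (j (a v)) := congr($hb (a v))
    simp only [Submonoid.smul_def] at h1 h2 ⊢
    simp [h2, h1, mul_smul]
  obtain ⟨t, ht⟩ := Module.Finite.exists_smul_of_comp_eq_of_isLocalizedModule S m _ _ h
  refine ⟨(t * (s' * s) : S), (t * (s' * s)).2,
    Module.mem_freeFactorIdeal_of_comp a ((t : R) • b) fun v => ?_⟩
  have h3 := congr($ht v)
  simp only [Submonoid.smul_def] at h3
  simpa [mul_smul] using h3

end

section

universe u

variable {R M : Type u} [CommRing R] [AddCommGroup M] [Module R M]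

/-- The ideal generated by the first `j` members of a sequence. -/
def Ideal.initialSpan (x : ℕ → R) (j : ℕ) : Ideal R :=
  Ideal.span (x '' Set.Iio j)

theorem Ideal.initialSpan_zero (x : ℕ → R) : Ideal.initialSpan x 0 = ⊥ := by
  simp [Ideal.initialSpan]

theorem Ideal.initialSpan_succ (x : ℕ → R) (j : ℕ) :
    Ideal.initialSpan x (j + 1) = Ideal.initialSpan x j ⊔ Ideal.span {x j} := by
  rw [Ideal.initialSpan, Ideal.initialSpan, ← Ideal.span_union, Set.union_singleton,
    ← Set.image_insert_eq, Set.Iio_insert, Set.Iio_add_one_eq_Iic]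

theorem Ideal.mem_initialSpan {x : ℕ → R} {i j : ℕ} (h : i < j) : x i ∈ Ideal.initialSpan x j :=
  Ideal.subset_span ⟨i, h, rfl⟩

theorem Ideal.exists_add_smul_of_mem_initialSpan_succ_smul {x : ℕ → R} {j : ℕ} {v : M}
    (hv : v ∈ Ideal.initialSpan x (j + 1) • (⊤ : Submodule R M)) :
    ∃ u ∈ Ideal.initialSpan x j • (⊤ : Submodule R M), ∃ z : M, v = u + x j • z := by
  rw [Ideal.initialSpan_succ, Submodule.sup_smul, Submodule.mem_sup] at hv
  obtain ⟨u, hu, z, hz, rfl⟩ := hv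
  rw [Submodule.ideal_span_singleton_smul] at hz
  obtain ⟨z, -, rfl⟩ := hz
  exact ⟨u, hu, z, rfl⟩

theorem Ideal.ExtIndZero.mod_succ {I : Ideal R} {x : ℕ → R} {j : ℕ}
    (hreg : ∀ v : M, x j • v ∈ Ideal.initialSpan x j • (⊤ : Submodule R M) →
      v ∈ Ideal.initialSpan x j • (⊤ : Submodule R M)) {i : ℕ}
    (h₁ : I.ExtIndZero (i + 1)
      (ModuleCat.of R (M ⧸ (Ideal.initialSpan x j • ⊤ : Submodule R M))))
    (h₂ : I.ExtIndZero i (ModuleCat.of R (M ⧸ (Ideal.initialSpan x j • ⊤ : Submodule R M)))) :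
    I.ExtIndZero i
      (ModuleCat.of R (M ⧸ (Ideal.initialSpan x (j + 1) • ⊤ : Submodule R M))) := by
  have hle : (Ideal.initialSpan x j • ⊤ : Submodule R M) ≤ Ideal.initialSpan x (j + 1) • ⊤ :=
    Submodule.smul_mono (Ideal.initialSpan_succ x j ▸ le_sup_left) le_rfl
  refine Ideal.ExtIndZero.of_exact (f := LinearMap.lsmul R _ (x j)) (g := Submodule.factor hle)
    ?_ ?_ (Submodule.factor_surjective hle) h₁ h₂
  · refine (injective_iff_map_eq_zero _).2 fun v hv => ?_
    obtain ⟨v, rfl⟩ := Submodule.Quotient.mk_surjective _ v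
    rw [LinearMap.lsmul_apply, ← Submodule.Quotient.mk_smul, Submodule.Quotient.mk_eq_zero] at hv
    exact (Submodule.Quotient.mk_eq_zero _).2 (hreg v hv)
  · intro v
    obtain ⟨v, rfl⟩ := Submodule.Quotient.mk_surjective _ v
    constructor
    · intro hv
      obtain ⟨u, hu, z, rfl⟩ := Ideal.exists_add_smul_of_mem_initialSpan_succ_smul
        ((Submodule.Quotient.mk_eq_zero _).1 hv)
      refine ⟨Submodule.Quotient.mk z, ?_⟩
      rw [Submodule.Quotient.mk_add, (Submodule.Quotient.mk_eq_zero _).2 hu, zero_add]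
      rfl
    · rintro ⟨z, hz⟩
      obtain ⟨z, rfl⟩ := Submodule.Quotient.mk_surjective _ z
      rw [← hz]
      refine (Submodule.Quotient.mk_eq_zero _).2 (Submodule.smul_mem_smul ?_ trivial)
      exact Ideal.mem_initialSpan (Nat.lt_succ_self j)

/-- A sequence that is weakly regular on `R` is weakly regular on a module of large depth that is
free away from the ideal generated by the sequence. -/
theorem Module.isWeaklyRegular_of_extIndZero {x : ℕ → R} {d : ℕ} {I : Ideal R} {s : ℕ}
    (hI : I ^ s ≤ Module.freeFactorIdeal R M)
    (hx : ∀ j < d, ∀ r, x j * r ∈ Ideal.initialSpan x j → r ∈ Ideal.initialSpan x j)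
    (hExt : ∀ i < d, I.ExtIndZero i (ModuleCat.of R M)) {j : ℕ} (hj : j < d) {v : M}
    (hv : x j • v ∈ Ideal.initialSpan x j • (⊤ : Submodule R M)) :
    v ∈ Ideal.initialSpan x j • (⊤ : Submodule R M) := by
  have key : ∀ j < d, I.ExtIndZero 0
        (ModuleCat.of R (M ⧸ (Ideal.initialSpan x j • ⊤ : Submodule R M))) →
      ∀ v : M, x j • v ∈ Ideal.initialSpan x j • (⊤ : Submodule R M) →
        v ∈ Ideal.initialSpan x j • (⊤ : Submodule R M) := by
    intro j hj h0 v hv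
    rw [← Submodule.Quotient.mk_eq_zero]
    refine h0.eq_zero_of_pow_smul (s := s) fun c hc => ?_
    rw [← Submodule.Quotient.mk_smul, Submodule.Quotient.mk_eq_zero]
    exact Module.smul_mem_of_mem_freeFactorIdeal (hI hc) (hx j hj) hv
  have hquot : ∀ j, ∀ i, i + j < d → I.ExtIndZero i
      (ModuleCat.of R (M ⧸ (Ideal.initialSpan x j • ⊤ : Submodule R M))) := by
    intro j
    induction j with
    | zero =>
      intro i hi
      have hbot : (Ideal.initialSpan x 0 • ⊤ : Submodule R M) = ⊥ := by
        rw [Ideal.initialSpan_zero, Submodule.bot_smul]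
      exact (hExt i hi).of_linearEquiv (Submodule.quotEquivOfEqBot _ hbot).symm
    | succ j ih =>
      intro i hi
      exact Ideal.ExtIndZero.mod_succ (key j (by lia) (ih 0 (by lia))) (ih (i + 1) (by lia))
        (ih i (by lia))
  exact key j hj (hquot j 0 (by lia)) v hv

end

section

universe u

variable {R M : Type u} [CommRing R] [AddCommGroup M] [Module R M]

/-- A finite module admits a map from a free module that is an isomorphism modulo a given maximal
ideal. -/
theorem Module.exists_linearMap_bijective_mod [Module.Finite R M] (m : Ideal R) [m.IsMaximal] :
    ∃ (r : ℕ) (φ : (Fin r → R) →ₗ[R] M),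
      LinearMap.range φ ⊔ m • ⊤ = ⊤ ∧
        ∀ w, φ w ∈ m • (⊤ : Submodule R M) → w ∈ m • (⊤ : Submodule R (Fin r → R)) := by
  let := Ideal.Quotient.field m
  let V := M ⧸ (m • ⊤ : Submodule R M)
  have : Module.Finite (R ⧸ m) V := Module.Finite.of_restrictScalars_finite R _ _
  let b := Module.finBasis (R ⧸ m) V
  choose v hv using fun i => Submodule.Quotient.mk_surjective _ (b i)
  have hφ : ∀ w : Fin (Module.finrank (R ⧸ m) V) → R,
      (Submodule.Quotient.mk (Fintype.linearCombination R v w) : V) =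
        ∑ i, (Ideal.Quotient.mk m (w i)) • b i := by
    intro w
    rw [Fintype.linearCombination_apply, ← Submodule.mkQ_apply, map_sum]
    refine Finset.sum_congr rfl fun i _ => ?_
    rw [map_smul, Submodule.mkQ_apply, hv]
    rfl
  refine ⟨_, Fintype.linearCombination R v, ?_, fun w hw => ?_⟩
  · refine eq_top_iff.2 fun y _ => ?_
    choose w hw using fun i => Ideal.Quotient.mk_surjective (b.repr (Submodule.Quotient.mk y) i)
    have h1 : (Submodule.Quotient.mk (Fintype.linearCombination R v w) : V) =
        Submodule.Quotient.mk y := by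
      rw [hφ]
      simp only [hw]
      exact b.sum_repr _
    rw [eq_comm, Submodule.Quotient.eq] at h1
    rw [← add_sub_cancel (Fintype.linearCombination R v w) y]
    exact Submodule.add_mem_sup ⟨w, rfl⟩ h1
  · rw [← Submodule.Quotient.mk_eq_zero, hφ] at hw
    have h1 := Fintype.linearIndependent_iff.1 b.linearIndependent _ hw
    rw [pi_eq_sum_univ' w]
    exact Submodule.sum_mem _ fun i _ =>
      Submodule.smul_mem_smul (Ideal.Quotient.eq_zero_iff_mem.1 (h1 i)) trivial

/-- A finite module on which the generators of a maximal ideal `m` form a weakly regular sequence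
is free at `m`. -/
theorem Module.exists_mem_freeFactorIdeal_of_isWeaklyRegular [IsDomain R] [IsNoetherianRing R]
    [Module.Finite R M] {x : ℕ → R} {d : ℕ} [hm : (Ideal.initialSpan x d).IsMaximal]
    (hreg : ∀ j < d, ∀ v : M, x j • v ∈ Ideal.initialSpan x j • (⊤ : Submodule R M) →
      v ∈ Ideal.initialSpan x j • (⊤ : Submodule R M)) :
    ∃ c ∈ Module.freeFactorIdeal R M, c - 1 ∈ Ideal.initialSpan x d := by
  obtain ⟨r, φ, htop, hker⟩ := Module.exists_linearMap_bijective_mod (M := M)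
    (Ideal.initialSpan x d)
  obtain ⟨c₀, hc₀, hrange⟩ := Submodule.exists_sub_one_mem_and_smul_le_of_fg_of_le_sup
    (I := Ideal.initialSpan x d) (N := LinearMap.range φ) (N' := ⊤) (P := ⊤)
    Module.Finite.fg_top le_rfl htop.ge
  have hrange' : ∀ v : M, ∃ w, φ w = c₀ • v := fun v =>
    hrange (Submodule.smul_mem_pointwise_smul v c₀ ⊤ trivial)
  have hlift : ∀ (J : Ideal R) (v : M), v ∈ J • (⊤ : Submodule R M) →
      ∃ w ∈ J • (⊤ : Submodule R (Fin r → R)), φ w = c₀ • v := by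
    intro J v hv
    induction hv using Submodule.smul_induction_on' with
    | smul a ha v _ =>
      obtain ⟨w, hw⟩ := hrange' v
      exact ⟨a • w, Submodule.smul_mem_smul ha trivial, by rw [map_smul, hw, smul_comm]⟩
    | add v₁ _ v₂ _ h₁ h₂ =>
      obtain ⟨w₁, hw₁, h₁⟩ := h₁
      obtain ⟨w₂, hw₂, h₂⟩ := h₂
      exact ⟨w₁ + w₂, add_mem hw₁ hw₂, by rw [map_add, h₁, h₂, smul_add]⟩
  have hdesc : ∀ j ≤ d, ∃ c : R, c - 1 ∈ Ideal.initialSpan x d ∧ ∀ w ∈ LinearMap.ker φ,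
      c • w ∈ Ideal.initialSpan x j • (⊤ : Submodule R (Fin r → R)) := by
    intro j hj
    induction hj using Nat.decreasingInduction with
    | self => exact ⟨1, by simp, fun w hw => by
        rw [one_smul]
        exact hker w (by rw [LinearMap.mem_ker.1 hw]; exact zero_mem _)⟩
    | of_succ j hj ih =>
      obtain ⟨c, hc, h⟩ := ih
      have hcc : c₀ * c - 1 ∈ Ideal.initialSpan x d := by
        have : c₀ * c - 1 = c₀ * (c - 1) + (c₀ - 1) := by ring
        rw [this]
        exact add_mem (Ideal.mul_mem_left _ _ hc) hc₀
      have hK : LinearMap.ker φ ≤ Ideal.initialSpan x j • ⊤ ⊔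
          Ideal.initialSpan x d • LinearMap.ker φ := by
        intro w hw
        obtain ⟨u, hu, z, huz⟩ := Ideal.exists_add_smul_of_mem_initialSpan_succ_smul (h w hw)
        have hz : φ z ∈ Ideal.initialSpan x j • (⊤ : Submodule R M) := by
          refine hreg j hj _ ?_
          have h1 : φ u + x j • φ z = 0 := by
            rw [← map_smul, ← map_add, ← huz, map_smul, LinearMap.mem_ker.1 hw, smul_zero]
          rw [eq_neg_of_add_eq_zero_right h1]
          refine neg_mem (Submodule.smul_mono le_rfl le_top (?_ : _ ∈ _ • Submodule.map φ ⊤))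
          rw [← Submodule.map_smul'']
          exact Submodule.mem_map_of_mem hu
        obtain ⟨y, hy, hyz⟩ := hlift _ _ hz
        have hk : c₀ • z - y ∈ LinearMap.ker φ := by
          rw [LinearMap.mem_ker, map_sub, map_smul, hyz, sub_self]
        have : w = (c₀ • u + x j • y) + (x j • (c₀ • z - y) - (c₀ * c - 1) • w) := by
          rw [sub_smul, mul_smul, huz]
          module
        rw [this]
        refine Submodule.add_mem_sup (add_mem (Submodule.smul_mem _ _ hu)
          (Submodule.smul_mem _ _ hy)) (sub_mem ?_ ?_)
        · exact Submodule.smul_mem_smul (Ideal.mem_initialSpan hj) hk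
        · exact Submodule.smul_mem_smul hcc hw
      obtain ⟨e, he, hle⟩ := Submodule.exists_sub_one_mem_and_smul_le_of_fg_of_le_sup
        (IsNoetherian.noetherian (LinearMap.ker φ)) le_rfl hK
      exact ⟨e, he, fun w hw => hle (Submodule.smul_mem_pointwise_smul w e _ hw)⟩
  obtain ⟨c, hc, h⟩ := hdesc 0 (Nat.zero_le d)
  have hc0 : c ≠ 0 := by
    rintro rfl
    refine hm.ne_top ((Ideal.eq_top_iff_one _).2 ?_)
    simpa using hc
  have hinj : Function.Injective φ := by
    refine LinearMap.ker_eq_bot.1 ((Submodule.eq_bot_iff _).2 fun w hw => ?_)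
    have h1 := h w hw
    rw [Ideal.initialSpan_zero, Submodule.bot_smul, Submodule.mem_bot] at h1
    exact (smul_eq_zero.1 h1).resolve_left hc0
  refine ⟨c₀, Module.mem_freeFactorIdeal_of_comp
    ((LinearEquiv.ofInjective φ hinj).symm.toLinearMap ∘ₗ
      (LinearMap.lsmul R M c₀).codRestrict (LinearMap.range φ) hrange') φ fun v => ?_, hc₀⟩
  exact congr(($((LinearEquiv.ofInjective φ hinj).apply_symm_apply
    ⟨c₀ • v, hrange' v⟩) : M))

/-- A finite module over a Noetherian domain that is locally free away from a maximal ideal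
generated by a weakly regular sequence of length `d`, and whose local cohomology vanishes in
degrees below `d`, is projective. -/
theorem Module.projective_of_extIndZero [IsDomain R] [IsNoetherianRing R]
    [Module.Finite R M] {x : ℕ → R} {d : ℕ} [hm : (Ideal.initialSpan x d).IsMaximal]
    (hx : ∀ j < d, ∀ r, x j * r ∈ Ideal.initialSpan x j → r ∈ Ideal.initialSpan x j)
    (hfree : ∀ p : Ideal R, p.IsPrime → ¬ Ideal.initialSpan x d ≤ p →
      ¬ Module.freeFactorIdeal R M ≤ p)
    (hExt : ∀ i < d, (Ideal.initialSpan x d).ExtIndZero i (ModuleCat.of R M)) :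
    Module.Projective R M := by
  have hrad : Ideal.initialSpan x d ≤ (Module.freeFactorIdeal R M).radical := by
    rw [Ideal.radical_eq_sInf]
    exact le_sInf fun p hp => not_not.1 fun h => hfree p hp.2 h hp.1
  obtain ⟨s, hs⟩ := Ideal.exists_pow_le_of_le_radical_of_fg hrad (IsNoetherian.noetherian _)
  obtain ⟨c, hc, hc1⟩ := Module.exists_mem_freeFactorIdeal_of_isWeaklyRegular (M := M) (x := x)
    (d := d) fun j hj v => Module.isWeaklyRegular_of_extIndZero hs hx hExt hj
  refine Module.projective_of_freeFactorIdeal_eq_top (not_not.1 fun hne => ?_)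
  obtain ⟨q, hq, hle⟩ := Ideal.exists_le_maximal _ hne
  have hmq : Ideal.initialSpan x d ≤ q := not_not.1 fun h => hfree q hq.isPrime h hle
  refine hq.ne_top ((Ideal.eq_top_iff_one _).2 ?_)
  simpa using sub_mem (hle hc) (hmq hc1)

end

section

namespace MvPolynomial

variable (k : Type*) [Field k] (d : ℕ)

/-- The variables of a polynomial ring in `d` variables, extended by zero to a sequence. -/
noncomputable def variableSeq (i : ℕ) : MvPolynomial (Fin d) k :=
  if h : i < d then X ⟨i, h⟩ else 0

variable {k d}

theorem initialSpan_variableSeq {j : ℕ} (hj : j ≤ d) :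
    Ideal.initialSpan (variableSeq k d) j = Ideal.span (X '' {i : Fin d | (i : ℕ) < j}) := by
  refine congrArg Ideal.span (Set.ext fun p => ⟨?_, ?_⟩)
  · rintro ⟨i, hi, rfl⟩
    have hi' : i < j := hi
    exact ⟨⟨i, hi'.trans_le hj⟩, hi', by simp [variableSeq, hi'.trans_le hj]⟩
  · rintro ⟨i, hi, rfl⟩
    exact ⟨i, hi, by simp [variableSeq]⟩

theorem initialSpan_variableSeq_self :
    Ideal.initialSpan (variableSeq k d) d = Ideal.span (Set.range X) := by
  rw [initialSpan_variableSeq le_rfl, ← Set.image_univ]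
  congr
  ext i
  simp

theorem mem_initialSpan_of_variableSeq_mul_mem {j : ℕ} (hj : j < d) (r : MvPolynomial (Fin d) k)
    (h : variableSeq k d j * r ∈ Ideal.initialSpan (variableSeq k d) j) :
    r ∈ Ideal.initialSpan (variableSeq k d) j := by
  rw [initialSpan_variableSeq hj.le, mem_ideal_span_X_image] at h ⊢
  intro m hm
  obtain ⟨i, hi, hne⟩ := h (Finsupp.single ⟨j, hj⟩ 1 + m) (by
    rw [mem_support_iff] at hm ⊢
    rwa [variableSeq, dif_pos hj, coeff_X_mul])
  refine ⟨i, hi, fun h0 => hne ?_⟩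
  have : (⟨j, hj⟩ : Fin d) ≠ i := fun h => hi.ne (congrArg Fin.val h).symm
  simp [h0, this]

theorem isMaximal_span_range_X (σ : Type*) :
    (Ideal.span (Set.range X) : Ideal (MvPolynomial σ k)).IsMaximal := by
  have : (Ideal.span (Set.range X) : Ideal (MvPolynomial σ k)) =
      RingHom.ker (constantCoeff (σ := σ) (R := k)) := by
    ext p
    rw [← Set.image_univ, mem_ideal_span_X_image, RingHom.mem_ker, constantCoeff_eq,
      ← notMem_support_iff]
    refine ⟨fun h h0 => ?_, fun h m hm => ?_⟩
    · obtain ⟨i, -, hi⟩ := h 0 h0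
      exact hi rfl
    · by_contra! hc
      refine h ?_
      rwa [show (0 : σ →₀ ℕ) = m from Finsupp.ext fun i => (hc i trivial).symm]
  rw [this]
  exact RingHom.ker_isMaximal_of_surjective _ fun a => ⟨C a, constantCoeff_C _ a⟩

end MvPolynomial

end

open MvPolynomial CategoryTheory

/-- Horrocks: a vector bundle `E` on `P^n` (`n ≥ 2`) with vanishing
intermediate cohomology `Hⁱ_*(E) = 0` for `1 ≤ i ≤ n−1` splits as a direct sum of
line bundles.  Encoded algebraically: `M = H⁰_*(E)` is a finitely generated module
over `R = k[z₀,…,z_n]`, free of finite rank after localizing at every prime not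
containing the irrelevant ideal `m` (`E` is a vector bundle); being a saturated
module of sections means `H⁰_m(M) = H¹_m(M) = 0`, and `Hⁱ_*(E) ≅ H^{i+1}_m(M)`
vanishes for `1 ≤ i ≤ n−1`.  The conclusion is that `M` is free, i.e. the sheaf is a
direct sum of line bundles `⊕ O(c_j)`. -/
theorem horrocks_criterion (k : Type) [Field k] (n : ℕ) (hn : 2 ≤ n)
    (M : Type) [AddCommGroup M] [Module (MvPolynomial (Fin (n + 1)) k) M]
    [Module.Finite (MvPolynomial (Fin (n + 1)) k) M]
    (hvb : ∀ (p : Ideal (MvPolynomial (Fin (n + 1)) k)) (hp : p.IsPrime),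
      ¬ (Ideal.span (Set.range X) : Ideal (MvPolynomial (Fin (n + 1)) k)) ≤ p →
      Module.Free (Localization (@Ideal.primeCompl _ _ p hp))
        (LocalizedModule (@Ideal.primeCompl _ _ p hp) M))
    (hsat : ∀ i ≤ 1, Limits.IsZero
      ((localCohomology (Ideal.span (Set.range X)) i).obj
        (ModuleCat.of (MvPolynomial (Fin (n + 1)) k) M)))
    (hvanish : ∀ i, 1 ≤ i → i ≤ n - 1 → Limits.IsZero
      ((localCohomology (Ideal.span (Set.range X)) (i + 1)).obj
        (ModuleCat.of (MvPolynomial (Fin (n + 1)) k) M))) :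
    Module.Free (MvPolynomial (Fin (n + 1)) k) M := by
  have := isMaximal_span_range_X (k := k) (Fin (n + 1))
  rw [← initialSpan_variableSeq_self] at hvb hsat hvanish this
  have : Module.Projective (MvPolynomial (Fin (n + 1)) k) M := by
    refine Module.projective_of_extIndZero (x := variableSeq k (n + 1)) (d := n + 1)
      (fun j hj => mem_initialSpan_of_variableSeq_mul_mem hj) (fun p hp hmp hle => ?_)
      fun i hi => ?_
    · have := hvb p hp hmp
      have := Module.finitePresentation_of_finite (MvPolynomial (Fin (n + 1)) k) M
      obtain ⟨c, hc, hc'⟩ := Module.exists_mem_freeFactorIdeal_of_free_localized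
        (R := MvPolynomial (Fin (n + 1)) k) (M := M) p.primeCompl
      exact hc (hle hc')
    · refine Ideal.ExtIndZero.of_isZero_localCohomology ?_
      obtain hi' | ⟨i, rfl⟩ : i ≤ 1 ∨ ∃ l, i = l + 1 := by
        cases i
        · exact .inl zero_le_one
        · exact .inr ⟨_, rfl⟩
      · exact hsat i hi'
      · obtain rfl | hi0 := Nat.eq_zero_or_pos i
        · exact hsat 1 le_rfl
        · exact hvanish i hi0 (by lia)
  exact (allIdempotentsSplit_mvPolynomial (Fin (n + 1)) k).free M
end

section
/- A codimension 2 closed subscheme of P^n is standard determinantal if and only if it is arithmetically Cohen–Macaulay (Hilbert–Burch). -/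
/-- The signed maximal minors of a `t × (t+1)` matrix. -/
def Matrix.signedMinor {R : Type*} [CommRing R] {t : ℕ} (A : Matrix (Fin t) (Fin (t + 1)) R)
    (j : Fin (t + 1)) : R :=
  (-1) ^ (j : ℕ) * (A.submatrix id j.succAbove).det

section Minors

variable {R : Type*} [CommRing R] {t : ℕ} (A : Matrix (Fin t) (Fin (t + 1)) R)

open Matrix

lemma Matrix.span_signedMinor :
    Ideal.span (Set.range A.signedMinor) =
      Ideal.span {d | ∃ j : Fin (t + 1), d = (A.submatrix id j.succAbove).det} := by
  have hunit (j : Fin (t + 1)) : (-1 : R) ^ (j : ℕ) * (-1) ^ (j : ℕ) = 1 := by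
    rw [← mul_pow]; simp
  apply le_antisymm
  · rw [Ideal.span_le]
    rintro _ ⟨j, rfl⟩
    exact Ideal.mul_mem_left _ _ (Ideal.subset_span ⟨j, rfl⟩)
  · rw [Ideal.span_le]
    rintro _ ⟨j, rfl⟩
    have : (A.submatrix id j.succAbove).det = (-1) ^ (j : ℕ) * A.signedMinor j := by
      rw [Matrix.signedMinor, ← mul_assoc, hunit, one_mul]
    rw [this]
    exact Ideal.mul_mem_left _ _ (Ideal.subset_span ⟨j, rfl⟩)

lemma Matrix.mulVec_signedMinor : A *ᵥ A.signedMinor = 0 := by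
  funext i
  set B : Matrix (Fin (t + 1)) (Fin (t + 1)) R := A.submatrix (Fin.cases i id) id with hB
  have h : B.det = 0 := Matrix.det_zero_of_row_eq (Fin.succ_ne_zero i).symm rfl
  rw [Matrix.det_succ_row_zero] at h
  rw [Pi.zero_apply, ← h, Matrix.mulVec, dotProduct]
  refine Finset.sum_congr rfl fun j _ => ?_
  change A i j * ((-1) ^ (j : ℕ) * (A.submatrix id j.succAbove).det) =
    (-1) ^ (j : ℕ) * A i j * (A.submatrix id j.succAbove).det
  ring

lemma Matrix.vecMul_dotProduct_signedMinor (v : Fin t → R) :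
    (v ᵥ* A) ⬝ᵥ A.signedMinor = 0 := by
  rw [← Matrix.dotProduct_mulVec, A.mulVec_signedMinor, dotProduct_zero]

lemma Matrix.signedMinor_dvd_iff (r : R) (j : Fin (t + 1)) :
    A.signedMinor j ∣ r ↔ (A.submatrix id j.succAbove).det ∣ r := by
  rw [Matrix.signedMinor, IsUnit.mul_left_dvd ((isUnit_one.neg).pow _)]

lemma Matrix.vecMul_submatrix_succAbove (v : Fin t → R) (j : Fin (t + 1)) :
    v ᵥ* A.submatrix id j.succAbove = fun i => (v ᵥ* A) (j.succAbove i) := rfl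

end Minors

section Domain

variable {R : Type*} [CommRing R] [IsDomain R] {t : ℕ} {A : Matrix (Fin t) (Fin (t + 1)) R}

open Matrix

lemma Matrix.vecMul_injective_of_signedMinor_ne_zero {j : Fin (t + 1)} (hj : A.signedMinor j ≠ 0) :
    Function.Injective fun v : Fin t → R => v ᵥ* A := by
  have hdet : (A.submatrix id j.succAbove).det ≠ 0 := fun h => hj (by simp [Matrix.signedMinor, h])
  intro v w hvw
  have h0 : (v - w) ᵥ* A.submatrix id j.succAbove = 0 := by
    rw [Matrix.vecMul_submatrix_succAbove, Matrix.sub_vecMul]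
    have : v ᵥ* A = w ᵥ* A := hvw
    rw [this, sub_self]; rfl
  exact sub_eq_zero.mp (Matrix.eq_zero_of_vecMul_eq_zero hdet h0)

/-- Cramer's rule: a maximal minor times a vector orthogonal to the vector of signed maximal minors
lies in the row space. -/
lemma Matrix.exists_vecMul_eq_signedMinor_smul {w : Fin (t + 1) → R}
    (hw : w ⬝ᵥ A.signedMinor = 0) (j : Fin (t + 1)) :
    ∃ v : Fin t → R, v ᵥ* A = A.signedMinor j • w := by
  by_cases hj : A.signedMinor j = 0
  · exact ⟨0, by simp [hj]⟩
  let B := A.submatrix id j.succAbove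
  let v : Fin t → R := (-1 : R) ^ (j : ℕ) • ((fun i => w (j.succAbove i)) ᵥ* B.adjugate)
  refine ⟨v, ?_⟩
  have hv : v ᵥ* B = A.signedMinor j • fun i => w (j.succAbove i) := by
    simp only [v, Matrix.smul_vecMul, Matrix.vecMul_vecMul, Matrix.adjugate_mul,
      Matrix.vecMul_smul, Matrix.vecMul_one, Matrix.signedMinor, B, smul_smul]
  set u := v ᵥ* A - A.signedMinor j • w with hu
  have hu0 (i : Fin t) : u (j.succAbove i) = 0 := by
    have := congrFun hv i
    rw [Matrix.vecMul_submatrix_succAbove] at this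
    simp only [hu, Pi.sub_apply, Pi.smul_apply] at this ⊢
    rw [this, sub_self]
  have hdot : u ⬝ᵥ A.signedMinor = 0 := by
    rw [hu, sub_dotProduct, A.vecMul_dotProduct_signedMinor, smul_dotProduct, hw]; simp
  have huj : u j = 0 := by
    rw [dotProduct, Fin.sum_univ_succAbove _ j] at hdot
    simpa [hu0, hj] using hdot
  rw [← sub_eq_zero, ← hu]
  funext i
  rcases Fin.eq_self_or_eq_succAbove j i with rfl | ⟨i, rfl⟩
  · exact huj
  · exact hu0 i

variable [UniqueFactorizationMonoid R]

lemma dvd_of_forall_dvd_mul_of_no_common_prime {ι : Type*} {f : ι → R}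
    (hf : ∀ p, Prime p → ∃ i, ¬ p ∣ f i) {a b : R} (ha : a ≠ 0) (h : ∀ i, a ∣ f i * b) : a ∣ b := by
  induction a using UniqueFactorizationMonoid.induction_on_prime generalizing b with
  | h₁ => exact absurd rfl ha
  | h₂ x hx => exact hx.dvd
  | h₃ a p ha0 hp ih =>
    obtain ⟨i, hi⟩ := hf p hp
    obtain ⟨b', rfl⟩ : p ∣ b :=
      (hp.dvd_or_dvd ((Dvd.intro _ rfl).trans (h i))).resolve_left hi
    refine mul_dvd_mul_left p (ih ha0 fun i => ?_)
    have := h i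
    rw [mul_left_comm] at this
    exact (mul_dvd_mul_iff_left hp.ne_zero).mp this

lemma Matrix.exists_vecMul_eq_of_dotProduct_signedMinor_eq_zero
    (hf : ∀ p, Prime p → ∃ i, ¬ p ∣ A.signedMinor i) {j : Fin (t + 1)} (hj : A.signedMinor j ≠ 0)
    {w : Fin (t + 1) → R} (hw : w ⬝ᵥ A.signedMinor = 0) : ∃ v : Fin t → R, v ᵥ* A = w := by
  choose v hv using A.exists_vecMul_eq_signedMinor_smul hw
  have hcomm (i : Fin (t + 1)) : A.signedMinor i • v j = A.signedMinor j • v i := by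
    apply Matrix.vecMul_injective_of_signedMinor_ne_zero hj
    simp only [Matrix.smul_vecMul, hv, smul_smul, mul_comm]
  have hdvd (l : Fin t) : A.signedMinor j ∣ v j l :=
    dvd_of_forall_dvd_mul_of_no_common_prime hf hj fun i => ⟨v i l, congrFun (hcomm i) l⟩
  choose u hu using hdvd
  refine ⟨u, smul_right_injective _ hj ?_⟩
  change A.signedMinor j • (u ᵥ* A) = A.signedMinor j • w
  rw [← Matrix.smul_vecMul, ← hv j]
  congr 1
  funext l
  exact (hu l).symm

/-- The Hilbert–Burch structure theorem for vectors without common prime factor: if the rows of `A`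
generate the syzygies of `f`, then `f` is, up to a unit, the vector of signed maximal minors. -/
lemma Matrix.exists_isUnit_signedMinor_eq {f : Fin (t + 1) → R}
    (hf : ∀ p, Prime p → ∃ i, ¬ p ∣ f i) (hf0 : f ≠ 0)
    (hsyz : ∀ w : Fin (t + 1) → R, w ⬝ᵥ f = 0 → ∃ v : Fin t → R, v ᵥ* A = w) :
    ∃ u, IsUnit u ∧ ∀ i, A.signedMinor i = u * f i := by
  have hrow (j i : Fin (t + 1)) :
      ∃ v : Fin t → R, v ᵥ* A = f j • Pi.single i 1 - f i • Pi.single j 1 :=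
    hsyz _ (by simp [sub_dotProduct, mul_comm])
  have hpow (j : Fin (t + 1)) : A.signedMinor j ∣ f j ^ t := by
    choose B hB using hrow j
    have h : Matrix.of (fun i => B (j.succAbove i)) * A.submatrix id j.succAbove
        = f j • (1 : Matrix (Fin t) (Fin t) R) := by
      ext a b
      rw [Matrix.mul_apply_eq_vecMul]
      change (B (j.succAbove a) ᵥ* A.submatrix id j.succAbove) b = _
      rw [Matrix.vecMul_submatrix_succAbove, hB]
      simp [Matrix.one_apply, Pi.single_apply, eq_comm]
    have hdet := congrArg Matrix.det h
    rw [Matrix.det_mul, Matrix.det_smul, Matrix.det_one, mul_one, Fintype.card_fin] at hdet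
    rw [← hdet, Matrix.signedMinor_dvd_iff]
    exact dvd_mul_left _ _
  have hcross (j i : Fin (t + 1)) : f i * A.signedMinor j = f j * A.signedMinor i := by
    obtain ⟨v, hv⟩ := hrow j i
    have := A.vecMul_dotProduct_signedMinor v
    rw [hv] at this
    simp only [sub_dotProduct, smul_dotProduct, single_one_dotProduct, smul_eq_mul] at this
    linear_combination -this
  obtain ⟨j, hj⟩ := Function.ne_iff.mp hf0
  rw [Pi.zero_apply] at hj
  obtain ⟨c, hc⟩ : f j ∣ A.signedMinor j :=
    dvd_of_forall_dvd_mul_of_no_common_prime hf hj fun i => ⟨_, hcross j i⟩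
  have hall (i : Fin (t + 1)) : A.signedMinor i = c * f i := by
    apply mul_left_cancel₀ hj
    rw [← hcross j i, hc]; ring
  have hc0 : c ≠ 0 := by
    rintro rfl
    have := hpow j
    rw [hall j, zero_mul, zero_dvd_iff] at this
    exact pow_ne_zero t hj this
  refine ⟨c, ?_, hall⟩
  by_contra hcu
  obtain ⟨p, hp, hpc⟩ := WfDvdMonoid.exists_irreducible_factor hcu hc0
  obtain ⟨i, hi⟩ := hf p hp.prime
  exact hi (hp.prime.dvd_of_dvd_pow (hpc.trans ((Dvd.intro _ (hall i).symm).trans (hpow i))))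

end Domain

section ExtVanishing

open CategoryTheory CategoryTheory.Abelian

universe u

variable {R : Type u} [CommRing R]

/-- The groups `Ext^i(N, M)` vanish for all `i < d`. -/
def ExtVanishesBelow (R : Type u) [CommRing R] (N M : Type u) [AddCommGroup N] [Module R N]
    [AddCommGroup M] [Module R M] (d : ℕ) : Prop :=
  ∀ i < d, Subsingleton (Ext (ModuleCat.of R N) (ModuleCat.of R M) i)

variable {N A B C : Type u} [AddCommGroup N] [Module R N] [AddCommGroup A] [Module R A]
  [AddCommGroup B] [Module R B] [AddCommGroup C] [Module R C]

lemma ExtVanishesBelow.mono {d e : ℕ} (h : ExtVanishesBelow R N A e) (hde : d ≤ e) :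
    ExtVanishesBelow R N A d := fun i hi => h i (hi.trans_le hde)

lemma ModuleCat.shortExact_of_exact (f : A →ₗ[R] B) (g : B →ₗ[R] C)
    (hf : Function.Injective f) (hg : Function.Surjective g) (hfg : Function.Exact f g) :
    (ModuleCat.shortComplexOfCompEqZero f g hfg.linearMap_comp_eq_zero).ShortExact :=
  ModuleCat.shortComplex_shortExact _ hfg hf hg

lemma ExtVanishesBelow.of_comp_eq_zero {f : A →ₗ[R] B} {g : B →ₗ[R] C}
    (hf : Function.Injective f) (hg : Function.Surjective g) (hfg : Function.Exact f g) {d : ℕ}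
    (hB : ∀ i < d + 1, ∀ x : Ext (ModuleCat.of R N) (ModuleCat.of R A) i,
      x.comp (Ext.mk₀ (ModuleCat.ofHom f)) (add_zero i) = 0)
    (hC : ExtVanishesBelow R N C d) : ExtVanishesBelow R N A (d + 1) := by
  have hS := ModuleCat.shortExact_of_exact f g hf hg hfg
  intro i hi
  refine subsingleton_of_forall_eq 0 fun x => ?_
  have hx := hB i hi x
  cases i with
  | zero =>
    have := hS.mono_f
    exact Ext.postcomp_mk₀_injective_of_mono (ModuleCat.of R N) (ModuleCat.ofHom f)
      (hx.trans (Ext.zero_comp _ _ _ _ (add_zero 0)).symm)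
  | succ j =>
    obtain ⟨y, hy⟩ := Ext.covariant_sequence_exact₁ _ hS x hx (n₀ := j) rfl
    rw [← hy, (hC j (by omega)).elim y 0, Ext.zero_comp]

lemma ExtVanishesBelow.of_exact_left {f : A →ₗ[R] B} {g : B →ₗ[R] C}
    (hf : Function.Injective f) (hg : Function.Surjective g) (hfg : Function.Exact f g) {d : ℕ}
    (hB : ExtVanishesBelow R N B (d + 1)) (hC : ExtVanishesBelow R N C d) :
    ExtVanishesBelow R N A (d + 1) :=
  .of_comp_eq_zero hf hg hfg (fun i hi _ => (hB i hi).elim _ _) hC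

lemma ExtVanishesBelow.of_exact_right {f : A →ₗ[R] B} {g : B →ₗ[R] C}
    (hf : Function.Injective f) (hg : Function.Surjective g) (hfg : Function.Exact f g) {d : ℕ}
    (hA : ExtVanishesBelow R N A (d + 1)) (hB : ExtVanishesBelow R N B d) :
    ExtVanishesBelow R N C d := by
  have hS := ModuleCat.shortExact_of_exact f g hf hg hfg
  intro i hi
  refine subsingleton_of_forall_eq 0 fun x => ?_
  obtain ⟨y, hy⟩ := Ext.covariant_sequence_exact₃ _ hS x (n₁ := i + 1) rfl
    ((hA (i + 1) (by omega)).elim _ _)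
  rw [← hy, (hB i hi).elim y 0, Ext.zero_comp]

lemma ExtVanishesBelow.pi {d : ℕ} (h : ExtVanishesBelow R N A d) (s : ℕ) :
    ExtVanishesBelow R N (Fin s → A) d := by
  intro i hi
  refine subsingleton_of_forall_eq 0 fun x => ?_
  have hid : 𝟙 (ModuleCat.of R (Fin s → A)) = ∑ j : Fin s,
      ModuleCat.ofHom (LinearMap.proj j) ≫ ModuleCat.ofHom (LinearMap.single R (fun _ => A) j) := by
    ext v
    simp [ModuleCat.hom_sum]
  rw [← Ext.comp_mk₀_id x, hid, Ext.mk₀_sum, Ext.comp_sum]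
  refine Finset.sum_eq_zero fun j _ => ?_
  rw [← Ext.mk₀_comp_mk₀, ← Ext.comp_assoc_of_second_deg_zero,
    (h i hi).elim (x.comp (Ext.mk₀ (ModuleCat.ofHom (LinearMap.proj j))) (add_zero i)) 0,
    Ext.zero_comp]

/-- Post-composition with a linear combination of maps whose coefficients annihilate `N` is zero
on `Ext^i(N, -)`. -/
lemma Ext.comp_mk₀_sum_smul_eq_zero {σ : Type*} [Fintype σ] (r : σ → R)
    (hr : ∀ l, r l ∈ Module.annihilator R N) (φ : σ → A →ₗ[R] B) {i : ℕ}
    (x : Ext (ModuleCat.of R N) (ModuleCat.of R A) i) :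
    x.comp (Ext.mk₀ (ModuleCat.ofHom (∑ l, r l • φ l))) (add_zero i) = 0 := by
  have : ModuleCat.ofHom (∑ l, r l • φ l) = ∑ l, r l • ModuleCat.ofHom (φ l) := by
    ext v
    simp [ModuleCat.hom_sum, LinearMap.sum_apply]
  rw [this, Ext.mk₀_sum, Ext.comp_sum]
  refine Finset.sum_eq_zero fun l _ => ?_
  have h0 : r l • 𝟙 (ModuleCat.of R N) = 0 := by
    ext v
    simpa using Module.mem_annihilator.mp (hr l) v
  have h1 : r l • x = 0 := by
    rw [← Ext.mk₀_id_comp x, ← Ext.smul_comp, ← Ext.mk₀_smul, h0, Ext.mk₀_zero, Ext.zero_comp]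
  rw [Ext.mk₀_smul, Ext.comp_smul, ← Ext.smul_comp, h1, Ext.zero_comp]

/-- Quotients of a module of projective dimension `< d` by a weakly regular sequence of length `l`
have projective dimension `< d + l`. -/
lemma hasProjectiveDimensionLT_quotient_of_isWeaklyRegular (rs : List R) (d : ℕ)
    (M : Type u) [AddCommGroup M] [Module R M]
    (hM : HasProjectiveDimensionLT (ModuleCat.of R M) (d + 1))
    (reg : RingTheory.Sequence.IsWeaklyRegular M rs) :
    HasProjectiveDimensionLT
      (ModuleCat.of R (M ⧸ Ideal.ofList rs • (⊤ : Submodule R M))) (d + 1 + rs.length) := by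
  induction rs generalizing M d with
  | nil =>
    have e : M ≃ₗ[R] (M ⧸ (Ideal.ofList [] : Ideal R) • (⊤ : Submodule R M)) :=
      (Submodule.quotEquivOfEqBot _ (by rw [Ideal.ofList_nil, Submodule.bot_smul])).symm
    exact hasProjectiveDimensionLT_of_iso e.toModuleIso _
  | cons r rs ih =>
    rw [RingTheory.Sequence.isWeaklyRegular_cons_iff] at reg
    have h1 : HasProjectiveDimensionLT (ModuleCat.of R (QuotSMulTop r M)) (d + 1 + 1) :=
      (IsSMulRegular.smulShortComplex_shortExact
        (M := ModuleCat.of R M) reg.1).hasProjectiveDimensionLT_X₃ _ hM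
          (have : HasProjectiveDimensionLT (ModuleCat.of R M) (d + 1) := hM
          hasProjectiveDimensionLT_of_ge (ModuleCat.of R M) (d + 1) (d + 1 + 1) (by omega))
    have h2 := ih (d + 1) (QuotSMulTop r M) h1 reg.2
    have h3 := hasProjectiveDimensionLT_of_iso
      (Submodule.quotOfListConsSMulTopEquivQuotSMulTopInner M r rs).symm.toModuleIso
      (d + 1 + 1 + rs.length)
    rw [List.length_cons]
    convert h3 using 1
    omega

end ExtVanishing

section Variables

open MvPolynomial CategoryTheory

universe u

variable {σ : Type*} {k : Type u} [Field k]

lemma MvPolynomial.mem_idealOfVars_iff {p : MvPolynomial σ k} :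
    p ∈ idealOfVars σ k ↔ constantCoeff p = 0 := by
  rw [idealOfVars, ← Set.image_univ, mem_ideal_span_X_image, constantCoeff_eq]
  constructor
  · intro h
    by_contra h0
    obtain ⟨i, -, hi⟩ := h 0 (mem_support_iff.mpr h0)
    exact hi rfl
  · intro h m hm
    have hm0 : m ≠ 0 := by
      rintro rfl
      exact mem_support_iff.mp hm h
    obtain ⟨i, hi⟩ := Finsupp.ne_iff.mp hm0
    exact ⟨i, Set.mem_univ i, hi⟩

lemma MvPolynomial.idealOfVars_eq_ker :
    idealOfVars σ k = RingHom.ker (constantCoeff : MvPolynomial σ k →+* k) := by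
  ext p
  rw [mem_idealOfVars_iff, RingHom.mem_ker]

instance MvPolynomial.isMaximal_idealOfVars : (idealOfVars σ k).IsMaximal := by
  rw [idealOfVars_eq_ker]
  exact RingHom.ker_isMaximal_of_surjective _ fun a => ⟨C a, constantCoeff_C _ a⟩

lemma MvPolynomial.isSMulRegular_quotient_span_X_image {s : Set σ} {i : σ} (hi : i ∉ s) :
    IsSMulRegular (MvPolynomial σ k ⧸ (Ideal.span (X '' s) : Ideal (MvPolynomial σ k)))
      (X i : MvPolynomial σ k) := by
  rw [isSMulRegular_quotient_iff_mem_of_smul_mem]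
  intro p hp
  rw [mem_ideal_span_X_image] at hp ⊢
  intro m hm
  obtain ⟨j, hj, hmj⟩ := hp (Finsupp.single i 1 + m) (by
    rw [smul_eq_mul, mem_support_iff, coeff_X_mul]
    exact mem_support_iff.mp hm)
  refine ⟨j, hj, ?_⟩
  have hij : i ≠ j := fun h => hi (h ▸ hj)
  simpa [Finsupp.single_apply, hij] using hmj

lemma MvPolynomial.isWeaklyRegular_X (N : ℕ) :
    RingTheory.Sequence.IsWeaklyRegular (MvPolynomial (Fin N) k)
      (List.ofFn (X : Fin N → MvPolynomial (Fin N) k)) := by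
  constructor
  intro i hi
  have hi' : i < N := by simpa using hi
  have h1 : (Ideal.ofList ((List.ofFn (X : Fin N → MvPolynomial (Fin N) k)).take i) • ⊤ :
      Submodule (MvPolynomial (Fin N) k) (MvPolynomial (Fin N) k)) =
        (Ideal.span (X '' {j : Fin N | (j : ℕ) < i}) : Ideal (MvPolynomial (Fin N) k)) := by
    rw [smul_eq_mul, Ideal.mul_top, Ideal.ofList]
    congr 1
    ext p
    simp only [Set.mem_ofPred_eq, List.mem_take_iff_getElem, List.length_ofFn, lt_min_iff,
      List.getElem_ofFn, Set.mem_image]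
    constructor
    · rintro ⟨j, hj, rfl⟩
      exact ⟨⟨j, hj.2⟩, hj.1, rfl⟩
    · rintro ⟨j, hj, rfl⟩
      exact ⟨j, ⟨hj, j.2⟩, rfl⟩
  rw [h1, List.getElem_ofFn]
  exact isSMulRegular_quotient_span_X_image (by simp)

lemma MvPolynomial.ofList_X (N : ℕ) :
    Ideal.ofList (List.ofFn (X : Fin N → MvPolynomial (Fin N) k)) = idealOfVars (Fin N) k := by
  rw [Ideal.ofList, idealOfVars]
  congr 1
  ext p
  simp [List.mem_ofFn]

lemma MvPolynomial.support_quotient_idealOfVars :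
    Module.support (MvPolynomial σ k) (MvPolynomial σ k ⧸ idealOfVars σ k) =
      PrimeSpectrum.zeroLocus (idealOfVars σ k : Set (MvPolynomial σ k)) := by
  rw [Module.support_eq_zeroLocus, Ideal.annihilator_quotient]

lemma MvPolynomial.extVanishesBelow_self (N : ℕ) :
    ExtVanishesBelow (MvPolynomial (Fin N) k)
      (MvPolynomial (Fin N) k ⧸ idealOfVars (Fin N) k) (MvPolynomial (Fin N) k) N := by
  have hlt : idealOfVars (Fin N) k • (⊤ : Submodule (MvPolynomial (Fin N) k)
      (MvPolynomial (Fin N) k)) < ⊤ := by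
    rw [smul_eq_mul, Ideal.mul_top]
    exact Ideal.IsPrime.ne_top'.lt_top
  have h := ModuleCat.subsingleton_ext_of_exists_isRegular (idealOfVars (Fin N) k)
    (ModuleCat.of _ (MvPolynomial (Fin N) k ⧸ idealOfVars (Fin N) k))
    support_quotient_idealOfVars.le (ModuleCat.of _ (MvPolynomial (Fin N) k)) hlt
    (List.ofFn X) (fun r hr => by
      obtain ⟨i, rfl⟩ := List.mem_ofFn.mp hr
      exact Ideal.subset_span (Set.mem_range_self i))
    ⟨isWeaklyRegular_X N, by rw [ofList_X]; exact hlt.ne'⟩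
  rwa [List.length_ofFn] at h

lemma MvPolynomial.hasProjectiveDimensionLT_quotient_idealOfVars (N : ℕ) :
    HasProjectiveDimensionLT (ModuleCat.of (MvPolynomial (Fin N) k)
      (MvPolynomial (Fin N) k ⧸ idealOfVars (Fin N) k)) (N + 1) := by
  have hP : Projective (ModuleCat.of (MvPolynomial (Fin N) k) (MvPolynomial (Fin N) k)) :=
    ModuleCat.projective_of_free (Module.Basis.singleton Unit _)
  have h := hasProjectiveDimensionLT_quotient_of_isWeaklyRegular (List.ofFn X) 0
    (MvPolynomial (Fin N) k) inferInstance (isWeaklyRegular_X N)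
  rw [ofList_X, List.length_ofFn, smul_eq_mul, Ideal.mul_top, zero_add, add_comm] at h
  exact h

/-- The Rees characterization of depth with respect to the ideal of variables. -/
lemma MvPolynomial.exists_isRegular_of_extVanishesBelow {N : ℕ} {M : Type u} [AddCommGroup M]
    [Module (MvPolynomial (Fin N) k) M] [Module.Finite (MvPolynomial (Fin N) k) M]
    (hlt : idealOfVars (Fin N) k • (⊤ : Submodule (MvPolynomial (Fin N) k) M) < ⊤) {d : ℕ}
    (h : ExtVanishesBelow (MvPolynomial (Fin N) k)
      (MvPolynomial (Fin N) k ⧸ idealOfVars (Fin N) k) M d) :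
    ∃ rs : List (MvPolynomial (Fin N) k), rs.length = d ∧ (∀ r ∈ rs, r ∈ idealOfVars (Fin N) k) ∧
      RingTheory.Sequence.IsRegular M rs :=
  ModuleCat.exists_isRegular_of_exists_subsingleton_ext (idealOfVars (Fin N) k) d
    (ModuleCat.of _ M) hlt (ModuleCat.of _ (MvPolynomial (Fin N) k ⧸ idealOfVars (Fin N) k))
    support_quotient_idealOfVars h

lemma MvPolynomial.extVanishesBelow_of_isRegular {N : ℕ} {M : Type u} [AddCommGroup M]
    [Module (MvPolynomial (Fin N) k) M] [Module.Finite (MvPolynomial (Fin N) k) M]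
    (hlt : idealOfVars (Fin N) k • (⊤ : Submodule (MvPolynomial (Fin N) k) M) < ⊤)
    {rs : List (MvPolynomial (Fin N) k)} (hrs : ∀ r ∈ rs, r ∈ idealOfVars (Fin N) k)
    (h : RingTheory.Sequence.IsRegular M rs) :
    ExtVanishesBelow (MvPolynomial (Fin N) k)
      (MvPolynomial (Fin N) k ⧸ idealOfVars (Fin N) k) M rs.length :=
  ModuleCat.subsingleton_ext_of_exists_isRegular (idealOfVars (Fin N) k)
    (ModuleCat.of _ (MvPolynomial (Fin N) k ⧸ idealOfVars (Fin N) k))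
    support_quotient_idealOfVars.le (ModuleCat.of _ M) hlt rs hrs h

end Variables

section Depth

open MvPolynomial CategoryTheory CategoryTheory.Abelian

universe u

lemma RingTheory.Sequence.IsRegular.length_le_supportDim {R : Type*} [CommRing R]
    [IsNoetherianRing R] (rs : List R) {M : Type*} [AddCommGroup M] [Module R M]
    [Module.Finite R M] (h : RingTheory.Sequence.IsRegular M rs) :
    (rs.length : WithBot ℕ∞) ≤ Module.supportDim R M := by
  induction rs generalizing M with
  | nil =>
    have := h.nontrivial
    obtain ⟨d, hd⟩ := WithBot.ne_bot_iff_exists.mp (Module.supportDim_ne_bot_of_nontrivial R M)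
    rw [← hd]
    exact_mod_cast zero_le
  | cons r rs ih =>
    rw [RingTheory.Sequence.isRegular_cons_iff] at h
    calc (((r :: rs).length : ℕ) : WithBot ℕ∞) = rs.length + 1 := by simp
      _ ≤ Module.supportDim R (QuotSMulTop r M) + 1 := by gcongr; exact ih h.2
      _ ≤ Module.supportDim R M :=
        Module.supportDim_quotSMulTop_succ_le_of_notMem_minimalPrimes
          fun _ => h.1.notMem_of_mem_minimalPrimes

variable {k : Type u} [Field k] {N : ℕ}

/-- A linear map `R^q → R^t` with entries in the ideal of variables is zero on
`Ext(k, -)`. -/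
lemma MvPolynomial.ext_comp_eq_zero_of_mem_idealOfVars {q t : ℕ}
    (φ : (Fin q → MvPolynomial (Fin N) k) →ₗ[MvPolynomial (Fin N) k]
      (Fin t → MvPolynomial (Fin N) k))
    (hφ : ∀ v i, φ v i ∈ idealOfVars (Fin N) k) {i : ℕ}
    (x : Ext (ModuleCat.of (MvPolynomial (Fin N) k)
        (MvPolynomial (Fin N) k ⧸ idealOfVars (Fin N) k))
      (ModuleCat.of (MvPolynomial (Fin N) k) (Fin q → MvPolynomial (Fin N) k)) i) :
    x.comp (Ext.mk₀ (ModuleCat.ofHom φ)) (add_zero i) = 0 := by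
  have h (a : Fin q) (b : Fin t) := (Ideal.mem_span_range_iff_exists_fun).mp (hφ (Pi.single a 1) b)
  choose c hc using h
  have hsum : φ = ∑ l, (X l : MvPolynomial (Fin N) k) •
      (Pi.basisFun (MvPolynomial (Fin N) k) (Fin q)).constr (MvPolynomial (Fin N) k)
        (fun a b => c a b l) := by
    refine (Pi.basisFun _ (Fin q)).ext fun a => ?_
    funext b
    rw [LinearMap.sum_apply, Finset.sum_apply, Pi.basisFun_apply, ← hc]
    refine Finset.sum_congr rfl fun l _ => ?_
    rw [LinearMap.smul_apply, ← Pi.basisFun_apply, Module.Basis.constr_basis, Pi.smul_apply,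
      smul_eq_mul, mul_comm]
  rw [hsum]
  refine Ext.comp_mk₀_sum_smul_eq_zero _ (fun l => ?_) _ x
  rw [Ideal.annihilator_quotient]
  exact Ideal.subset_span (Set.mem_range_self l)

/-- A minimal free cover of a module of maximal depth is injective. -/
lemma MvPolynomial.injective_of_extVanishesBelow {K : Type u} [AddCommGroup K]
    [Module (MvPolynomial (Fin N) k) K] {t : ℕ}
    (ψ : (Fin t → MvPolynomial (Fin N) k) →ₗ[MvPolynomial (Fin N) k] K)
    (hψ : Function.Surjective ψ) (hker : ∀ v, ψ v = 0 → ∀ i, v i ∈ idealOfVars (Fin N) k)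
    (hK : ExtVanishesBelow (MvPolynomial (Fin N) k)
      (MvPolynomial (Fin N) k ⧸ idealOfVars (Fin N) k) K N) : Function.Injective ψ := by
  set R := MvPolynomial (Fin N) k
  have hpd := hasProjectiveDimensionLT_quotient_idealOfVars (k := k) N
  have hdepth : ExtVanishesBelow R (R ⧸ idealOfVars (Fin N) k) (LinearMap.ker ψ) (N + 1) := by
    refine .of_comp_eq_zero (LinearMap.ker ψ).injective_subtype hψ
      (LinearMap.exact_subtype_ker_map ψ) (fun i hi x => ?_) hK
    rcases Nat.lt_succ_iff_lt_or_eq.mp hi with hi | rfl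
    · exact ((extVanishesBelow_self N).pi t i hi).elim _ _
    · obtain ⟨q, φ, hφ⟩ := Module.Finite.exists_fin' R (LinearMap.ker ψ)
      have hS := ModuleCat.shortExact_of_exact _ _ (LinearMap.ker φ).injective_subtype hφ
        (LinearMap.exact_subtype_ker_map φ)
      obtain ⟨y, rfl⟩ := Ext.covariant_sequence_exact₃ _ hS x (n₁ := i + 1) rfl
        (Ext.eq_zero_of_hasProjectiveDimensionLT _ (i + 1) le_rfl)
      rw [Ext.comp_assoc_of_second_deg_zero, Ext.mk₀_comp_mk₀]
      exact ext_comp_eq_zero_of_mem_idealOfVars ((LinearMap.ker ψ).subtype ∘ₗ φ)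
        (fun v => hker _ (φ v).2) y
  by_cases hlt : idealOfVars (Fin N) k • (⊤ : Submodule R (LinearMap.ker ψ)) = ⊤
  · obtain ⟨r, hr, hr0⟩ := Submodule.exists_sub_one_mem_and_smul_eq_zero_of_fg_of_le_smul
      (idealOfVars (Fin N) k) (⊤ : Submodule R (LinearMap.ker ψ)) Module.Finite.fg_top hlt.ge
    have hr_ne : r ≠ 0 := by
      rintro rfl
      rw [zero_sub, neg_mem_iff] at hr
      exact (Ideal.ne_top_iff_one _).mp Ideal.IsPrime.ne_top' hr
    rw [← LinearMap.ker_eq_bot, Submodule.eq_bot_iff]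
    intro v hv
    exact (smul_eq_zero_iff_right hr_ne).mp (congrArg Subtype.val (hr0 ⟨v, hv⟩ trivial))
  · obtain ⟨rs, hlen, -, hrs⟩ := exists_isRegular_of_extVanishesBelow (lt_top_iff_ne_top.mpr hlt)
      hdepth
    have h := hrs.length_le_supportDim.trans (Module.supportDim_le_ringKrullDim _ _)
    rw [hlen, MvPolynomial.ringKrullDim_of_isNoetherianRing, ringKrullDim_eq_zero_of_field] at h
    have h' : ((N + 1 : ℕ) : WithBot ℕ∞) ≤ (N : ℕ) := by simpa using h
    have : N + 1 ≤ N := by exact_mod_cast h'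
    omega

end Depth

section Dimension

open MvPolynomial

variable {k : Type*} [Field k]

lemma MvPolynomial.le_height_of_isMaximal (N : ℕ) (M : Ideal (MvPolynomial (Fin N) k))
    [M.IsMaximal] : (N : ℕ∞) ≤ M.height := by
  induction N with
  | zero => simp
  | succ N ih =>
    let e : Polynomial (MvPolynomial (Fin N) k) ≃+* MvPolynomial (Fin (N + 1)) k :=
      (finSuccEquiv k N).symm.toRingEquiv
    let P : Ideal (Polynomial (MvPolynomial (Fin N) k)) := M.comap e
    have hP : P.IsMaximal := Ideal.comap_isMaximal_of_equiv e
    have hp : (P.comap Polynomial.C).IsMaximal :=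
      Polynomial.isMaximal_comap_C_of_isJacobsonRing P
    have : P.LiesOver (P.comap Polynomial.C) := ⟨rfl⟩
    have h : P.height = M.height := RingEquiv.height_comap e M
    rw [← h, Polynomial.height_eq_height_add_one (P.comap Polynomial.C) P, Nat.cast_add,
      Nat.cast_one]
    gcongr
    exact ih _

lemma MvPolynomial.le_ringKrullDim_quotient_span_singleton {N : ℕ}
    {r : MvPolynomial (Fin (N + 1)) k} (hr : ¬ IsUnit r) :
    (N : WithBot ℕ∞) ≤ ringKrullDim (MvPolynomial (Fin (N + 1)) k ⧸ Ideal.span {r}) := by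
  obtain ⟨M, hM, hrM⟩ := exists_max_ideal_of_mem_nonunits hr
  have h1 : ((N + 1 : ℕ) : WithBot ℕ∞) ≤ M.height := by
    exact_mod_cast le_height_of_isMaximal (N + 1) M
  have h2 := h1.trans (Ideal.height_le_ringKrullDim_quotient_add_one hrM)
  rw [Nat.cast_add, Nat.cast_one] at h2
  generalize ringKrullDim (MvPolynomial (Fin (N + 1)) k ⧸ Ideal.span {r}) = x at h2 ⊢
  induction x with
  | bot => exact absurd (le_bot_iff.mp h2) (by simp)
  | coe x =>
    induction x with
    | top => exact WithBot.coe_le_coe.mpr le_top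
    | coe x =>
      have : N + 1 ≤ x + 1 := by exact_mod_cast h2
      exact_mod_cast Nat.le_of_succ_le_succ this

variable {n : ℕ} {I : Ideal (MvPolynomial (Fin (n + 1)) k)}

lemma MvPolynomial.not_le_span_singleton_of_ringKrullDim_eq (hn : 1 ≤ n)
    (hI : ringKrullDim (MvPolynomial (Fin (n + 1)) k ⧸ I) = ((n - 1 : ℕ) : WithBot ℕ∞))
    {r : MvPolynomial (Fin (n + 1)) k} (hr : ¬ IsUnit r) : ¬ I ≤ Ideal.span {r} := by
  intro h
  have h1 := (le_ringKrullDim_quotient_span_singleton hr).trans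
    (ringKrullDim_le_of_surjective (Ideal.Quotient.factor h) (Ideal.Quotient.factor_surjective h))
  rw [hI] at h1
  have : n ≤ n - 1 := by exact_mod_cast h1
  omega

lemma MvPolynomial.ne_top_of_ringKrullDim_eq
    (hI : ringKrullDim (MvPolynomial (Fin (n + 1)) k ⧸ I) = ((n - 1 : ℕ) : WithBot ℕ∞)) :
    I ≠ ⊤ := by
  rintro rfl
  have : Subsingleton (MvPolynomial (Fin (n + 1)) k ⧸
    (⊤ : Ideal (MvPolynomial (Fin (n + 1)) k))) := Ideal.Quotient.subsingleton_iff.mpr rfl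
  rw [ringKrullDim_eq_bot_of_subsingleton] at hI
  exact absurd hI WithBot.bot_ne_coe

lemma MvPolynomial.le_idealOfVars_of_homogeneous {σ : Type*} {I : Ideal (MvPolynomial σ k)}
    (hI : I ≠ ⊤) {S : Set (MvPolynomial σ k)}
    (hS : ∀ s ∈ S, ∃ d, s.IsHomogeneous d) (hIS : I = Ideal.span S) : I ≤ idealOfVars σ k := by
  rw [hIS, Ideal.span_le]
  intro s hs
  obtain ⟨d, hd⟩ := hS s hs
  rw [SetLike.mem_coe, mem_idealOfVars_iff, constantCoeff_eq]
  by_contra h0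
  have hd0 : d = 0 := by
    have := hd h0
    simpa using this.symm
  subst hd0
  rw [← totalDegree_zero_iff_isHomogeneous, totalDegree_eq_zero_iff_eq_C] at hd
  refine hI (Ideal.eq_top_of_isUnit_mem _ (hIS ▸ Ideal.subset_span hs) ?_)
  rw [hd]
  exact (IsUnit.mk0 _ h0).map C

end Dimension

section DepthQuotient

open MvPolynomial

universe u

lemma RingTheory.Sequence.isRegular_map_mk_iff {R : Type*} [CommRing R] (I : Ideal R)
    (rs : List R) :
    RingTheory.Sequence.IsRegular (R ⧸ I) (rs.map (Ideal.Quotient.mk I)) ↔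
      RingTheory.Sequence.IsRegular (R ⧸ I) rs := by
  refine (AddEquiv.isRegular_congr (e := AddEquiv.refl (R ⧸ I)) ?_).symm
  rw [List.forall₂_map_right_iff]
  refine List.forall₂_same.mpr fun r _ x => ?_
  obtain ⟨x, rfl⟩ := Ideal.Quotient.mk_surjective x
  rfl

lemma Ideal.smul_top_quotient_lt_top {R : Type*} [CommRing R] {I J : Ideal R} (hIJ : I ≤ J)
    (hJ : J ≠ ⊤) : J • (⊤ : Submodule R (R ⧸ I)) < ⊤ := by
  refine lt_top_iff_ne_top.mpr fun h => hJ ?_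
  have hle : J • (⊤ : Submodule R (R ⧸ I)) ≤ LinearMap.ker (Submodule.factor hIJ) := by
    refine Submodule.smul_le.mpr fun r hr x _ => ?_
    obtain ⟨x, rfl⟩ := Submodule.Quotient.mk_surjective _ x
    rw [LinearMap.mem_ker, map_smul]
    exact (Submodule.Quotient.mk_eq_zero J).mpr (J.mul_mem_right x hr)
  rw [h] at hle
  have h1 := hle (x := Submodule.Quotient.mk 1) trivial
  exact (Ideal.eq_top_iff_one J).mpr ((Submodule.Quotient.mk_eq_zero J).mp h1)

variable {k : Type u} [Field k] {n : ℕ} {I : Ideal (MvPolynomial (Fin (n + 1)) k)}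

lemma MvPolynomial.exists_isRegular_quotient_iff (hI : I ≤ idealOfVars (Fin (n + 1)) k) {d : ℕ} :
    (∃ L : List (MvPolynomial (Fin (n + 1)) k), L.length = d ∧
      (∀ x ∈ L, x ∈ idealOfVars (Fin (n + 1)) k) ∧
      RingTheory.Sequence.IsRegular (MvPolynomial (Fin (n + 1)) k ⧸ I)
        (L.map (Ideal.Quotient.mk I))) ↔
      ExtVanishesBelow (MvPolynomial (Fin (n + 1)) k)
        (MvPolynomial (Fin (n + 1)) k ⧸ idealOfVars (Fin (n + 1)) k)
        (MvPolynomial (Fin (n + 1)) k ⧸ I) d := by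
  have hlt := Ideal.smul_top_quotient_lt_top hI Ideal.IsPrime.ne_top'
  simp only [RingTheory.Sequence.isRegular_map_mk_iff]
  constructor
  · rintro ⟨L, rfl, hL, hreg⟩
    exact extVanishesBelow_of_isRegular hlt hL hreg
  · exact exists_isRegular_of_extVanishesBelow hlt

variable {s : ℕ} {R : Type u} [CommRing R]

/-- The presentation `R^s → I` given by a family of generators of the ideal `I`. -/
noncomputable def Ideal.presentation {I : Ideal R} {f : Fin s → R}
    (hf : I = Ideal.span (Set.range f)) : (Fin s → R) →ₗ[R] I :=
  (Fintype.linearCombination R f).codRestrict I fun v => by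
    rw [hf]
    exact (Fintype.range_linearCombination R f).le (LinearMap.mem_range_self _ v)

lemma Ideal.presentation_apply {I : Ideal R} {f : Fin s → R}
    (hf : I = Ideal.span (Set.range f)) (v : Fin s → R) :
    (Ideal.presentation hf v : R) = v ⬝ᵥ f := rfl

lemma Ideal.presentation_eq_zero_iff {I : Ideal R} {f : Fin s → R}
    (hf : I = Ideal.span (Set.range f)) (v : Fin s → R) :
    Ideal.presentation hf v = 0 ↔ v ⬝ᵥ f = 0 := by
  rw [← Ideal.presentation_apply hf, ZeroMemClass.coe_eq_zero]

lemma Ideal.presentation_surjective {I : Ideal R} {f : Fin s → R}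
    (hf : I = Ideal.span (Set.range f)) : Function.Surjective (Ideal.presentation hf) := by
  rintro ⟨x, hx⟩
  obtain ⟨c, hc⟩ := Ideal.mem_span_range_iff_exists_fun.mp (hf ▸ hx)
  exact ⟨c, Subtype.ext hc⟩

lemma MvPolynomial.exists_prime_not_dvd {f : Fin s → MvPolynomial (Fin (n + 1)) k}
    (hf : I = Ideal.span (Set.range f)) (hn : 1 ≤ n)
    (hI : ringKrullDim (MvPolynomial (Fin (n + 1)) k ⧸ I) = ((n - 1 : ℕ) : WithBot ℕ∞))
    (p : MvPolynomial (Fin (n + 1)) k) (hp : Prime p) : ∃ i, ¬ p ∣ f i := by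
  by_contra! h
  refine not_le_span_singleton_of_ringKrullDim_eq hn hI hp.not_isUnit ?_
  rw [hf, Ideal.span_le]
  rintro _ ⟨i, rfl⟩
  exact Ideal.mem_span_singleton.mpr (h i)

lemma MvPolynomial.exists_ne_zero_of_ringKrullDim_eq {f : Fin s → MvPolynomial (Fin (n + 1)) k}
    (hf : I = Ideal.span (Set.range f)) (hn : 1 ≤ n)
    (hI : ringKrullDim (MvPolynomial (Fin (n + 1)) k ⧸ I) = ((n - 1 : ℕ) : WithBot ℕ∞)) :
    ∃ i, f i ≠ 0 := by
  obtain ⟨i, hi⟩ := exists_prime_not_dvd hf hn hI (X 0) X_prime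
  exact ⟨i, fun h => hi (h ▸ dvd_zero _)⟩

open Matrix in
lemma MvPolynomial.extVanishesBelow_quotient_of_minors (hn : 1 ≤ n)
    (hI : ringKrullDim (MvPolynomial (Fin (n + 1)) k ⧸ I) = ((n - 1 : ℕ) : WithBot ℕ∞))
    {t : ℕ} {A : Matrix (Fin t) (Fin (t + 1)) (MvPolynomial (Fin (n + 1)) k)}
    (hA : I = Ideal.span (Set.range A.signedMinor)) :
    ExtVanishesBelow (MvPolynomial (Fin (n + 1)) k)
      (MvPolynomial (Fin (n + 1)) k ⧸ idealOfVars (Fin (n + 1)) k)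
      (MvPolynomial (Fin (n + 1)) k ⧸ I) (n - 1) := by
  have hprime := exists_prime_not_dvd hA hn hI
  obtain ⟨j, hj⟩ := exists_ne_zero_of_ringKrullDim_eq hA hn hI
  have hexact : Function.Exact A.vecMulLinear (Ideal.presentation hA) := by
    intro w
    rw [Ideal.presentation_eq_zero_iff]
    constructor
    · exact Matrix.exists_vecMul_eq_of_dotProduct_signedMinor_eq_zero hprime hj
    · rintro ⟨v, rfl⟩
      exact A.vecMul_dotProduct_signedMinor v
  have hIdepth := ExtVanishesBelow.of_exact_right (d := n)
    (Matrix.vecMul_injective_of_signedMinor_ne_zero hj) (Ideal.presentation_surjective hA) hexact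
    ((extVanishesBelow_self (k := k) (n + 1)).pi t)
    (((extVanishesBelow_self (k := k) (n + 1)).pi (t + 1)).mono n.le_succ)
  obtain ⟨d, rfl⟩ := Nat.exists_eq_add_of_le' hn
  exact ExtVanishesBelow.of_exact_right (d := d) I.injective_subtype I.mkQ_surjective
    (LinearMap.exact_subtype_mkQ I) hIdepth ((extVanishesBelow_self (d + 1 + 1)).mono (by omega))

end DepthQuotient

section GradedVectors

open MvPolynomial

variable {σ k ι : Type*} [Field k]

lemma MvPolynomial.homogeneousComponent_mul_of_isHomogeneous {p q : MvPolynomial σ k} {e : ℕ}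
    (hq : q.IsHomogeneous e) (m : ℕ) :
    homogeneousComponent m (p * q) =
      (if e ≤ m then homogeneousComponent (m - e) p else 0) * q := by
  let _ : GradedAlgebra (homogeneousSubmodule σ k) := gradedAlgebra
  have h := DirectSum.coe_decompose_mul_of_right_mem (homogeneousSubmodule σ k) (a := p) m hq
  have h' (r : MvPolynomial σ k) (i : ℕ) :
      (DirectSum.decompose (homogeneousSubmodule σ k) r i : MvPolynomial σ k) =
        homogeneousComponent i r := decomposition.decompose'_apply r i
  rw [h', h'] at h
  rw [h, ite_mul, zero_mul]

namespace MvPolynomial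

/-- A vector is homogeneous of degree `d` in the free module whose basis vectors have
degrees `e`. -/
def IsHomogeneousVec (e : ι → ℕ) (d : ℕ) (w : ι → MvPolynomial σ k) : Prop :=
  ∀ j, w j = 0 ∨ ((w j).IsHomogeneous (d - e j) ∧ e j ≤ d)

/-- The part of degree `d` of a vector in the free module whose basis vectors have
degrees `e`. -/
noncomputable def vecComponent (e : ι → ℕ) (d : ℕ) :
    (ι → MvPolynomial σ k) →ₗ[k] (ι → MvPolynomial σ k) :=
  LinearMap.pi fun j =>
    (if e j ≤ d then homogeneousComponent (d - e j) else 0) ∘ₗ LinearMap.proj j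

lemma vecComponent_apply (e : ι → ℕ) (d : ℕ) (w : ι → MvPolynomial σ k) (j : ι) :
    vecComponent e d w j = if e j ≤ d then homogeneousComponent (d - e j) (w j) else 0 := by
  simp only [vecComponent, LinearMap.pi_apply, LinearMap.comp_apply, LinearMap.proj_apply]
  split_ifs <;> rfl

lemma isHomogeneousVec_vecComponent (e : ι → ℕ) (d : ℕ) (w : ι → MvPolynomial σ k) :
    IsHomogeneousVec e d (vecComponent e d w) := by
  intro j
  rw [vecComponent_apply]
  split_ifs with h
  · exact Or.inr ⟨homogeneousComponent_isHomogeneous _ _, h⟩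
  · exact Or.inl rfl

lemma vecComponent_dotProduct [Fintype ι] {e : ι → ℕ} {f : ι → MvPolynomial σ k}
    (hf : ∀ j, (f j).IsHomogeneous (e j)) (d : ℕ) (w : ι → MvPolynomial σ k) :
    vecComponent e d w ⬝ᵥ f = homogeneousComponent d (w ⬝ᵥ f) := by
  simp only [dotProduct, map_sum, vecComponent_apply,
    homogeneousComponent_mul_of_isHomogeneous (hf _)]

lemma IsHomogeneousVec.vecComponent_smul {e : ι → ℕ} {d : ℕ} {w : ι → MvPolynomial σ k}
    (hw : IsHomogeneousVec e d w) (m : ℕ) (c : MvPolynomial σ k) :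
    vecComponent e m (c • w) =
      (if d ≤ m then homogeneousComponent (m - d) c else 0) • w := by
  funext j
  rw [vecComponent_apply, Pi.smul_apply, Pi.smul_apply, smul_eq_mul, smul_eq_mul]
  rcases hw j with h0 | ⟨h1, h2⟩
  · simp [h0]
  · rw [homogeneousComponent_mul_of_isHomogeneous h1]
    by_cases hd : d ≤ m
    · rw [if_pos (h2.trans hd), if_pos (by omega), if_pos hd]
      congr 3
      omega
    · rw [if_neg hd, zero_mul]
      split_ifs
      · omega
      · exact zero_mul _
      · rfl

lemma exists_sum_vecComponent [Finite ι] (e : ι → ℕ) (w : ι → MvPolynomial σ k) :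
    ∃ D, ∑ d ∈ Finset.range D, vecComponent e d w = w := by
  have := Fintype.ofFinite ι
  refine ⟨∑ j, (e j + ((w j).totalDegree + 1)), _root_.funext fun j => ?_⟩
  have hj : e j + ((w j).totalDegree + 1) ≤ ∑ j, (e j + ((w j).totalDegree + 1)) :=
    Finset.single_le_sum (f := fun j => e j + ((w j).totalDegree + 1)) (fun _ _ => Nat.zero_le _)
      (Finset.mem_univ j)
  obtain ⟨r, hr⟩ := Nat.exists_eq_add_of_le hj
  rw [Finset.sum_apply, hr, add_assoc, Finset.sum_range_add, Finset.sum_range_add]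
  have h1 : ∑ d ∈ Finset.range (e j), vecComponent e d w j = 0 :=
    Finset.sum_eq_zero fun d hd => by
      rw [vecComponent_apply, if_neg (Finset.mem_range.mp hd).not_ge]
  have h2 (d : ℕ) : vecComponent e (e j + d) w j = homogeneousComponent d (w j) := by
    rw [vecComponent_apply, if_pos (Nat.le_add_right _ _), Nat.add_sub_cancel_left]
  simp only [h1, h2, sum_homogeneousComponent, zero_add, add_eq_left]
  exact Finset.sum_eq_zero fun d _ => homogeneousComponent_eq_zero _ _ (by omega)

lemma exists_span_isHomogeneousVec [Finite σ] [Finite ι] (e : ι → ℕ)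
    (K : Submodule (MvPolynomial σ k) (ι → MvPolynomial σ k))
    (hK : ∀ w ∈ K, ∀ d, vecComponent e d w ∈ K) :
    ∃ (t : ℕ) (w : Fin t → ι → MvPolynomial σ k),
      (∀ i, ∃ d, IsHomogeneousVec e d (w i)) ∧ Submodule.span _ (Set.range w) = K := by
  have hspan : Submodule.span (MvPolynomial σ k) {w | w ∈ K ∧ ∃ d, IsHomogeneousVec e d w} = K := by
    refine le_antisymm (Submodule.span_le.mpr fun w hw => hw.1) fun w hw => ?_
    obtain ⟨D, hD⟩ := exists_sum_vecComponent e w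
    rw [← hD]
    exact Submodule.sum_mem _ fun d _ =>
      Submodule.subset_span ⟨hK w hw d, d, isHomogeneousVec_vecComponent e d w⟩
  obtain ⟨T, hT, hTs⟩ := (Submodule.fg_span_iff_fg_span_finset_subset _).mp
    (hspan.symm ▸ IsNoetherian.noetherian K)
  refine ⟨T.card, fun i => T.equivFin.symm i, fun i => (hT (T.equivFin.symm i).2).2, ?_⟩
  rw [← hspan, hTs]
  congr 1
  exact (T.equivFin.symm.surjective.range_comp _).trans Subtype.range_coe

/-- The coefficients of relations among a minimal family of homogeneous generators lie in
the ideal of variables. -/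
lemma exists_minimal_span_isHomogeneousVec [Finite σ] [Finite ι] (e : ι → ℕ)
    (K : Submodule (MvPolynomial σ k) (ι → MvPolynomial σ k))
    (hK : ∀ w ∈ K, ∀ d, vecComponent e d w ∈ K) :
    ∃ (t : ℕ) (w : Fin t → ι → MvPolynomial σ k) (d : Fin t → ℕ),
      (∀ i, IsHomogeneousVec e (d i) (w i)) ∧ Submodule.span _ (Set.range w) = K ∧
      ∀ c : Fin t → MvPolynomial σ k, ∑ i, c i • w i = 0 → ∀ i, c i ∈ idealOfVars σ k := by
  classical
  have hex := exists_span_isHomogeneousVec e K hK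
  obtain ⟨w, hw, hspan⟩ := Nat.find_spec hex
  have hmin := fun m => Nat.find_min (m := m) hex
  generalize Nat.find hex = t at w hw hspan hmin
  choose d hd using hw
  refine ⟨t, w, d, hd, hspan, fun c hc i => ?_⟩
  rw [mem_idealOfVars_iff, constantCoeff_eq]
  by_contra h0
  obtain ⟨t, rfl⟩ : ∃ s, t = s + 1 := Nat.exists_eq_succ_of_ne_zero fun h => (h ▸ i).elim0
  refine hmin t t.lt_succ_self ⟨w ∘ i.succAbove, fun j => ⟨_, hd _⟩, ?_⟩
  have hrel := congrArg (vecComponent e (d i)) hc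
  simp only [map_sum, map_zero, (hd _).vecComponent_smul] at hrel
  rw [Fin.sum_univ_succAbove _ i, if_pos le_rfl, Nat.sub_self, homogeneousComponent_zero] at hrel
  have hmem : w i ∈ Submodule.span (MvPolynomial σ k) (Set.range (w ∘ i.succAbove)) := by
    rw [← Submodule.smul_mem_iff_of_isUnit _ ((IsUnit.mk0 _ h0).map C),
      eq_neg_of_add_eq_zero_left hrel]
    exact neg_mem (Submodule.sum_mem _ fun j _ =>
      Submodule.smul_mem _ _ (Submodule.subset_span ⟨j, rfl⟩))
  rw [← hspan]
  refine le_antisymm (Submodule.span_mono (Set.range_comp_subset_range _ _))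
    (Submodule.span_le.mpr ?_)
  rintro _ ⟨j, rfl⟩
  rcases Fin.eq_self_or_eq_succAbove i j with rfl | ⟨j, rfl⟩
  · exact hmem
  · exact Submodule.subset_span ⟨j, rfl⟩

end MvPolynomial

end GradedVectors

section Syzygies

open MvPolynomial

universe u

lemma MvPolynomial.exists_homogeneous_generators {σ k : Type*} [Finite σ] [Field k]
    {I : Ideal (MvPolynomial σ k)} {S : Set (MvPolynomial σ k)}
    (hS : ∀ s ∈ S, ∃ d, s.IsHomogeneous d) (hIS : I = Ideal.span S) :
    ∃ (s : ℕ) (f : Fin s → MvPolynomial σ k) (e : Fin s → ℕ),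
      (∀ j, (f j).IsHomogeneous (e j)) ∧ I = Ideal.span (Set.range f) := by
  obtain ⟨T, hT, hTs⟩ := (Submodule.fg_span_iff_fg_span_finset_subset S).mp
    (IsNoetherian.noetherian (Ideal.span S))
  choose e he using fun i => hS _ (hT (T.equivFin.symm i).2)
  refine ⟨T.card, fun i => T.equivFin.symm i, e, he, hIS.trans (hTs.trans ?_)⟩
  congr 1
  exact ((T.equivFin.symm.surjective.range_comp _).trans Subtype.range_coe).symm

lemma Ideal.finrank_eq_one {R : Type*} [CommRing R] [IsDomain R] [IsNoetherianRing R]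
    {I : Ideal R} (hI : I ≠ ⊥) : Module.finrank R I = 1 := by
  have : Nontrivial I := Submodule.nontrivial_iff_ne_bot.mpr hI
  refine le_antisymm ?_ (Module.finrank_pos (R := R) (M := I))
  exact (Submodule.finrank_le I).trans_eq (Module.finrank_self R)

lemma Ideal.eq_add_one_of_presentation {R : Type u} [CommRing R] [IsDomain R]
    [IsNoetherianRing R] {I : Ideal R} (hI : I ≠ ⊥) {s t : ℕ} {f : Fin s → R}
    (hf : I = Ideal.span (Set.range f))
    (e : (Fin t → R) ≃ₗ[R] LinearMap.ker (Ideal.presentation hf)) : s = t + 1 := by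
  have h1 := Submodule.finrank_quotient_add_finrank (LinearMap.ker (Ideal.presentation hf))
  rw [((Ideal.presentation hf).quotKerEquivOfSurjective
    (Ideal.presentation_surjective hf)).finrank_eq, Ideal.finrank_eq_one hI, ← e.finrank_eq,
    Module.finrank_fin_fun, Module.finrank_fin_fun] at h1
  omega

variable {k : Type u} [Field k] {n : ℕ} {I : Ideal (MvPolynomial (Fin (n + 1)) k)}

lemma MvPolynomial.extVanishesBelow_ker_presentation (hn : 1 ≤ n) {s : ℕ}
    {f : Fin s → MvPolynomial (Fin (n + 1)) k} (hf : I = Ideal.span (Set.range f))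
    (hI : ExtVanishesBelow (MvPolynomial (Fin (n + 1)) k)
      (MvPolynomial (Fin (n + 1)) k ⧸ idealOfVars (Fin (n + 1)) k)
      (MvPolynomial (Fin (n + 1)) k ⧸ I) (n - 1)) :
    ExtVanishesBelow (MvPolynomial (Fin (n + 1)) k)
      (MvPolynomial (Fin (n + 1)) k ⧸ idealOfVars (Fin (n + 1)) k)
      (LinearMap.ker (Ideal.presentation hf)) (n + 1) := by
  obtain ⟨d, rfl⟩ := Nat.exists_eq_add_of_le' hn
  refine ExtVanishesBelow.of_exact_left (Submodule.injective_subtype _)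
    (Ideal.presentation_surjective hf) (LinearMap.exact_subtype_ker_map _)
    ((extVanishesBelow_self _).pi s) ?_
  exact ExtVanishesBelow.of_exact_left I.injective_subtype I.mkQ_surjective
    (LinearMap.exact_subtype_mkQ I) ((extVanishesBelow_self (d + 1 + 1)).mono (by omega)) hI

/-- A homogeneous ideal of codimension two and maximal depth is generated by the maximal minors
of a homogeneous matrix. -/
lemma MvPolynomial.exists_matrix_of_extVanishesBelow (hn : 1 ≤ n)
    (hdim : ringKrullDim (MvPolynomial (Fin (n + 1)) k ⧸ I) = ((n - 1 : ℕ) : WithBot ℕ∞))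
    {S : Set (MvPolynomial (Fin (n + 1)) k)} (hS : ∀ s ∈ S, ∃ d, s.IsHomogeneous d)
    (hIS : I = Ideal.span S)
    (hI : ExtVanishesBelow (MvPolynomial (Fin (n + 1)) k)
      (MvPolynomial (Fin (n + 1)) k ⧸ idealOfVars (Fin (n + 1)) k)
      (MvPolynomial (Fin (n + 1)) k ⧸ I) (n - 1)) :
    ∃ (t : ℕ) (A : Matrix (Fin t) (Fin (t + 1)) (MvPolynomial (Fin (n + 1)) k))
        (a : Fin (t + 1) → ℕ) (b : Fin t → ℕ),
      (∀ i j, A i j = 0 ∨ ((A i j).IsHomogeneous (a j - b i) ∧ b i ≤ a j)) ∧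
      I = Ideal.span (Set.range A.signedMinor) := by
  obtain ⟨s, f, e, hfe, hf⟩ := exists_homogeneous_generators hS hIS
  obtain ⟨j, hj⟩ := exists_ne_zero_of_ringKrullDim_eq hf hn hdim
  have hI0 : I ≠ ⊥ := fun h => hj <| by
    rw [← Ideal.mem_bot, ← h, hf]
    exact Ideal.subset_span ⟨j, rfl⟩
  obtain ⟨t, w, d, hwd, hspan, hmin⟩ := exists_minimal_span_isHomogeneousVec e
    (LinearMap.ker (Ideal.presentation hf)) fun w hw m => by
      rw [LinearMap.mem_ker, Ideal.presentation_eq_zero_iff] at hw ⊢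
      rw [vecComponent_dotProduct hfe, hw, map_zero]
  have hmem (c : Fin t → MvPolynomial (Fin (n + 1)) k) :
      Fintype.linearCombination _ w c ∈ LinearMap.ker (Ideal.presentation hf) := by
    rw [← hspan, ← Fintype.range_linearCombination]
    exact LinearMap.mem_range_self _ c
  let ψ := (Fintype.linearCombination (MvPolynomial (Fin (n + 1)) k) w).codRestrict _ hmem
  have hψ : Function.Surjective ψ := by
    rintro ⟨x, hx⟩
    rw [← hspan, ← Fintype.range_linearCombination] at hx
    obtain ⟨c, hc⟩ := hx
    exact ⟨c, Subtype.ext hc⟩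
  have hψinj : Function.Injective ψ := injective_of_extVanishesBelow ψ hψ
    (fun c hc => hmin c (congrArg Subtype.val hc)) (extVanishesBelow_ker_presentation hn hf hI)
  obtain rfl := Ideal.eq_add_one_of_presentation hI0 hf (.ofBijective ψ ⟨hψinj, hψ⟩)
  have hsyz (v : Fin (t + 1) → MvPolynomial (Fin (n + 1)) k) (hv : v ⬝ᵥ f = 0) :
      ∃ c : Fin t → MvPolynomial (Fin (n + 1)) k, Matrix.vecMul c (Matrix.of w) = v := by
    obtain ⟨c, hc⟩ := hψ ⟨v, (Ideal.presentation_eq_zero_iff hf v).mpr hv⟩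
    exact ⟨c, (Matrix.vecMul_eq_sum c _).trans (congrArg Subtype.val hc)⟩
  obtain ⟨u, hu, huf⟩ := Matrix.exists_isUnit_signedMinor_eq (exists_prime_not_dvd hf hn hdim)
    (fun h => hj (congrFun h j)) hsyz
  let M := ∑ i, d i + ∑ j, e j
  have hdM (i) : d i ≤ M := (Finset.single_le_sum (fun _ _ => Nat.zero_le _)
    (Finset.mem_univ i)).trans (Nat.le_add_right _ _)
  refine ⟨t, Matrix.of w, fun j => M - e j, fun i => M - d i, fun i j => ?_, ?_⟩
  · refine (hwd i j).imp_right fun h => ⟨?_, Nat.sub_le_sub_left h.2 M⟩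
    have h1 := hdM i
    have h2 := h.2
    rw [show M - e j - (M - d i) = d i - e j by omega]
    exact h.1
  · rw [hf, show (Matrix.of w).signedMinor = u • f from _root_.funext huf]
    rw [Pi.smul_def, Set.range_smul]
    exact (Submodule.span_smul_eq_of_isUnit _ u hu).symm

end Syzygies

open MvPolynomial

set_option synthInstance.maxHeartbeats 400000 in
/-- Hilbert–Burch: a codimension-`2` closed subscheme `V ⊂ P^n`,
given by its saturated homogeneous ideal `I ⊂ R = k[z₀,…,z_n]` with
`dim R/I = n−1`, is standard determinantal (its ideal is generated by the maximal
minors of a homogeneous `t×(t+1)` matrix) if and only if it is arithmetically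
Cohen–Macaulay (there is a regular sequence on `R/I` of elements of the irrelevant
maximal ideal of length `n−1 = dim R/I`). -/
theorem hilbert_burch (k : Type*) [Field k] (n : ℕ) (hn : 2 ≤ n)
    (I : Ideal (MvPolynomial (Fin (n + 1)) k))
    (hhom : ∃ S : Set (MvPolynomial (Fin (n + 1)) k),
      (∀ s ∈ S, ∃ d, s.IsHomogeneous d) ∧ I = Ideal.span S)
    (hsat : ∀ f, (∃ N : ℕ,
        ∀ g ∈ (Ideal.span (Set.range X) : Ideal (MvPolynomial (Fin (n + 1)) k)) ^ N,
          g * f ∈ I) → f ∈ I)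
    (hcodim2 : ringKrullDim (MvPolynomial (Fin (n + 1)) k ⧸ I) = ((n - 1 : ℕ) : WithBot ℕ∞)) :
    (∃ (t : ℕ) (A : Matrix (Fin t) (Fin (t + 1)) (MvPolynomial (Fin (n + 1)) k))
        (a : Fin (t + 1) → ℕ) (b : Fin t → ℕ),
      (∀ i j, A i j = 0 ∨ ((A i j).IsHomogeneous (a j - b i) ∧ b i ≤ a j)) ∧
      I = Ideal.span {d | ∃ j : Fin (t + 1), d = (A.submatrix id j.succAbove).det})
    ↔
    (∃ L : List (MvPolynomial (Fin (n + 1)) k),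
      L.length = n - 1 ∧
      (∀ x ∈ L, x ∈ (Ideal.span (Set.range X) : Ideal (MvPolynomial (Fin (n + 1)) k))) ∧
      RingTheory.Sequence.IsRegular (MvPolynomial (Fin (n + 1)) k ⧸ I)
        (L.map (Ideal.Quotient.mk I))) := by
  obtain ⟨S, hS, hIS⟩ := hhom
  have hn1 : 1 ≤ n := by omega
  rw [exists_isRegular_quotient_iff
    (le_idealOfVars_of_homogeneous (ne_top_of_ringKrullDim_eq hcodim2) hS hIS)]
  simp only [← Matrix.span_signedMinor]
  constructor
  · rintro ⟨t, A, a, b, -, hA⟩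
    exact extVanishesBelow_quotient_of_minors hn1 hcodim2 hA
  · exact exists_matrix_of_extVanishesBelow hn1 hcodim2 hS hIS
end

section
/- In R = k[z_0,…,z_5], with I_F the ideal of 2×2 minors of [[z_0,z_3,z_4],[z_3,z_1,z_5],[z_4,z_5,z_2]] and I_H = (z_0,z_3,z_4), the intersection I_F ∩ I_H equals the ideal I_X = (z_3z_4 − z_0z_5, z_1z_4 − z_3z_5, z_2z_3 − z_4z_5, z_0z_2 − z_4^2, z_0z_1 − z_3^2). -/
open MvPolynomial

namespace MvPolynomial

/-- A polynomial differs from its value at `s = 0` by an element of the ideal generated by the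
variables in `s`. -/
theorem sub_bind₁_indicator_mem_span_X_image {σ R : Type*} [CommRing R] (s : Set σ)
    (p : MvPolynomial σ R) :
    p - bind₁ (sᶜ.indicator (X : σ → MvPolynomial σ R)) p ∈ Ideal.span (X '' s) := by
  suffices Ideal.Quotient.mkₐ R (Ideal.span (X '' s)) =
      (Ideal.Quotient.mkₐ R _).comp (bind₁ (sᶜ.indicator (X : σ → MvPolynomial σ R))) from
    Ideal.Quotient.eq.1 (DFunLike.congr_fun this p)
  ext i
  by_cases hi : i ∈ s
  · simpa [hi, Ideal.Quotient.eq_zero_iff_mem] using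
      Ideal.subset_span (Set.mem_image_of_mem X hi)
  · simp [hi]

/-- The kernel of setting the variables in `s` to zero is the ideal they generate. -/
theorem mem_span_X_image_iff_bind₁_indicator_eq_zero {σ R : Type*} [CommRing R] {s : Set σ}
    {p : MvPolynomial σ R} :
    p ∈ Ideal.span (X '' s) ↔ bind₁ (sᶜ.indicator (X : σ → MvPolynomial σ R)) p = 0 := by
  refine ⟨fun hp ↦ ?_, fun hp ↦ by simpa [hp] using sub_bind₁_indicator_mem_span_X_image s p⟩
  suffices Ideal.span (X '' s) ≤ RingHom.ker (bind₁ (sᶜ.indicator (X : σ → MvPolynomial σ R)))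
    from this hp
  rw [Ideal.span_le]
  rintro _ ⟨i, hi, rfl⟩
  simp [hi]

end MvPolynomial

/-- in `R = k[z₀,…,z₅]`, with `I_F` the ideal of `2×2` minors of
`[[z₀,z₃,z₄],[z₃,z₁,z₅],[z₄,z₅,z₂]]` and `I_H = (z₀,z₃,z₄)`, one has
`I_F ∩ I_H = (z₃z₄−z₀z₅, z₁z₄−z₃z₅, z₂z₃−z₄z₅, z₀z₂−z₄², z₀z₁−z₃²)`. -/
theorem veronese_link_ideal (k : Type*) [Field k] :
    letI R := MvPolynomial (Fin 6) k
    letI z : Fin 6 → R := X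
    letI IF : Ideal R := Ideal.span
      {z 3 * z 4 - z 0 * z 5, z 1 * z 4 - z 3 * z 5, z 2 * z 3 - z 4 * z 5,
       z 1 * z 2 - z 5 ^ 2, z 0 * z 2 - z 4 ^ 2, z 0 * z 1 - z 3 ^ 2}
    letI IH : Ideal R := Ideal.span {z 0, z 3, z 4}
    IF ⊓ IH = Ideal.span
      {z 3 * z 4 - z 0 * z 5, z 1 * z 4 - z 3 * z 5, z 2 * z 3 - z 4 * z 5,
       z 0 * z 2 - z 4 ^ 2, z 0 * z 1 - z 3 ^ 2} := by
  let z : Fin 6 → MvPolynomial (Fin 6) k := X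
  let IF : Ideal (MvPolynomial (Fin 6) k) := Ideal.span
    {z 3 * z 4 - z 0 * z 5, z 1 * z 4 - z 3 * z 5, z 2 * z 3 - z 4 * z 5,
     z 1 * z 2 - z 5 ^ 2, z 0 * z 2 - z 4 ^ 2, z 0 * z 1 - z 3 ^ 2}
  let IH : Ideal (MvPolynomial (Fin 6) k) := Ideal.span {z 0, z 3, z 4}
  let IX : Ideal (MvPolynomial (Fin 6) k) := Ideal.span
    {z 3 * z 4 - z 0 * z 5, z 1 * z 4 - z 3 * z 5, z 2 * z 3 - z 4 * z 5,
     z 0 * z 2 - z 4 ^ 2, z 0 * z 1 - z 3 ^ 2}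
  change IF ⊓ IH = IX
  have hIH : IH = Ideal.span (X '' {0, 3, 4}) := by simp [IH, z, Set.image_insert_eq]
  have hIX_IH : IX ≤ IH := by
    rw [hIH, Ideal.span_le]
    rintro _ (rfl | rfl | rfl | rfl | rfl) <;>
      simp [mem_span_X_image_iff_bind₁_indicator_eq_zero, z]
  have hIF : IF = Ideal.span {z 1 * z 2 - z 5 ^ 2} ⊔ IX := by
    rw [← Ideal.span_union, Set.singleton_union, Set.insert_comm (z 1 * z 2 - z 5 ^ 2),
      Set.insert_comm (z 1 * z 2 - z 5 ^ 2), Set.insert_comm (z 1 * z 2 - z 5 ^ 2)]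
  apply le_antisymm
  · rintro f ⟨hfF, hfH⟩
    rw [SetLike.mem_coe, hIF, Ideal.mem_span_singleton_sup] at hfF
    obtain ⟨a, g, hg, rfl⟩ := hfF
    have haq : a * (z 1 * z 2 - z 5 ^ 2) ∈ IH :=
      (Ideal.add_mem_iff_left _ (hIX_IH hg)).1 hfH
    have hq : z 1 * z 2 - z 5 ^ 2 ≠ 0 := fun h ↦ by
      simpa [z] using congrArg (eval ![0, 1, 1, 0, 0, 0]) h
    have ha : a ∈ IH := by
      rw [hIH, mem_span_X_image_iff_bind₁_indicator_eq_zero] at haq ⊢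
      simpa [z, hq] using haq
    refine add_mem ?_ hg
    suffices IH ≤ IX.colon {z 1 * z 2 - z 5 ^ 2} by
      simpa [Submodule.mem_colon_singleton] using this ha
    have h₁ : z 3 * z 4 - z 0 * z 5 ∈ IX := Ideal.subset_span (by simp)
    have h₂ : z 1 * z 4 - z 3 * z 5 ∈ IX := Ideal.subset_span (by simp)
    have h₃ : z 2 * z 3 - z 4 * z 5 ∈ IX := Ideal.subset_span (by simp)
    have h₄ : z 0 * z 2 - z 4 ^ 2 ∈ IX := Ideal.subset_span (by simp)
    rw [Ideal.span_le]
    rintro _ (rfl | rfl | rfl) <;>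
      rw [SetLike.mem_coe, Submodule.mem_colon_singleton, smul_eq_mul]
    · convert add_mem (add_mem (IX.mul_mem_left (z 1) h₄) (IX.mul_mem_left (z 4) h₂))
        (IX.mul_mem_left (z 5) h₁) using 1
      ring
    · convert add_mem (IX.mul_mem_left (z 1) h₃) (IX.mul_mem_left (z 5) h₂) using 1
      ring
    · convert add_mem (IX.mul_mem_left (z 2) h₂) (IX.mul_mem_left (z 5) h₃) using 1
      ring
  · exact le_inf (hIF ▸ le_sup_right) hIX_IH
end

section
/- In R = k[z_0,…,z_5] with I_X = (z_3z_4 − z_0z_5, z_1z_4 − z_3z_5, z_2z_3 − z_4z_5, z_0z_2 − z_4^2, z_0z_1 − z_3^2), the ring R/I_X is Gorenstein; equivalently, I_X admits a graded free resolution 0 → R(−5) → 5R(−3) → 5R(−2) → I_X → 0. -/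
open MvPolynomial

section MonicQuadrics

open Polynomial

variable {A : Type*} [CommRing A]

theorem Polynomial.Monic.dvd_of_dvd_C_mul [IsDomain A] {f u : A[X]} (hf : f.Monic) {c : A}
    (hc : c ≠ 0) (h : f ∣ C c * u) : f ∣ u := by
  rw [← modByMonic_eq_zero_iff_dvd hf] at h ⊢
  rw [← smul_eq_C_mul, smul_modByMonic] at h
  exact (smul_eq_zero.mp h).resolve_left hc

theorem Polynomial.mem_span_pair_of_C_mul [IsDomain A] {F : A[X][X]} {H : A[X]} (hF : F.Monic)
    (hH : H.Monic) {n : A} (hn : n ≠ 0) {r p q : A[X][X]}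
    (h : C (C n) * r = F * p + C H * q) : ∃ c d, r = F * c + C H * d := by
  have hmod : C n • (r %ₘ F) = H • (q %ₘ F) := by
    rw [← smul_modByMonic, ← smul_modByMonic, smul_eq_C_mul, smul_eq_C_mul, h, add_modByMonic,
      (modByMonic_eq_zero_iff_dvd hF).mpr (dvd_mul_right F p), zero_add]
  obtain ⟨d, hd⟩ : C H ∣ r %ₘ F := by
    rw [C_dvd_iff_dvd_coeff]
    intro i
    refine hH.dvd_of_dvd_C_mul hn ⟨(q %ₘ F).coeff i, ?_⟩
    simpa using congrArg (fun s => coeff s i) hmod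
  exact ⟨r /ₘ F, d, by rw [← hd, add_comm, modByMonic_add_div r F]⟩

end MonicQuadrics

section Veronese

variable (k : Type*) [Field k]

/-- The polynomial ring in six variables as an iterated polynomial ring in the variables
`z₃` (outer) and `z₄` (inner). -/
noncomputable def iteratedPolynomialEquiv :
    MvPolynomial (Fin 6) k ≃ₐ[k] Polynomial (Polynomial (MvPolynomial (Fin 4) k)) :=
  ((renameEquiv k (⟨![2, 3, 4, 0, 1, 5], ![3, 4, 0, 1, 2, 5], by decide, by decide⟩ :
    Fin 6 ≃ Fin 6)).trans (finSuccEquiv k 5)).trans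
      (Polynomial.mapAlgEquiv (finSuccEquiv k 4))

theorem iteratedPolynomialEquiv_X (i : Fin 6) :
    iteratedPolynomialEquiv k (X i) =
      ![Polynomial.C (Polynomial.C (X 0)), Polynomial.C (Polynomial.C (X 1)),
        Polynomial.C (Polynomial.C (X 2)), Polynomial.X, Polynomial.C Polynomial.X,
        Polynomial.C (Polynomial.C (X 3))] i := by
  have h (j : Fin 5) : finSuccEquiv k 5 (X j.succ) = Polynomial.C (X j) := finSuccEquiv_X_succ
  have h' (j : Fin 4) : finSuccEquiv k 4 (X j.succ) = Polynomial.C (X j) := finSuccEquiv_X_succ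
  have h0 := h 0
  have h1 := h 1
  have h2 := h 2
  have h3 := h 3
  have h4 := h 4
  have h0' := h' 0
  have h1' := h' 1
  have h2' := h' 2
  have h3' := h' 3
  simp only [Fin.isValue, Fin.reduceSucc] at h0 h1 h2 h3 h4 h0' h1' h2' h3'
  fin_cases i <;>
    simp [iteratedPolynomialEquiv, finSuccEquiv_X_zero, h0, h1, h2, h3, h4, h0', h1', h2', h3']

variable {k}

theorem iteratedPolynomialEquiv_outer_quadric :
    iteratedPolynomialEquiv k (X 3 ^ 2 - X 0 * X 1) =
      Polynomial.X ^ 2 - Polynomial.C (Polynomial.C (X 0 * X 1)) := by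
  simp [iteratedPolynomialEquiv_X]

theorem iteratedPolynomialEquiv_inner_quadric :
    iteratedPolynomialEquiv k (X 4 ^ 2 - X 0 * X 2) =
      Polynomial.C (Polynomial.X ^ 2 - Polynomial.C (X 0 * X 2)) := by
  simp [iteratedPolynomialEquiv_X]

theorem quadric_dvd_of_dvd_mul {u : MvPolynomial (Fin 6) k}
    (h : X 3 ^ 2 - X 0 * X 1 ∣ (X 4 ^ 2 - X 0 * X 2) * u) : X 3 ^ 2 - X 0 * X 1 ∣ u := by
  rw [← map_dvd_iff (iteratedPolynomialEquiv k), iteratedPolynomialEquiv_outer_quadric] at h ⊢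
  rw [map_mul (iteratedPolynomialEquiv k) _ u, iteratedPolynomialEquiv_inner_quadric] at h
  exact (Polynomial.monic_X_pow_sub_C _ two_ne_zero).dvd_of_dvd_C_mul
    (Polynomial.monic_X_pow_sub_C _ two_ne_zero).ne_zero h

theorem mem_span_quadrics_of_mul {r a b : MvPolynomial (Fin 6) k}
    (h : (X 3 * X 4 - X 0 * X 5) * r =
      (X 3 ^ 2 - X 0 * X 1) * a + (X 4 ^ 2 - X 0 * X 2) * b) :
    ∃ c d, r = (X 3 ^ 2 - X 0 * X 1) * c + (X 4 ^ 2 - X 0 * X 2) * d := by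
  have hnorm : X 0 ^ 2 * (X 1 * X 2 - X 5 ^ 2) * r =
      (X 3 ^ 2 - X 0 * X 1) * ((X 3 * X 4 + X 0 * X 5) * a - X 0 * X 2 * r) +
        (X 4 ^ 2 - X 0 * X 2) * ((X 3 * X 4 + X 0 * X 5) * b - X 3 ^ 2 * r) := by
    linear_combination (X 3 * X 4 + X 0 * X 5) * h
  have hn : (X 0 ^ 2 * (X 1 * X 2 - X 3 ^ 2) : MvPolynomial (Fin 4) k) ≠ 0 := by
    intro h0
    simpa using congrArg (eval ![1, 1, 1, 0]) h0
  have hN : iteratedPolynomialEquiv k (X 0 ^ 2 * (X 1 * X 2 - X 5 ^ 2)) =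
      Polynomial.C (Polynomial.C (X 0 ^ 2 * (X 1 * X 2 - X 3 ^ 2))) := by
    simp [iteratedPolynomialEquiv_X]
  have hmap := congrArg (iteratedPolynomialEquiv k) hnorm
  rw [map_mul _ (_ * _) r, map_add, map_mul _ (_ - _), map_mul _ (_ - _),
    iteratedPolynomialEquiv_outer_quadric, iteratedPolynomialEquiv_inner_quadric, hN] at hmap
  obtain ⟨c, d, hcd⟩ := Polynomial.mem_span_pair_of_C_mul
    (Polynomial.monic_X_pow_sub_C _ two_ne_zero) (Polynomial.monic_X_pow_sub_C _ two_ne_zero)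
    hn hmap
  refine ⟨(iteratedPolynomialEquiv k).symm c, (iteratedPolynomialEquiv k).symm d,
    (iteratedPolynomialEquiv k).injective ?_⟩
  rw [map_add, map_mul, map_mul, iteratedPolynomialEquiv_outer_quadric,
    iteratedPolynomialEquiv_inner_quadric, AlgEquiv.apply_symm_apply, AlgEquiv.apply_symm_apply,
    hcd]

end Veronese

/-- If `0 → R → Rⁿ → Rⁿ` is exact, with maps `g` and `M`, then a vector lies in the image of `M`
as soon as its multiples by the elements of a regular sequence of length three do. -/
theorem Matrix.exists_mulVec_eq_of_regular {R n : Type*} [CommRing R] [IsDomain R] [Fintype n]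
    {M : Matrix n n R} {g : n → R} (hg : g ≠ 0)
    (hker : ∀ v, M.mulVec v = 0 ↔ ∃ r : R, v = r • g)
    {f₁ f₂ f₃ : R} (hf₁ : f₁ ≠ 0) (h₂ : ∀ u, f₁ ∣ f₂ * u → f₁ ∣ u)
    (h₃ : ∀ r a b, f₃ * r = f₁ * a + f₂ * b → ∃ c d, r = f₁ * c + f₂ * d)
    {w v₁ v₂ v₃ : n → R} (hv₁ : M.mulVec v₁ = f₁ • w) (hv₂ : M.mulVec v₂ = f₂ • w)
    (hv₃ : M.mulVec v₃ = f₃ • w) : ∃ v, w = M.mulVec v := by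
  have hdiff {p q : R} {x y : n → R} (hx : M.mulVec x = p • w) (hy : M.mulVec y = q • w) :
      ∃ r : R, q • x - p • y = r • g := by
    rw [← hker, Matrix.mulVec_sub, Matrix.mulVec_smul, Matrix.mulVec_smul, hx, hy,
      smul_comm, sub_self]
  obtain ⟨r₁₂, h₁₂⟩ := hdiff hv₁ hv₂
  obtain ⟨r₁₃, h₁₃⟩ := hdiff hv₁ hv₃
  obtain ⟨r₂₃, h₂₃⟩ := hdiff hv₂ hv₃
  have hrel : f₃ * r₁₂ = f₁ * (-r₂₃) + f₂ * r₁₃ := by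
    refine smul_left_injective R hg ?_
    have : (f₃ * r₁₂) • g = (f₁ * (-r₂₃) + f₂ * r₁₃) • g := by
      simp only [add_smul, mul_smul, neg_smul, ← h₁₂, ← h₁₃, ← h₂₃]
      module
    exact this
  obtain ⟨c, d, hcd⟩ := h₃ _ _ _ hrel
  have hdvd (i : n) : f₁ ∣ v₁ i - d * g i := by
    refine h₂ _ ⟨v₂ i + c * g i, ?_⟩
    have := congrFun h₁₂ i
    simp only [Pi.sub_apply, Pi.smul_apply, smul_eq_mul, hcd] at this
    linear_combination this
  choose u hu using hdvd
  have hv : v₁ = f₁ • u + d • g := by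
    ext i
    simp only [Pi.add_apply, Pi.smul_apply, smul_eq_mul, ← hu]
    ring
  refine ⟨u, smul_right_injective _ hf₁ ?_⟩
  have : f₁ • w = f₁ • M.mulVec u := by
    rw [← hv₁, hv, Matrix.mulVec_add, (hker (d • g)).mpr ⟨d, rfl⟩, Matrix.mulVec_smul, add_zero]
  exact this

/-- in `R = k[z₀,…,z₅]`, the ideal
`I_X = (z₃z₄−z₀z₅, z₁z₄−z₃z₅, z₂z₃−z₄z₅, z₀z₂−z₄², z₀z₁−z₃²)` defines a Gorenstein
quotient `R/I_X`; equivalently, `I_X` admits a graded free resolution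
`0 → R(−5) → 5R(−3) → 5R(−2) → I_X → 0`, i.e. there is an exact sequence with a
degree-`2` column `m₁` (the map `R(−5) → 5R(−3)`), a matrix `M₂` of linear forms
(the map `5R(−3) → 5R(−2)`), and the five quadratic generators surjecting onto
`I_X`. -/
theorem gorenstein_resolution (k : Type*) [Field k] :
    letI R := MvPolynomial (Fin 6) k
    letI z : Fin 6 → R := X
    letI gens : Fin 5 → R :=
      ![z 3 * z 4 - z 0 * z 5, z 1 * z 4 - z 3 * z 5, z 2 * z 3 - z 4 * z 5,
        z 0 * z 2 - z 4 ^ 2, z 0 * z 1 - z 3 ^ 2]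
    letI IX : Ideal R := Ideal.span (Set.range gens)
    ∃ (M₂ : Matrix (Fin 5) (Fin 5) R) (m₁ : Fin 5 → R),
      (∀ i j, (M₂ i j).IsHomogeneous 1) ∧ (∀ i, (m₁ i).IsHomogeneous 2) ∧
      Function.Injective (fun r : R => r • m₁) ∧
      (∀ v : Fin 5 → R, M₂.mulVec v = 0 ↔ ∃ r : R, v = r • m₁) ∧
      (∀ w : Fin 5 → R, (∑ i, w i * gens i) = 0 ↔ ∃ v : Fin 5 → R, w = M₂.mulVec v) ∧
      (∀ x : R, x ∈ IX ↔ ∃ w : Fin 5 → R, x = ∑ i, w i * gens i) := by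
  set z : Fin 6 → MvPolynomial (Fin 6) k := X
  set gens : Fin 5 → MvPolynomial (Fin 6) k :=
    ![z 3 * z 4 - z 0 * z 5, z 1 * z 4 - z 3 * z 5, z 2 * z 3 - z 4 * z 5,
      z 0 * z 2 - z 4 ^ 2, z 0 * z 1 - z 3 ^ 2]
  let M : Matrix (Fin 5) (Fin 5) (MvPolynomial (Fin 6) k) :=
    !![0, z 4, -z 3, z 1, -z 2; -z 4, 0, z 0, -z 3, 0; z 3, -z 0, 0, 0, z 4;
      -z 1, z 3, 0, 0, -z 5; z 2, 0, -z 4, z 5, 0]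
  have hf₁ : z 3 ^ 2 - z 0 * z 1 ≠ 0 := by
    intro h0
    simpa [z] using congrArg (eval ![1, 1, 1, 0, 0, 0]) h0
  have hgens : gens ≠ 0 := by
    intro h0
    have h4 : z 0 * z 1 - z 3 ^ 2 = 0 := congrFun h0 4
    exact hf₁ (by linear_combination -h4)
  have hM (v : Fin 5 → MvPolynomial (Fin 6) k) : M.mulVec v =
      ![z 4 * v 1 - z 3 * v 2 + z 1 * v 3 - z 2 * v 4, -z 4 * v 0 + z 0 * v 2 - z 3 * v 3,
        z 3 * v 0 - z 0 * v 1 + z 4 * v 4, -z 1 * v 0 + z 3 * v 1 - z 5 * v 4,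
        z 2 * v 0 - z 4 * v 2 + z 5 * v 3] := by
    ext1 i
    fin_cases i <;> simp [M, Matrix.mulVec, dotProduct, Fin.sum_univ_five] <;> ring
  have hker (v : Fin 5 → MvPolynomial (Fin 6) k) : M.mulVec v = 0 ↔ ∃ r : MvPolynomial (Fin 6) k, v = r • gens := by
    constructor
    · intro h
      rw [hM] at h
      have e0 : _ = (0 : MvPolynomial (Fin 6) k) := congrFun h 0
      have e1 : _ = (0 : MvPolynomial (Fin 6) k) := congrFun h 1
      have e2 : _ = (0 : MvPolynomial (Fin 6) k) := congrFun h 2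
      have e3 : _ = (0 : MvPolynomial (Fin 6) k) := congrFun h 3
      have e4 : _ = (0 : MvPolynomial (Fin 6) k) := congrFun h 4
      simp only [Matrix.cons_val] at e0 e1 e2 e3 e4
      have h3 : (z 3 ^ 2 - z 0 * z 1) * v 3 = (z 4 ^ 2 - z 0 * z 2) * v 4 := by
        linear_combination -z 0 * e0 - z 3 * e1 - z 4 * e2
      obtain ⟨r, hr⟩ := quadric_dvd_of_dvd_mul ⟨v 3, h3.symm⟩
      refine ⟨-r, funext fun i => mul_left_cancel₀ hf₁ ?_⟩
      fin_cases i <;> simp only [gens, Fin.zero_eta, Fin.mk_one, Fin.reduceFinMk, Pi.smul_apply,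
        smul_eq_mul, Matrix.cons_val]
      · linear_combination z 3 * e2 + z 0 * e3 - (z 3 * z 4 - z 0 * z 5) * hr
      · linear_combination z 1 * e2 + z 3 * e3 - (z 1 * z 4 - z 3 * z 5) * hr
      · linear_combination -z 3 * e0 - z 1 * e1 + z 4 * e3 - (z 2 * z 3 - z 4 * z 5) * hr
      · linear_combination h3 + (z 4 ^ 2 - z 0 * z 2) * hr
      · linear_combination (z 3 ^ 2 - z 0 * z 1) * hr
    · rintro ⟨r, rfl⟩
      rw [hM]
      ext1 i
      fin_cases i <;> simp [gens] <;> ring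
  refine ⟨M, gens, ?_, ?_, smul_left_injective _ hgens, hker, ?_, ?_⟩
  · have hX (i : Fin 6) : (z i).IsHomogeneous 1 := isHomogeneous_X k i
    have h0 : (0 : MvPolynomial (Fin 6) k).IsHomogeneous 1 := isHomogeneous_zero _ _ _
    intro i j
    fin_cases i <;> fin_cases j <;> first | exact h0 | exact hX _ | exact (hX _).neg
  · have hX (i j : Fin 6) : (z i * z j).IsHomogeneous 2 :=
      (isHomogeneous_X k i).mul (isHomogeneous_X k j)
    intro i
    fin_cases i <;> simp only [gens, sq] <;> exact (hX _ _).sub (hX _ _)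
  · intro w
    constructor
    · intro h
      simp only [gens, Fin.sum_univ_five, Matrix.cons_val] at h
      refine Matrix.exists_mulVec_eq_of_regular hgens hker hf₁
        (f₂ := z 4 ^ 2 - z 0 * z 2) (f₃ := z 3 * z 4 - z 0 * z 5)
        (fun _ => quadric_dvd_of_dvd_mul) (fun _ _ _ => mem_span_quadrics_of_mul)
        (v₁ := ![z 3 * w 2 + z 0 * w 3, z 1 * w 2 + z 3 * w 3,
          -z 3 * w 0 - z 1 * w 1 + z 4 * w 3, -z 0 * w 0 - z 3 * w 1 - z 4 * w 2, 0])
        (v₂ := ![-z 4 * w 1 - z 0 * w 4, z 4 * w 0 + z 2 * w 2 - z 3 * w 4,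
          -z 2 * w 1 - z 4 * w 4, 0, z 0 * w 0 + z 3 * w 1 + z 4 * w 2])
        (v₃ := ![0, z 5 * w 2 + z 4 * w 3, -z 5 * w 1 - z 3 * w 4,
          -z 4 * w 1 - z 0 * w 4, z 3 * w 2 + z 0 * w 3]) ?_ ?_ ?_
      · rw [hM]
        ext1 i
        fin_cases i <;> simp only [Fin.zero_eta, Fin.mk_one, Fin.reduceFinMk, Pi.smul_apply,
          smul_eq_mul, Matrix.cons_val]
        on_goal 5 => linear_combination h
        all_goals ring
      · rw [hM]
        ext1 i
        fin_cases i <;> simp only [Fin.zero_eta, Fin.mk_one, Fin.reduceFinMk, Pi.smul_apply,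
          smul_eq_mul, Matrix.cons_val]
        on_goal 4 => linear_combination h
        all_goals ring
      · rw [hM]
        ext1 i
        fin_cases i <;> simp only [Fin.zero_eta, Fin.mk_one, Fin.reduceFinMk, Pi.smul_apply,
          smul_eq_mul, Matrix.cons_val]
        on_goal 1 => linear_combination -h
        all_goals ring
    · rintro ⟨v, rfl⟩
      rw [hM]
      simp only [gens, Fin.sum_univ_five, Matrix.cons_val]
      ring
  · intro x
    rw [Ideal.mem_span_range_iff_exists_fun]
    simp only [eq_comm]
end

section
/- Let I ⊂ R = k[z_0,…,z_n] be a saturated unmixed ideal and J ⊆ I an ideal generated by a regular sequence of homogeneous elements with ht(J) = ht(I). Then the double link (J : (J : I)) = I. -/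
open MvPolynomial

section Duality

theorem Module.length_le_of_exact {R M N P : Type*} [Ring R] [AddCommGroup M] [Module R M]
    [AddCommGroup N] [Module R N] [AddCommGroup P] [Module R P] {f : N →ₗ[R] M} {g : M →ₗ[R] P}
    (hfg : Function.Exact f g) :
    Module.length R M ≤ Module.length R N + Module.length R P := by
  have hker : LinearMap.ker g = LinearMap.range f := LinearMap.exact_iff.mp hfg
  have hexact : Function.Exact (LinearMap.ker g).subtype g.rangeRestrict := by
    rw [LinearMap.exact_iff, LinearMap.ker_rangeRestrict, Submodule.range_subtype]
  rw [Module.length_eq_add_of_exact _ _ (Submodule.subtype_injective _)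
    g.surjective_rangeRestrict hexact, hker]
  exact add_le_add (Module.length_le_of_surjective _ f.surjective_rangeRestrict)
    (Module.length_le_of_injective _ (Submodule.subtype_injective _))

variable {B : Type*} [CommRing B] [IsLocalRing B]

open IsLocalRing

/-- Over a local ring whose socle is cyclic, the dual `Hom(N, B)` of a module of finite length
is no longer than `N`. -/
theorem length_linearMap_le_of_socle_le_span {s : B} (hs : ∀ t ∈ maximalIdeal B, t * s = 0)
    (hsoc : ∀ z : B, (∀ t ∈ maximalIdeal B, t * z = 0) → z ∈ Ideal.span {s})
    {N : Type*} [AddCommGroup N] [Module B N] (hN : IsFiniteLength B N) :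
    Module.length B (N →ₗ[B] B) ≤ Module.length B N := by
  induction hN with
  | of_subsingleton => rw [Module.length_eq_zero]; exact zero_le
  | @of_simple_quotient M _ _ N hsimple hN ih =>
    have hquot : Module.length B ((M ⧸ N) →ₗ[B] B) ≤ 1 := by
      obtain ⟨m, hm, ⟨e⟩⟩ := isSimpleModule_iff_quot_maximal.mp hsimple
      obtain rfl := eq_maximalIdeal hm
      have hone : Module.length B (B ⧸ maximalIdeal B) = 1 :=
        Module.length_eq_one_iff.mpr (isSimpleModule_iff_quot_maximal.mpr ⟨_, hm, ⟨.refl _ _⟩⟩)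
      let g : (B ⧸ maximalIdeal B) →ₗ[B] Ideal.span {s} :=
        Submodule.liftQ _ (LinearMap.toSpanSingleton B _ ⟨s, Ideal.mem_span_singleton_self s⟩)
          fun t ht ↦ by
            rw [LinearMap.mem_ker]
            ext
            simpa using hs t ht
      have hg : Function.Surjective g := by
        rintro ⟨z, hz⟩
        obtain ⟨a, rfl⟩ := Ideal.mem_span_singleton'.mp hz
        exact ⟨Submodule.Quotient.mk a, Subtype.ext rfl⟩
      have hev (f : (M ⧸ N) →ₗ[B] B) : f (e.symm (Submodule.Quotient.mk 1)) ∈ Ideal.span {s} := by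
        refine hsoc _ fun t ht ↦ ?_
        rw [← smul_eq_mul, ← map_smul, ← map_smul, ← Submodule.Quotient.mk_smul, smul_eq_mul,
          mul_one, (Submodule.Quotient.mk_eq_zero _).mpr ht, map_zero, map_zero]
      let ev : ((M ⧸ N) →ₗ[B] B) →ₗ[B] Ideal.span {s} :=
        (LinearMap.applyₗ (e.symm (Submodule.Quotient.mk 1))).codRestrict _ hev
      have hev_inj : Function.Injective ev := by
        rw [← LinearMap.ker_eq_bot, LinearMap.ker_eq_bot']
        intro f hf
        have hf1 : f (e.symm (Submodule.Quotient.mk 1)) = 0 := congrArg Subtype.val hf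
        ext x
        obtain ⟨y, hy⟩ := e.symm.surjective (Submodule.Quotient.mk x)
        obtain ⟨b, rfl⟩ := Submodule.Quotient.mk_surjective _ y
        have : (Submodule.Quotient.mk b : B ⧸ maximalIdeal B)
            = b • Submodule.Quotient.mk 1 := by
          rw [← Submodule.Quotient.mk_smul, smul_eq_mul, mul_one]
        simp only [LinearMap.comp_apply, Submodule.mkQ_apply, ← hy, this, map_smul, hf1, smul_zero,
          LinearMap.zero_apply, LinearMap.zero_comp]
      exact (Module.length_le_of_injective ev hev_inj).trans
        ((Module.length_le_of_surjective g hg).trans hone.le)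
    let r : (M →ₗ[B] B) →ₗ[B] (N →ₗ[B] B) := LinearMap.lcomp B B N.subtype
    let q : ((M ⧸ N) →ₗ[B] B) →ₗ[B] (M →ₗ[B] B) := LinearMap.lcomp B B N.mkQ
    have hqr : Function.Exact q r := by
      intro f
      refine ⟨fun hf ↦ ⟨N.liftQ f fun x hx ↦ ?_, ?_⟩, ?_⟩
      · exact LinearMap.congr_fun hf ⟨x, hx⟩
      · ext x; rfl
      · rintro ⟨f, rfl⟩
        ext x
        change f (Submodule.Quotient.mk x.1) = 0
        rw [(Submodule.Quotient.mk_eq_zero N).mpr x.2, map_zero]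
    calc _ ≤ _ := Module.length_le_of_exact hqr
      _ ≤ 1 + Module.length B N := add_le_add hquot ih
      _ = Module.length B N + Module.length B (M ⧸ N) := by
        rw [add_comm, Module.length_eq_one_iff.mpr hsimple]
      _ = _ := (Module.length_eq_add_of_exact N.subtype N.mkQ (Submodule.subtype_injective _)
        (Submodule.mkQ_surjective _) (LinearMap.exact_subtype_mkQ N)).symm

theorem length_annihilator_add_length [IsArtinianRing B] {s : B}
    (hs : ∀ t ∈ maximalIdeal B, t * s = 0)
    (hsoc : ∀ z : B, (∀ t ∈ maximalIdeal B, t * z = 0) → z ∈ Ideal.span {s}) (I : Ideal B) :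
    Module.length B I.annihilator + Module.length B I = Module.length B B := by
  have hfin {N : Type _} [AddCommGroup N] [Module B N] [Module.Finite B N] : IsFiniteLength B N :=
    isFiniteLength_iff_isNoetherian_isArtinian.mpr ⟨inferInstance, inferInstance⟩
  have hlen := Module.length_eq_add_of_exact I.subtype I.mkQ (Submodule.subtype_injective _)
        (Submodule.mkQ_surjective _) (LinearMap.exact_subtype_mkQ I)
  apply le_antisymm
  · rw [hlen, add_comm]
    gcongr
    refine le_trans ?_ (length_linearMap_le_of_socle_le_span hs hsoc (N := B ⧸ I) hfin)
    let φ : I.annihilator →ₗ[B] (B ⧸ I →ₗ[B] B) :=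
      { toFun a := I.liftQ (LinearMap.mulLeft B a.1) fun x hx ↦ by
          simpa using Submodule.mem_annihilator.mp a.2 x hx
        map_add' a b := by ext; exact add_mul _ _ _
        map_smul' a b := by ext; exact mul_assoc _ _ _ }
    refine Module.length_le_of_injective φ fun a b hab ↦ ?_
    ext
    have h : a.1 * 1 = b.1 * 1 := LinearMap.congr_fun hab (Submodule.Quotient.mk 1)
    simpa using h
  · let ψ : B →ₗ[B] (I →ₗ[B] B) := (LinearMap.lcomp B B I.subtype) ∘ₗ LinearMap.mul B B
    have hker : LinearMap.ker ψ = I.annihilator := by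
      ext a
      simp only [LinearMap.mem_ker, Submodule.mem_annihilator, smul_eq_mul]
      exact ⟨fun h x hx ↦ LinearMap.congr_fun h ⟨x, hx⟩, fun h ↦ by ext x; exact h x x.2⟩
    have hexact : Function.Exact I.annihilator.subtype ψ := by
      rw [LinearMap.exact_iff, Submodule.range_subtype, hker]
    exact (Module.length_le_of_exact hexact).trans <| add_le_add_right
      (length_linearMap_le_of_socle_le_span hs hsoc (N := I) hfin) _

/-- In an Artinian local ring with cyclic socle every ideal is an annihilator. -/
theorem annihilator_annihilator_of_socle_le_span [IsArtinianRing B] {s : B}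
    (hs : ∀ t ∈ maximalIdeal B, t * s = 0)
    (hsoc : ∀ z : B, (∀ t ∈ maximalIdeal B, t * z = 0) → z ∈ Ideal.span {s}) (I : Ideal B) :
    I.annihilator.annihilator = I := by
  have h1 := length_annihilator_add_length hs hsoc I
  have h2 := length_annihilator_add_length hs hsoc I.annihilator
  have hle : I ≤ I.annihilator.annihilator := fun x hx ↦
    Submodule.mem_annihilator.mpr fun a ha ↦ by
      rw [smul_eq_mul, mul_comm]
      exact Submodule.mem_annihilator.mp ha x hx
  rw [← h1, add_comm] at h2
  have h3 := ENat.add_right_injective_of_ne_top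
    (Module.length_ne_top (R := B) (M := I.annihilator)) h2
  by_contra hne
  have := Submodule.height_strictMono (hle.lt_of_ne (Ne.symm hne))
  rw [← Module.length_submodule, ← Module.length_submodule] at this
  exact this.ne h3.symm

end Duality

section Socle

open IsLocalRing RingTheory.Sequence

/-- Quotients of `A ⧸ K` by `I • ⊤` are quotients of `A` by `K ⊔ I`. -/
noncomputable def Ideal.quotQuotSMulTopEquivQuotSup {A : Type*} [CommRing A] (K I : Ideal A) :
    ((A ⧸ K) ⧸ (I • ⊤ : Submodule A (A ⧸ K))) ≃ₗ[A] A ⧸ (K ⊔ I) :=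
  (Submodule.quotEquivOfEq _ _ (by
    rw [← K.range_mkQ, LinearMap.range_eq_map, ← Submodule.map_smul'', smul_eq_mul,
      Ideal.mul_top])).trans
    (Submodule.quotientQuotientEquivQuotientSup K I)

theorem isWeaklyRegular_quotient_cons_iff {A : Type*} [CommRing A] {K : Ideal A} {a : A}
    {L : List A} : IsWeaklyRegular (A ⧸ K) (a :: L) ↔
      IsSMulRegular (A ⧸ K) a ∧ IsWeaklyRegular (A ⧸ (K ⊔ Ideal.span {a})) L := by
  rw [← List.singleton_append, isWeaklyRegular_append_iff, isWeaklyRegular_singleton_iff,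
    Ideal.ofList_singleton, (K.quotQuotSMulTopEquivQuotSup _).isWeaklyRegular_congr]

theorem isWeaklyRegular_quotient_concat_iff {A : Type*} [CommRing A] {K : Ideal A} {a : A}
    {L : List A} : IsWeaklyRegular (A ⧸ K) (L ++ [a]) ↔
      IsWeaklyRegular (A ⧸ K) L ∧ IsSMulRegular (A ⧸ (K ⊔ Ideal.ofList L)) a := by
  rw [isWeaklyRegular_append_iff, isWeaklyRegular_singleton_iff,
    (K.quotQuotSMulTopEquivQuotSup _).isSMulRegular_congr]

theorem isSMulRegular_quotient_iff {A : Type*} [CommRing A] {K : Ideal A} {a : A} :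
    IsSMulRegular (A ⧸ K) a ↔ ∀ x, a * x ∈ K → x ∈ K := by
  rw [isSMulRegular_iff_right_eq_zero_of_smul]
  refine (Submodule.Quotient.mk_surjective K).forall.trans (forall_congr' fun x ↦ ?_)
  rw [← Submodule.Quotient.mk_smul, Submodule.Quotient.mk_eq_zero, Submodule.Quotient.mk_eq_zero,
    smul_eq_mul]

variable {A : Type*} [CommRing A] [IsLocalRing A]

/-- The socle of `A ⧸ K` is cyclic. -/
def HasCyclicSocleMod (K : Ideal A) : Prop :=
  ∃ s, (∀ t ∈ maximalIdeal A, t * s ∈ K) ∧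
    ∀ z, (∀ t ∈ maximalIdeal A, t * z ∈ K) → z ∈ K ⊔ Ideal.span {s}

theorem HasCyclicSocleMod.exchange {K : Ideal A} {a b : A} (ha : a ∈ maximalIdeal A)
    (hb : b ∈ maximalIdeal A) (hrega : IsSMulRegular (A ⧸ K) a) (hregb : IsSMulRegular (A ⧸ K) b)
    (h : HasCyclicSocleMod (K ⊔ Ideal.span {a})) : HasCyclicSocleMod (K ⊔ Ideal.span {b}) := by
  rw [isSMulRegular_quotient_iff] at hrega hregb
  obtain ⟨s, hs, hsoc⟩ := h
  have mem {x y : A} : x ∈ K ⊔ Ideal.span {y} ↔ ∃ t, x - y * t ∈ K := by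
    rw [Submodule.mem_sup]
    constructor
    · rintro ⟨k, hk, _, hz, rfl⟩
      obtain ⟨t, rfl⟩ := Ideal.mem_span_singleton'.mp hz
      exact ⟨t, by convert hk using 1; ring⟩
    · rintro ⟨t, ht⟩
      exact ⟨_, ht, y * t, Ideal.mem_span_singleton.mpr (dvd_mul_right _ _), by ring⟩
  obtain ⟨t, ht⟩ := mem.mp (hs b hb)
  refine ⟨t, fun u hu ↦ ?_, fun z hz ↦ ?_⟩
  · obtain ⟨v, hv⟩ := mem.mp (hs u hu)
    refine mem.mpr ⟨v, hrega _ ?_⟩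
    convert K.sub_mem (K.mul_mem_left b hv) (K.mul_mem_left u ht) using 1
    ring
  · obtain ⟨w, hw⟩ := mem.mp (hz a ha)
    have hw' : w ∈ K ⊔ Ideal.span {a} ⊔ Ideal.span {s} := hsoc _ fun u hu ↦ by
      obtain ⟨v, hv⟩ := mem.mp (hz u hu)
      refine mem.mpr ⟨v, hregb _ ?_⟩
      convert K.sub_mem (K.mul_mem_left a hv) (K.mul_mem_left u hw) using 1
      ring
    obtain ⟨y, hy, _, hx, rfl⟩ := Submodule.mem_sup.mp hw'
    obtain ⟨α, rfl⟩ := Ideal.mem_span_singleton'.mp hx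
    obtain ⟨β, hβ⟩ := mem.mp hy
    have : z - (α * t + b * β) ∈ K := hrega _ <| by
      convert K.add_mem (K.add_mem hw (K.mul_mem_left b hβ)) (K.mul_mem_left α ht) using 1
      ring
    rw [sup_assoc, Submodule.mem_sup]
    refine ⟨_, this, _, Submodule.add_mem _ ?_ ?_, sub_add_cancel _ _⟩
    · exact Ideal.mem_sup_right (Ideal.mem_span_singleton.mpr (dvd_mul_left _ _))
    · exact Ideal.mem_sup_left (Ideal.mem_span_singleton.mpr (dvd_mul_right _ _))

theorem exists_isSMulRegular_notMem_sup_sq [IsNoetherianRing A] {K K' : Ideal A} {a a' : A}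
    (ha : a ∈ maximalIdeal A) (hreg : IsSMulRegular (A ⧸ K) a) (ha' : a' ∈ maximalIdeal A)
    (hreg' : IsSMulRegular (A ⧸ K') a') (hK : K < maximalIdeal A) :
    ∃ z ∈ maximalIdeal A, IsSMulRegular (A ⧸ K) z ∧ IsSMulRegular (A ⧸ K') z ∧
      z ∉ K ⊔ maximalIdeal A ^ 2 := by
  classical
  let Q := K ⊔ maximalIdeal A ^ 2
  have hQ : ¬ maximalIdeal A ≤ Q := fun h ↦ hK.not_ge <|
    Submodule.le_of_le_smul_of_le_jacobson_bot (IsNoetherian.noetherian _)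
      (maximalIdeal_le_jacobson _) (by simpa [Q, pow_two] using h)
  have hfin : (associatedPrimes A (A ⧸ K) ∪ associatedPrimes A (A ⧸ K') ∪ {Q}).Finite :=
    ((associatedPrimes.finite A (A ⧸ K)).union (associatedPrimes.finite A (A ⧸ K'))).union
      (Set.finite_singleton _)
  have hnot : ¬ (maximalIdeal A : Set A) ⊆
      ⋃ I ∈ (associatedPrimes A (A ⧸ K) ∪ associatedPrimes A (A ⧸ K') ∪ {Q}), (I : Set A) := by
    rw [Ideal.subset_union_prime_finite hfin Q Q]
    · rintro ⟨I, (hI | hI) | rfl, hle⟩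
      · have := biUnion_associatedPrimes_eq_compl_regular A (A ⧸ K)
        exact (this.le (Set.mem_biUnion hI (hle ha))) hreg
      · have := biUnion_associatedPrimes_eq_compl_regular A (A ⧸ K')
        exact (this.le (Set.mem_biUnion hI (hle ha'))) hreg'
      · exact hQ hle
    · rintro I ((hI | hI) | hI) h1 -
      · exact hI.1
      · exact hI.1
      · exact absurd hI h1
  obtain ⟨z, hz, hz'⟩ := Set.not_subset.mp hnot
  simp only [Set.biUnion_union, biUnion_associatedPrimes_eq_compl_regular] at hz'
  simp only [Set.mem_union, not_or] at hz'
  exact ⟨z, hz, not_not.mp hz'.1.1, not_not.mp hz'.1.2, by simpa [Q] using hz'.2⟩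

theorem exists_finset_sup_span_eq_maximalIdeal [DecidableEq A] {K : Ideal A} {S : Finset A}
    (hS : K ⊔ Ideal.span S = maximalIdeal A) {z : A} (hz : z ∈ maximalIdeal A)
    (hz' : z ∉ K ⊔ maximalIdeal A ^ 2) :
    ∃ g ∈ S, K ⊔ Ideal.span {z} ⊔ Ideal.span (S.erase g) = maximalIdeal A := by
  have hKm : K ≤ maximalIdeal A := hS ▸ le_sup_left
  have hSm : Ideal.span S ≤ maximalIdeal A := hS ▸ le_sup_right
  obtain ⟨k, hk, y, hy, hkz⟩ := Submodule.mem_sup.mp (hS.ge hz)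
  obtain ⟨c, -, hc⟩ := Submodule.mem_span_finset.mp hy
  obtain ⟨g, hg, hcg⟩ : ∃ g ∈ S, c g ∉ maximalIdeal A := by
    by_contra! h
    refine hz' (hkz ▸ hc ▸ Submodule.add_mem _ (Ideal.mem_sup_left hk) (Ideal.mem_sup_right ?_))
    rw [pow_two]
    exact Submodule.sum_mem _ fun g hg ↦
      Ideal.mul_mem_mul (h g hg) (hSm (Ideal.subset_span hg))
  refine ⟨g, hg, le_antisymm ?_ ?_⟩
  · refine sup_le (sup_le hKm ?_) ((Ideal.span_mono (Finset.erase_subset _ _)).trans hSm)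
    rwa [Ideal.span_singleton_le_iff_mem]
  · rw [← hS]
    refine sup_le (le_sup_left.trans le_sup_left) (Ideal.span_le.mpr fun x hx ↦ ?_)
    by_cases hxg : x = g
    · subst hxg
      have hu : IsUnit (c x) := by simpa using hcg
      refine (Ideal.unit_mul_mem_iff_mem _ hu).mp ?_
      rw [← Finset.add_sum_erase _ _ hg] at hc
      have : c x * x = z - k - ∑ i ∈ S.erase x, c i • i := by
        rw [← hkz, ← hc, smul_eq_mul]; ring
      rw [this]
      refine Submodule.sub_mem _ (Submodule.sub_mem _ ?_ ?_) ?_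
      · exact Ideal.mem_sup_left (Ideal.mem_sup_right (Ideal.mem_span_singleton_self z))
      · exact Ideal.mem_sup_left (Ideal.mem_sup_left hk)
      · exact Ideal.mem_sup_right (Submodule.sum_mem _ fun i hi ↦
          Ideal.mul_mem_left _ _ (Ideal.subset_span hi))
    · exact Ideal.mem_sup_right (Ideal.subset_span (Finset.mem_erase.mpr ⟨hxg, hx⟩))

/-- If the maximal ideal of `A ⧸ K` can be generated by as many elements as a regular sequence `L`
has terms, then the quotient by `L` has cyclic socle. -/
theorem hasCyclicSocleMod_sup_ofList [IsNoetherianRing A] (L : List A) (K : Ideal A)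
    (S : Finset A) (hmem : ∀ x ∈ L, x ∈ maximalIdeal A) (hreg : IsWeaklyRegular (A ⧸ K) L)
    (hS : K ⊔ Ideal.span S = maximalIdeal A) (hcard : S.card ≤ L.length) :
    HasCyclicSocleMod (K ⊔ Ideal.ofList L) := by
  classical
  induction L using List.reverseRecOn generalizing K S with
  | nil =>
    obtain rfl : S = ∅ := by simpa using hcard
    obtain rfl : K = maximalIdeal A := by simpa using hS
    exact ⟨1, by simp, by simp⟩
  | append_singleton L a ih =>
    have ha : a ∈ maximalIdeal A := hmem a (by simp)
    have hL : ∀ x ∈ L, x ∈ maximalIdeal A := fun x hx ↦ hmem x (by simp [hx])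
    have hrega := (isWeaklyRegular_quotient_concat_iff.mp hreg).2
    have hregL := (isWeaklyRegular_quotient_concat_iff.mp hreg).1
    have hperm := isWeaklyRegular_of_perm_of_subset_maximalIdeal hreg
      (List.perm_append_singleton a L) hmem
    have hrega' := (isWeaklyRegular_quotient_cons_iff.mp hperm).1
    have hKm : K < maximalIdeal A := by
      refine (hS ▸ le_sup_left : K ≤ maximalIdeal A).lt_of_ne ?_
      rintro rfl
      refine (Ideal.ne_top_iff_one _).mp (maximalIdeal.isMaximal A).ne_top ?_
      exact isSMulRegular_quotient_iff.mp hrega' 1 (by simpa using ha)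
    obtain ⟨z, hz, hzK, hzL, hz2⟩ :=
      exists_isSMulRegular_notMem_sup_sq ha hrega' ha hrega hKm
    obtain ⟨g, hg, hgS⟩ := exists_finset_sup_span_eq_maximalIdeal hS hz hz2
    have hregz : IsWeaklyRegular (A ⧸ K) (z :: L) :=
      isWeaklyRegular_of_perm_of_subset_maximalIdeal
        (isWeaklyRegular_quotient_concat_iff.mpr ⟨hregL, hzL⟩)
        (List.perm_append_singleton z L) (by simpa [or_imp, forall_and] using ⟨hL, hz⟩)
    have key := ih _ _ hL (isWeaklyRegular_quotient_cons_iff.mp hregz).2 hgS (by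
      rw [Finset.card_erase_of_mem hg]
      simp at hcard
      omega)
    rw [sup_right_comm] at key
    rw [Ideal.ofList_append, Ideal.ofList_singleton, ← sup_assoc]
    exact key.exchange hz ha hzL hrega

end Socle

section Linkage

open IsLocalRing RingTheory.Sequence

theorem Ideal.colon_colon_le_of_hasCyclicSocleMod {A : Type*} [CommRing A] [IsLocalRing A]
    {J I : Ideal A} [IsArtinianRing (A ⧸ J)] (hJ : HasCyclicSocleMod J) (hJt : J ≠ ⊤)
    (hJI : J ≤ I) : J.colon (J.colon (I : Set A) : Set A) ≤ I := by
  have : Nontrivial (A ⧸ J) := Ideal.Quotient.nontrivial_iff.mpr hJt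
  have : IsLocalRing (A ⧸ J) := .of_surjective' (Ideal.Quotient.mk J) Ideal.Quotient.mk_surjective
  have hmap : maximalIdeal (A ⧸ J) = (maximalIdeal A).map (Ideal.Quotient.mk J) :=
    (map_maximalIdeal_of_surjective _ Ideal.Quotient.mk_surjective).symm
  have mk_mem {a : A} (ha : a ∈ maximalIdeal A) : Ideal.Quotient.mk J a ∈ maximalIdeal (A ⧸ J) :=
    hmap ▸ Ideal.mem_map_of_mem _ ha
  obtain ⟨s, hs, hsoc⟩ := hJ
  have key := annihilator_annihilator_of_socle_le_span (s := Ideal.Quotient.mk J s) (fun t ht ↦ by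
      rw [hmap] at ht
      obtain ⟨t, htm, rfl⟩ :=
        (Ideal.mem_map_iff_of_surjective _ Ideal.Quotient.mk_surjective).mp ht
      rw [← map_mul, Ideal.Quotient.eq_zero_iff_mem]
      exact hs t htm) (fun z hz ↦ by
      obtain ⟨z, rfl⟩ := Ideal.Quotient.mk_surjective z
      have := Ideal.mem_map_of_mem (Ideal.Quotient.mk J) <| hsoc z fun t ht ↦ by
        rw [← Ideal.Quotient.eq_zero_iff_mem, map_mul]
        exact hz _ (mk_mem ht)
      simpa [Ideal.map_sup, Ideal.map_span] using this) (I.map (Ideal.Quotient.mk J))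
  intro f hf
  have hmem : Ideal.Quotient.mk J f ∈ I.map (Ideal.Quotient.mk J) := by
    rw [← key, Submodule.mem_annihilator]
    intro a ha
    obtain ⟨a, rfl⟩ := Ideal.Quotient.mk_surjective a
    rw [smul_eq_mul, ← map_mul, Ideal.Quotient.eq_zero_iff_mem]
    refine Submodule.mem_colon.mp hf a (Submodule.mem_colon.mpr fun x hx ↦ ?_)
    rw [smul_eq_mul, ← Ideal.Quotient.eq_zero_iff_mem, map_mul]
    exact Submodule.mem_annihilator.mp ha _ (Ideal.mem_map_of_mem _ hx)
  obtain ⟨x, hx, hxf⟩ := (Ideal.mem_map_iff_of_surjective _ Ideal.Quotient.mk_surjective).mp hmem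
  rw [← sub_sub_cancel x f]
  exact I.sub_mem hx (hJI (Ideal.Quotient.eq.mp hxf))

/-- In a regular local ring, ideals containing a maximal regular sequence are recovered from their
double link. -/
theorem IsRegularLocalRing.colon_colon_le {A : Type*} [CommRing A] [IsRegularLocalRing A]
    {L : List A} (hL : IsRegular A L) (hdim : ringKrullDim A = L.length) {I : Ideal A}
    (hLI : Ideal.ofList L ≤ I) :
    (Ideal.ofList L).colon ((Ideal.ofList L).colon (I : Set A) : Set A) ≤ I := by
  have hne : Ideal.ofList L ≠ ⊤ := fun h ↦ hL.top_ne_smul (by simp [h])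
  have : Nontrivial (A ⧸ Ideal.ofList L) := Ideal.Quotient.nontrivial_iff.mpr hne
  have hdim0 : ringKrullDim (A ⧸ Ideal.ofList L) = 0 := by
    have h := ringKrullDim_add_length_eq_ringKrullDim_of_isRegular L hL
    rw [hdim] at h
    generalize ringKrullDim (A ⧸ Ideal.ofList L) = d at h
    induction d using WithBot.recBotCoe with
    | bot => simp at h
    | coe d =>
      have h' : d + (L.length : ℕ∞) = 0 + (L.length : ℕ∞) := by rw [zero_add]; exact_mod_cast h
      exact_mod_cast (ENat.add_left_injective_of_ne_top (ENat.natCast_ne_top _)) h'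
  have : IsArtinianRing (A ⧸ Ideal.ofList L) :=
    isArtinianRing_iff_krullDimLE_zero.mpr (ringKrullDimZero_iff_ringKrullDim_eq_zero.mpr hdim0)
  refine Ideal.colon_colon_le_of_hasCyclicSocleMod ?_ hne hLI
  have hfg : Submodule.FG (maximalIdeal A) := IsNoetherian.noetherian _
  have hcard : hfg.finite_generators.toFinset.card = L.length := by
    rw [← Set.ncard_eq_toFinset_card _ hfg.finite_generators, hfg.generators_ncard]
    exact_mod_cast IsRegularLocalRing.spanFinrank_maximalIdeal.trans hdim
  have := hasCyclicSocleMod_sup_ofList L ⊥ hfg.finite_generators.toFinset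
    (fun x hx ↦ le_maximalIdeal hne (Ideal.subset_span hx))
    (((Submodule.quotEquivOfEqBot ⊥ rfl).isWeaklyRegular_congr L).mpr hL.toIsWeaklyRegular)
    (by simpa using! Submodule.span_generators (maximalIdeal A)) hcard.le
  rwa [bot_sup_eq] at this

theorem Ideal.algebraMap_mem_colon_colon {R A : Type*} [CommRing R] [IsNoetherianRing R]
    [CommRing A] [Algebra R A] (M : Submonoid R) [IsLocalization M A] {J I : Ideal R} {f : R}
    (hf : f ∈ J.colon (J.colon (I : Set R) : Set R)) :
    algebraMap R A f ∈ (J.map (algebraMap R A)).colon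
      ((J.map (algebraMap R A)).colon (I.map (algebraMap R A) : Set A) : Set A) := by
  classical
  refine Submodule.mem_colon.mpr fun a ha ↦ ?_
  obtain ⟨⟨a, s⟩, hs⟩ := IsLocalization.surj M a
  have ha' (x : R) (hx : x ∈ I) : ∃ u ∈ M, u * (a * x) ∈ J := by
    refine (IsLocalization.algebraMap_mem_map_algebraMap_iff M A J _).mp ?_
    rw [map_mul, ← hs, mul_right_comm]
    exact Ideal.mul_mem_right _ _ (Submodule.mem_colon.mp ha _ (Ideal.mem_map_of_mem _ hx))
  obtain ⟨T, hT⟩ : I.FG := IsNoetherian.noetherian _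
  choose! u huM hu using fun x (hx : x ∈ T) ↦ ha' x (hT ▸ Ideal.subset_span hx)
  have hmem : (∏ x ∈ T, u x) * a ∈ J.colon (I : Set R) := by
    refine Submodule.mem_colon_iff_le.mpr ?_
    rw [← hT, Submodule.pointwise_smul_def, Submodule.map_span_le]
    intro x hx
    change (∏ x ∈ T, u x) * a * x ∈ J
    rw [← Finset.mul_prod_erase _ _ hx,
      show u x * (∏ y ∈ T.erase x, u y) * a * x = (∏ y ∈ T.erase x, u y) * (u x * (a * x)) by ring]
    exact J.mul_mem_left _ (hu x hx)
  have hJ := Ideal.mem_map_of_mem (algebraMap R A) (Submodule.mem_colon.mp hf _ hmem)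
  have hunit : IsUnit (algebraMap R A ((∏ x ∈ T, u x) * s)) :=
    IsLocalization.map_units A (⟨_, M.mul_mem (M.prod_mem huM) s.2⟩ : M)
  rw [← Ideal.unit_mul_mem_iff_mem _ hunit]
  convert hJ using 1
  simp only [smul_eq_mul, map_mul, ← hs]
  ring

/-- Double linkage by a complete intersection in a regular ring recovers every unmixed ideal of the
same height. -/
theorem IsRegularRing.colon_colon_eq {R : Type*} [CommRing R] [IsRegularRing R] {L : List R}
    (hL : IsWeaklyRegular R L) {I : Ideal R} (hLI : Ideal.ofList L ≤ I)
    (hI : ∀ (P : Ideal R) (hP : IsAssociatedPrime P (R ⧸ I)),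
      ringKrullDim (Localization (@Ideal.primeCompl _ _ P hP.1)) = L.length) :
    (Ideal.ofList L).colon ((Ideal.ofList L).colon (I : Set R) : Set R) = I := by
  refine le_antisymm (fun f hf ↦ ?_) fun f hf ↦ Submodule.mem_colon.mpr fun a ha ↦ ?_
  · by_contra hfI
    obtain ⟨P, hP, hle⟩ := exists_le_isAssociatedPrime_of_isNoetherianRing R
      (Submodule.Quotient.mk f : R ⧸ I) (by rwa [ne_eq, Submodule.Quotient.mk_eq_zero])
    have mem_P {u : R} (hu : u * f ∈ I) : u ∈ P := hle <| by
      rwa [Submodule.mem_colon_singleton, ← Submodule.Quotient.mk_smul, Submodule.mem_bot,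
        Submodule.Quotient.mk_eq_zero]
    have : P.IsPrime := hP.1
    have hLP : ∀ x ∈ L, x ∈ P := fun x hx ↦
      mem_P (I.mul_mem_right _ (hLI (Ideal.subset_span hx)))
    have hLloc := hL.isRegular_of_isLocalization_of_mem (Localization.AtPrime P) P hLP
    have hloc := IsRegularLocalRing.colon_colon_le hLloc (by
      rw [List.length_map]; exact hI P hP)
      (I := I.map (algebraMap R (Localization.AtPrime P)))
      (by rw [← Ideal.map_ofList]; exact Ideal.map_mono hLI)
    rw [← Ideal.map_ofList] at hloc
    obtain ⟨u, hu, huf⟩ := (IsLocalization.algebraMap_mem_map_algebraMap_iff P.primeCompl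
      (Localization.AtPrime P) I f).mp (hloc (Ideal.algebraMap_mem_colon_colon P.primeCompl hf))
    exact hu (mem_P huf)
  · rw [smul_eq_mul, mul_comm]
    exact Submodule.mem_colon.mp ha f hf

end Linkage

set_option synthInstance.maxHeartbeats 400000 in
/-- double linkage: let `I ⊂ R = k[z₀,…,z_n]` be a saturated unmixed
homogeneous ideal and `J ⊆ I` be generated by a regular sequence of homogeneous
elements with `ht J = ht I`.  Height equality and unmixedness are expressed by:
`J` is generated by a regular sequence of length `c`, and every associated prime `P`
of `R/I` has height `c` (height of a prime being the Krull dimension of the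
localization at `P`).  Then `(J : (J : I)) = I`. -/
theorem double_linkage (k : Type*) [Field k] (n : ℕ)
    (I J : Ideal (MvPolynomial (Fin (n + 1)) k)) (c : ℕ)
    (hhom : ∃ S : Set (MvPolynomial (Fin (n + 1)) k),
      (∀ s ∈ S, ∃ d, s.IsHomogeneous d) ∧ I = Ideal.span S)
    (hsat : ∀ f, (∃ N : ℕ,
        ∀ g ∈ (Ideal.span (Set.range X) : Ideal (MvPolynomial (Fin (n + 1)) k)) ^ N,
          g * f ∈ I) → f ∈ I)
    (hJI : J ≤ I)
    (hreg : ∃ L : List (MvPolynomial (Fin (n + 1)) k),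
      L.length = c ∧ (∀ x ∈ L, ∃ d, x.IsHomogeneous d ∧ 0 < d) ∧
      RingTheory.Sequence.IsRegular (MvPolynomial (Fin (n + 1)) k) L ∧
      J = Ideal.span {x | x ∈ L})
    (hunmixed : ∀ P : Ideal (MvPolynomial (Fin (n + 1)) k),
      ∀ hP : IsAssociatedPrime P
        (MvPolynomial (Fin (n + 1)) k ⧸ (I : Ideal (MvPolynomial (Fin (n + 1)) k))),
      ringKrullDim (Localization (@Ideal.primeCompl _ _ P hP.1)) = (c : WithBot ℕ∞)) :
    Submodule.colon J (Submodule.colon J I) = I := by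
  obtain ⟨L, rfl, -, hL, rfl⟩ := hreg
  exact IsRegularRing.colon_colon_eq hL.toIsWeaklyRegular hJI hunmixed
end
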